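/- Let X = L ∪ J ∪ R be a continuum in the class 𝒞 such that R is a singleton, L is nondegenerate, L ∩ R = ∅, and L is a local dendrite. Then M ⊆ X belongs to 𝓜(X) if and only if exactly one of the following conditions holds: (1) M ⊆ L and M is either a nonempty finite set or a cantoroid or a union of finitely many pairwise disjoint circles; (2) M ⊆ J ∪ R and M is either a nonempty finite set or a Cantor set. -/

import Mathlib

/-!
The complement `J ∪ R` of `L` is a half-line `γ [0, ∞)` which starts at the point of `R` and
accumulates on all of `L` (`ClassC.exists_rayParam`). Since `L` is nondegenerate, no path joins `L`
to its complement (`RayParam.not_joined`), so a continuous map `f` sends each of the path connected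
sets `L` and `Lᶜ` into one of them, and a minimal set lies in `L` or in `Lᶜ`
(`RayParam.subset_or_subset_compl`). It cannot lie in both, being nonempty, so exclusivity of the
two conditions is automatic.

*Necessity.* Call a space rim-finite if it has arbitrarily small open neighbourhoods with finite
boundary. The line and every locally connected continuum with finitely many circles are rim-finite,
and both rim-finiteness and finiteness of the number of circles pass to subspaces. For an infinite
minimal system `(M, f)` on a rim-finite compact space with finitely many circles,
`MinMap.dichotomy` shows that the degenerate components of `M` are dense or that `M` is a finite
union of disjoint circles. Indeed, if they are not dense, the Baire theorem gives a component with
nonempty interior; by minimality there are only finitely many components, which `f` permutes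
cyclically. Each is a Peano continuum with finitely many circles, and a power of `f` is minimal on
it. Such a continuum is a circle (`MinMap.isCircle`): without circles it would be a dendrite, which
has the fixed point property, and branch points are incompatible with the irreducibility of minimal
maps. In `L` this gives the three listed possibilities. Subsets of `Lᶜ` embed in the line, which
contains no circle, and a minimal set with a dense set of degenerate components in the line is
totally disconnected.

*Sufficiency.* A cantoroid carries a minimal map `g` constant on components
(`exists_minMap_of_cantoroid`). It is the intersection of a decreasing sequence of locally constant
open relations, each of which is chained (any two points are joined by a finite orbit of the
relation); the values are made small (`Chained.split`), and every orbit is forced to enter each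
member of a countable basis (`Chained.level`). A map constant on components factors through a
closed subset of the line, and a map from such a subset into a Peano continuum extends over the
line, because close points are joined by small paths; hence `g` extends to a map into `L`
(`exists_extension_of_const_components`). Finite sets are treated in the same way. On a finite
union of disjoint circles, a cyclic permutation combined with an irrational rotation is minimal. It
extends to `L`, because circles are neighbourhood retracts and the neighbourhoods may be taken with
finite boundary (`exists_extension_of_circles`), and then to `X`, because `L` is a retract of `X`
(`RayParam.exists_retraction`). For `M ⊆ Lᶜ` the parameter of `g x` on the half-line extends to `X`
by the Tietze theorem, and the extension is followed by `γ`.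
-/

open Set Topology

/-- A topological space has no isolated points if no singleton is open. -/
def NoIsolatedPoints (Y : Type*) [TopologicalSpace Y] : Prop :=
  ∀ y : Y, ¬ IsOpen ({y} : Set Y)

/-- `(M, f|_M)` is a minimal dynamical system with `f(M) = M`:
`M` is nonempty, `f(M) = M`, and `M` has no nonempty proper closed subset
invariant under `f|_M`. -/
def MinimalSystemOn {Y : Type*} [TopologicalSpace Y] (f : Y → Y) (M : Set Y) : Prop :=
  M.Nonempty ∧ f '' M = M ∧
    ∀ N, N ⊆ M → N.Nonempty → IsClosed N → f '' N ⊆ N → N = M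

/-- The system `𝓜(Y)` of all compact sets `M ⊆ Y` such that there is a continuous
`f : Y → Y` with `f(M) = M` and `(M, f|_M)` a minimal dynamical system. -/
def MSpace (Y : Type*) [TopologicalSpace Y] : Set (Set Y) :=
  {M | IsCompact M ∧ ∃ f : Y → Y, Continuous f ∧ MinimalSystemOn f M}

/-- `𝓜(Z)` for a subspace `Z ⊆ X` (carrying the subspace topology),
viewed as a system of subsets of `X`. -/
def MSetIn {X : Type*} [TopologicalSpace X] (Z : Set X) : Set (Set X) :=
  {M | ∃ M' ∈ MSpace (↥Z), M = Subtype.val '' M'}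

/-- `𝓜*(L; R)`: members of `𝓜(L ∪ R)` (`= 𝓜(L ⊔ R)` for disjoint `L, R`) such that
`M ∩ L` and `M ∩ R` have the same cardinality. -/
def MStarIn {X : Type*} [TopologicalSpace X] (L R : Set X) : Set (Set X) :=
  {M | M ∈ MSetIn (L ∪ R) ∧ Cardinal.mk ↥(M ∩ L) = Cardinal.mk ↥(M ∩ R)}

/-- An arc: a set homeomorphic to `[0,1]`. -/
def IsArc {X : Type*} [TopologicalSpace X] (A : Set X) : Prop :=
  Nonempty (↥A ≃ₜ ↥(Set.Icc (0:ℝ) 1))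

/-- A ray: a set homeomorphic to `[0,∞)`. -/
def IsRaySet {X : Type*} [TopologicalSpace X] (A : Set X) : Prop :=
  Nonempty (↥A ≃ₜ ↥(Set.Ici (0:ℝ)))

/-- A Cantor set: nonempty, compact, totally disconnected, without isolated points
(metrizability is inherited from the ambient space). -/
def IsCantorSet {X : Type*} [TopologicalSpace X] (M : Set X) : Prop :=
  M.Nonempty ∧ IsCompact M ∧ IsTotallyDisconnected M ∧ NoIsolatedPoints ↥M

/-- A circle: a set homeomorphic to the unit circle `S¹ ⊆ ℂ`. -/
def IsCircleSet {X : Type*} [TopologicalSpace X] (C : Set X) : Prop :=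
  Nonempty (↥C ≃ₜ ↥(Metric.sphere (0:ℂ) 1))

/-- A cantoroid: a nonempty compact (metrizable) set without isolated points in which
the union of the degenerate (singleton) connected components is dense. -/
def IsCantoroid {X : Type*} [TopologicalSpace X] (M : Set X) : Prop :=
  M.Nonempty ∧ IsCompact M ∧ NoIsolatedPoints ↥M ∧
    Dense {x : ↥M | connectedComponent x = {x}}

/-- A union of finitely many (at least one) pairwise disjoint circles. -/
def FinUnionDisjCircles {X : Type*} [TopologicalSpace X] (M : Set X) : Prop :=
  ∃ (n : ℕ) (C : Fin n → Set X), 0 < n ∧ (∀ i, IsCircleSet (C i)) ∧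
    Pairwise (Function.onFun Disjoint C) ∧ M = ⋃ i, C i

/-- A local dendrite: a locally connected continuum containing only finitely many circles. -/
def IsLocalDendrite {X : Type*} [TopologicalSpace X] (L : Set X) : Prop :=
  IsCompact L ∧ IsConnected L ∧ LocallyConnectedSpace ↥L ∧
    {C : Set X | C ⊆ L ∧ IsCircleSet C}.Finite

/-- The decomposition `X = L ∪ J ∪ R` witnessing that the continuum `X` belongs to the
class `𝒞`: `J` is a free interval dense in `X`; `L` and `R` are locally connected
subcontinua of `X` disjoint from `J`; and there are rays `J_L, J_R` with
`J = J_L ∪ J_R` such that `L ∪ J_L` is a compactification of `J_L` and `R ∪ J_R` is a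
compactification of `J_R`. -/
structure ClassC {X : Type*} [TopologicalSpace X] (L J R : Set X) : Prop where
  union_eq : L ∪ J ∪ R = Set.univ
  openJ : IsOpen J
  freeJ : Nonempty (↥J ≃ₜ ↥(Set.Ioo (0:ℝ) 1))
  denseJ : Dense J
  compactL : IsCompact L
  connL : IsConnected L
  locConnL : LocallyConnectedSpace ↥L
  compactR : IsCompact R
  connR : IsConnected R
  locConnR : LocallyConnectedSpace ↥R
  disjLJ : Disjoint L J
  disjRJ : Disjoint R J
  rays : ∃ JL JR : Set X, JL ∪ JR = J ∧ IsRaySet JL ∧ IsRaySet JR ∧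
    IsCompact (L ∪ JL) ∧ L ∪ JL ⊆ closure JL ∧
    IsCompact (R ∪ JR) ∧ R ∪ JR ⊆ closure JR

set_option linter.unusedSectionVars false

/-! ### Arcs in path connected sets -/

/-- Among the closed sets `F ⊆ [0, 1]` that contain both endpoints and are such that `γ` identifies
the two ends of every gap of `F`, there is a minimal one, by Zorn's lemma. Minimality gives the
last property: if `γ` identifies two points of `F`, then the part of `F` between them could be
removed, so it is empty. -/
theorem exists_irreducible_closed {Y : Type*} [TopologicalSpace Y] [T2Space Y] {γ : ℝ → Y}
    (hγ : Continuous γ) :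
    ∃ F : Set ℝ, IsClosed F ∧ F ⊆ Icc 0 1 ∧ (0:ℝ) ∈ F ∧ (1:ℝ) ∈ F ∧
      (∀ a ∈ F, ∀ b ∈ F, a < b → Ioo a b ∩ F = ∅ → γ a = γ b) ∧
      (∀ a ∈ F, ∀ b ∈ F, a < b → γ a = γ b → Ioo a b ∩ F = ∅) := by
  let S : Set (Set ℝ) := {F | IsClosed F ∧ F ⊆ Icc 0 1 ∧ (0:ℝ) ∈ F ∧ (1:ℝ) ∈ F ∧
      ∀ a ∈ F, ∀ b ∈ F, a < b → Ioo a b ∩ F = ∅ → γ a = γ b}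
  have hS : ∃ m, Minimal (· ∈ S) m := by
    apply zorn_superset
    intro c hc hchain
    rcases c.eq_empty_or_nonempty with rfl | hne
    · refine ⟨Icc 0 1, ⟨isClosed_Icc, subset_rfl, by simp, by simp, ?_⟩, by simp⟩
      intro a ha b hb hab hgap
      exfalso
      have : (a + b) / 2 ∈ Ioo a b ∩ Icc 0 1 := by
        simp only [mem_inter_iff, mem_Ioo, mem_Icc] at *
        refine ⟨⟨?_, ?_⟩, ?_, ?_⟩ <;> linarith
      rw [hgap] at this
      exact this
    · obtain ⟨F0, hF0⟩ := hne
      refine ⟨⋂₀ c, ⟨isClosed_sInter fun F hF => (hc hF).1, (sInter_subset_of_mem hF0).trans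
        (hc hF0).2.1, fun F hF => (hc hF).2.2.1, fun F hF => (hc hF).2.2.2.1, ?_⟩,
        fun s hs => sInter_subset_of_mem hs⟩
      intro a ha b hb hab hgap
      by_contra hne
      -- separate `γ` near `a` from `γ` near `b`
      obtain ⟨U, V, hU, hV, haU, hbV, hUV⟩ := t2_separation hne
      have h1 : ∀ᶠ u in 𝓝 a, γ u ∈ U := hγ.continuousAt.eventually (hU.mem_nhds haU)
      have h2 : ∀ᶠ u in 𝓝 b, γ u ∈ V := hγ.continuousAt.eventually (hV.mem_nhds hbV)
      obtain ⟨d1, hd1, h1⟩ := Metric.eventually_nhds_iff.1 h1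
      obtain ⟨d2, hd2, h2⟩ := Metric.eventually_nhds_iff.1 h2
      set d := min (min d1 d2) (b - a) / 3 with hd
      have hdpos : 0 < d := by
        have : 0 < min (min d1 d2) (b - a) := lt_min (lt_min hd1 hd2) (by linarith)
        positivity
      have e1 : 3 * d ≤ d1 := by
        have : min (min d1 d2) (b - a) ≤ d1 := (min_le_left _ _).trans (min_le_left _ _)
        linarith
      have e2 : 3 * d ≤ d2 := by
        have : min (min d1 d2) (b - a) ≤ d2 := (min_le_left _ _).trans (min_le_right _ _)
        linarith
      have e3 : 3 * d ≤ b - a := by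
        have : min (min d1 d2) (b - a) ≤ b - a := min_le_right _ _
        linarith
      -- by compactness some member `F` of the chain misses `[a + d, b - d]`; the gap of `F` across
      -- this interval has ends close to `a` and `b`
      obtain ⟨F, hF, hFe⟩ : ∃ F ∈ c, Icc (a + d) (b - d) ∩ F = ∅ := by
        by_contra hcon
        push Not at hcon
        have hdir : DirectedOn (· ⊇ ·) c := by
          intro x hx y hy
          rcases hchain.total hx hy with h | h
          · exact ⟨x, hx, subset_rfl, h⟩
          · exact ⟨y, hy, h, subset_rfl⟩
        have : Nonempty c := ⟨⟨F0, hF0⟩⟩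
        have := IsCompact.nonempty_iInter_of_directed_nonempty_isCompact_isClosed
          (fun F : c => Icc (a + d) (b - d) ∩ F.1)
          (by
            intro x y
            obtain ⟨z, hz, h1, h2⟩ := hdir x.1 x.2 y.1 y.2
            exact ⟨⟨z, hz⟩, inter_subset_inter_right _ h1, inter_subset_inter_right _ h2⟩)
          (fun F => hcon F.1 F.2)
          (fun F => isCompact_Icc.inter_right (hc F.2).1)
          (fun F => isClosed_Icc.inter (hc F.2).1)
        obtain ⟨x, hx⟩ := this
        simp only [mem_iInter] at hx
        have hx1 : x ∈ Icc (a + d) (b - d) := (hx ⟨F0, hF0⟩).1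
        have hx2 : x ∈ Ioo a b ∩ ⋂₀ c :=
          ⟨⟨by linarith [hx1.1], by linarith [hx1.2]⟩, fun F hF => (hx ⟨F, hF⟩).2⟩
        rw [hgap] at hx2
        exact hx2
      have haF := ha F hF
      have hbF := hb F hF
      have hFc := (hc hF).1
      set A := F ∩ Icc a (a + d) with hA
      set B := F ∩ Icc (b - d) b with hB
      have hAc : IsCompact A := isCompact_Icc.inter_left hFc
      have hBc : IsCompact B := isCompact_Icc.inter_left hFc
      have hp : sSup A ∈ A := hAc.sSup_mem ⟨a, haF, by simp [hdpos.le]⟩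
      have hq : sInf B ∈ B := hBc.sInf_mem ⟨b, hbF, by simp [hdpos.le]⟩
      have hpq : γ (sSup A) = γ (sInf B) := by
        refine (hc hF).2.2.2.2 _ hp.1 _ hq.1 (by linarith [hp.2.2, hq.2.1]) ?_
        rw [eq_empty_iff_forall_notMem]
        rintro x ⟨⟨hx1, hx2⟩, hxF⟩
        by_cases h3 : x ≤ a + d
        · exact absurd (le_csSup hAc.bddAbove (show x ∈ A from ⟨hxF, by linarith [hp.2.1], h3⟩))
            (not_le.2 hx1)
        · by_cases h4 : b - d ≤ x
          · exact absurd (csInf_le hBc.bddBelow (show x ∈ B from ⟨hxF, h4, by linarith [hq.2.2]⟩))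
              (not_le.2 hx2)
          · have : x ∈ Icc (a + d) (b - d) ∩ F := ⟨⟨by linarith, by linarith⟩, hxF⟩
            rw [hFe] at this
            exact this
      have h5 : γ (sSup A) ∈ U := h1 (by
        rw [Real.dist_eq, abs_lt]; constructor <;> linarith [hp.2.1, hp.2.2])
      have h6 : γ (sInf B) ∈ V := h2 (by
        rw [Real.dist_eq, abs_lt]; constructor <;> linarith [hq.2.1, hq.2.2])
      rw [hpq] at h5
      exact disjoint_left.1 hUV h5 h6
  obtain ⟨F, hF, hmin⟩ := hS
  refine ⟨F, hF.1, hF.2.1, hF.2.2.1, hF.2.2.2.1, hF.2.2.2.2, ?_⟩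
  intro s hs t ht hst hγst
  -- removing `(s, t)` from `F` creates only the gap `(s, t)`, whose ends `γ` identifies
  have h1 : F \ Ioo s t ∈ S := by
    refine ⟨hF.1.sdiff isOpen_Ioo, sdiff_subset.trans hF.2.1,
      ⟨hF.2.2.1, fun h => absurd (hF.2.1 hs).1 (not_le.2 h.1)⟩,
      ⟨hF.2.2.2.1, fun h => absurd (hF.2.1 ht).2 (not_le.2 h.2)⟩, ?_⟩
    intro a ha b hb hab hgap
    by_cases hg : Ioo a b ∩ F = ∅
    · exact hF.2.2.2.2 a ha.1 b hb.1 hab hg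
    · obtain ⟨c, ⟨hc1, hc2⟩, hcF⟩ := nonempty_iff_ne_empty.2 hg
      have hc3 : c ∈ Ioo s t := by
        by_contra h
        have : c ∈ Ioo a b ∩ (F \ Ioo s t) := ⟨⟨hc1, hc2⟩, hcF, h⟩
        rw [hgap] at this
        exact this
      have has : a ≤ s := by
        by_contra h
        exact ha.2 ⟨not_le.1 h, hc1.trans hc3.2⟩
      have hbt : t ≤ b := by
        by_contra h
        exact hb.2 ⟨hc3.1.trans hc2, not_le.1 h⟩
      have has' : s ≤ a := by
        by_contra h
        have : s ∈ Ioo a b ∩ (F \ Ioo s t) := ⟨⟨not_le.1 h, hc3.1.trans hc2⟩, hs, by simp⟩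
        rw [hgap] at this
        exact this
      have hbt' : b ≤ t := by
        by_contra h
        have : t ∈ Ioo a b ∩ (F \ Ioo s t) := ⟨⟨hc1.trans hc3.2, not_le.1 h⟩, ht, by simp⟩
        rw [hgap] at this
        exact this
      rw [le_antisymm has has', le_antisymm hbt' hbt]
      exact hγst
  have h2 := hmin h1 sdiff_subset
  rw [eq_empty_iff_forall_notMem]
  rintro x ⟨hx1, hx2⟩
  exact (h2 hx2).2 hx1

/-- A path can be replaced, inside its own image, by one with monotone (interval) fibres. -/
theorem exists_monotone_fibres {Y : Type*} [MetricSpace Y] {γ : ℝ → Y} (hγ : Continuous γ) :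
    ∃ η : ℝ → Y, ContinuousOn η (Icc 0 1) ∧ η 0 = γ 0 ∧ η 1 = γ 1 ∧
      η '' Icc 0 1 ⊆ γ '' Icc 0 1 ∧
      ∀ s ∈ Icc (0:ℝ) 1, ∀ u ∈ Icc (0:ℝ) 1, ∀ t ∈ Icc (0:ℝ) 1, s ≤ u → u ≤ t →
        η s = η t → η u = η s := by
  obtain ⟨F, hFc, hF1, h0, h1, hgap, hirr⟩ := exists_irreducible_closed hγ
  have hbA : ∀ t, BddAbove (F ∩ Iic t) := fun t => ⟨t, fun x hx => hx.2⟩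
  have hbB : ∀ t, BddBelow (F ∩ Ici t) := fun t => ⟨t, fun x hx => hx.2⟩
  -- the new path is `γ ∘ p`, where `p t` and `q t` are the points of `F` next to `t`
  set p : ℝ → ℝ := fun t => sSup (F ∩ Iic t) with hpdef
  set q : ℝ → ℝ := fun t => sInf (F ∩ Ici t) with hqdef
  have hp : ∀ t ∈ Icc (0:ℝ) 1, p t ∈ F ∧ p t ≤ t := fun t ht =>
    (hFc.inter isClosed_Iic).csSup_mem ⟨0, h0, ht.1⟩ (hbA t)
  have hq : ∀ t ∈ Icc (0:ℝ) 1, q t ∈ F ∧ t ≤ q t := fun t ht =>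
    (hFc.inter isClosed_Ici).csInf_mem ⟨1, h1, ht.2⟩ (hbB t)
  have hple : ∀ t, ∀ x ∈ F, x ≤ t → x ≤ p t := fun t x hx hxt => le_csSup (hbA t) ⟨hx, hxt⟩
  have hqle : ∀ t, ∀ x ∈ F, t ≤ x → q t ≤ x := fun t x hx hxt => csInf_le (hbB t) ⟨hx, hxt⟩
  have hpq : ∀ t ∈ Icc (0:ℝ) 1, γ (p t) = γ (q t) := by
    intro t ht
    rcases ((hp t ht).2.trans (hq t ht).2).eq_or_lt with h | h
    · rw [h]
    · refine hgap _ (hp t ht).1 _ (hq t ht).1 h ?_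
      rw [eq_empty_iff_forall_notMem]
      rintro x ⟨⟨hx1, hx2⟩, hxF⟩
      rcases le_total x t with hxt | hxt
      · exact absurd (hple t x hxF hxt) (not_le.2 hx1)
      · exact absurd (hqle t x hxF hxt) (not_le.2 hx2)
  have hmono : ∀ s ∈ Icc (0:ℝ) 1, ∀ t, s ≤ t → p s ≤ p t := fun s hs t hst =>
    hple t _ (hp s hs).1 ((hp s hs).2.trans hst)
  have hpF : ∀ x ∈ F, p x = x := fun x hx =>
    le_antisymm (hp x (hF1 hx)).2 (hple x x hx le_rfl)
  refine ⟨fun t => γ (p t), ?_, by simp only [hpF 0 h0], by simp only [hpF 1 h1], ?_, ?_⟩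
  · rw [Metric.continuousOn_iff]
    intro t ht ε hε
    obtain ⟨d1, hd1, k1⟩ := Metric.continuous_iff.1 hγ (p t) ε hε
    obtain ⟨d2, hd2, k2⟩ := Metric.continuous_iff.1 hγ (q t) ε hε
    refine ⟨min d1 d2, lt_min hd1 hd2, fun u hu hut => ?_⟩
    rw [Real.dist_eq] at hut
    have hut1 := abs_lt.1 (hut.trans_le (min_le_left _ _))
    have hut2 := abs_lt.1 (hut.trans_le (min_le_right _ _))
    rcases le_total t u with h | h
    · rcases lt_or_ge u (q t) with h3 | h3
      · have : p u = p t := by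
          apply le_antisymm _ (hmono t ht u h)
          apply hple t _ (hp u hu).1
          by_contra h4
          exact absurd (hqle t _ (hp u hu).1 (not_le.1 h4).le)
            (not_le.2 ((hp u hu).2.trans_lt h3))
        simpa [this] using hε
      · have h4 : q t ≤ p u := hple u _ (hq t ht).1 h3
        show dist (γ (p u)) (γ (p t)) < ε
        rw [hpq t ht]
        apply k2
        rw [Real.dist_eq, abs_lt]
        constructor <;> linarith [(hp u hu).2, (hq t ht).2]
    · rcases le_or_gt (p t) u with h3 | h3
      · have : p u = p t := le_antisymm (hmono u hu t h) (hple u _ (hp t ht).1 h3)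
        simpa [this] using hε
      · show dist (γ (p u)) (γ (p t)) < ε
        rw [hpq u hu]
        apply k1
        have h4 : q u ≤ p t := hqle u _ (hp t ht).1 h3.le
        rw [Real.dist_eq, abs_lt]
        constructor <;> linarith [(hp t ht).2, (hq u hu).2]
  · rintro _ ⟨t, ht, rfl⟩
    exact ⟨p t, hF1 (hp t ht).1, rfl⟩
  · intro s hs u hu t ht hsu hut hst
    have a1 := hmono s hs u hsu
    have a2 := hmono u hu t hut
    dsimp only at hst ⊢
    rcases a1.eq_or_lt with h | h
    · rw [h]
    rcases a2.eq_or_lt with h' | h'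
    · rw [h', hst]
    have := hirr _ (hp s hs).1 _ (hp t ht).1 (h.trans h') hst
    exact absurd (show p u ∈ Ioo (p s) (p t) ∩ F from ⟨⟨h, h'⟩, (hp u hu).1⟩) (by simp [this])

/-- A nonconstant path with interval fibres factors through a monotone change of parameter,
hence its image carries an injective path with the same endpoints. -/
theorem exists_injective_of_monotone_fibres {Y : Type*} [MetricSpace Y] {η : ℝ → Y}
    (hη : ContinuousOn η (Icc 0 1)) (hne : η 0 ≠ η 1)
    (hmono : ∀ s ∈ Icc (0:ℝ) 1, ∀ u ∈ Icc (0:ℝ) 1, ∀ t ∈ Icc (0:ℝ) 1, s ≤ u → u ≤ t →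
        η s = η t → η u = η s) :
    ∃ α : ℝ → Y, ContinuousOn α (Icc 0 1) ∧ InjOn α (Icc 0 1) ∧ α 0 = η 0 ∧ α 1 = η 1 ∧
      α '' Icc 0 1 ⊆ η '' Icc 0 1 := by
  -- `D y t` is the distance from `y` to the part `η [0, t]` of the path
  let D : Y → ℝ → ℝ := fun y t => Metric.infDist y (η '' Icc 0 t)
  have hsub : ∀ {s t : ℝ}, s ≤ t → η '' Icc 0 s ⊆ η '' Icc 0 t := fun h =>
    image_mono (Icc_subset_Icc_right h)
  have hDanti : ∀ y, ∀ s ∈ Icc (0:ℝ) 1, ∀ t ∈ Icc (0:ℝ) 1, s ≤ t → D y t ≤ D y s :=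
    fun y s hs t _ hst => Metric.infDist_le_infDist_of_subset (hsub hst)
      ⟨η 0, 0, ⟨le_rfl, hs.1⟩, rfl⟩
  have hDc : ∀ y, ContinuousOn (D y) (Icc 0 1) := by
    intro y
    have huc := isCompact_Icc.uniformContinuousOn_of_continuous hη
    rw [Metric.uniformContinuousOn_iff] at huc
    rw [Metric.continuousOn_iff]
    intro t ht ε hε
    obtain ⟨δ, hδ, hd⟩ := huc ε hε
    -- shortening the path by less than `δ` changes the distance by less than `ε`
    have key : ∀ s ∈ Icc (0:ℝ) 1, ∀ t ∈ Icc (0:ℝ) 1, s ≤ t → t < s + δ → D y s < D y t + ε := by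
      intro s hs t ht hst hts
      have hK : IsCompact (η '' Icc 0 t) :=
        isCompact_Icc.image_of_continuousOn (hη.mono (Icc_subset_Icc_right ht.2))
      obtain ⟨_, ⟨u, hu, rfl⟩, hu2⟩ := hK.exists_infDist_eq_dist ⟨η 0, 0, ⟨le_rfl, ht.1⟩, rfl⟩ y
      have hu01 : u ∈ Icc (0:ℝ) 1 := ⟨hu.1, hu.2.trans ht.2⟩
      rcases le_total u s with h | h
      · have : D y s ≤ dist y (η u) := Metric.infDist_le_dist_of_mem ⟨u, ⟨hu.1, h⟩, rfl⟩
        show D y s < Metric.infDist y (η '' Icc 0 t) + ε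
        linarith
      · have h1 : D y s ≤ dist y (η s) := Metric.infDist_le_dist_of_mem ⟨s, ⟨hs.1, le_rfl⟩, rfl⟩
        have h2 : dist (η u) (η s) < ε := hd u hu01 s hs (by
          rw [Real.dist_eq, abs_lt]; constructor <;> linarith [hu.2])
        have h3 := dist_triangle y (η u) (η s)
        show D y s < Metric.infDist y (η '' Icc 0 t) + ε
        linarith
    refine ⟨δ, hδ, fun s hs hst => ?_⟩
    rw [Real.dist_eq, abs_lt] at hst
    rw [Real.dist_eq, abs_lt]
    rcases le_total s t with h | h
    · have := key s hs t ht h (by linarith)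
      have := hDanti y s hs t ht h
      constructor <;> linarith
    · have := key t ht s hs h (by linarith)
      have := hDanti y t ht s hs h
      constructor <;> linarith
  obtain ⟨e, he⟩ : ∃ e : ℕ → Icc (0:ℝ) 1, DenseRange e := TopologicalSpace.exists_dense_seq _
  -- an antitone function of the parameter, constant exactly on the fibres of `η`
  let H : ℝ → ℝ := fun t => ∑' n : ℕ, (1 / 2) ^ n * min 1 (D (η (e n)) t)
  have hDnn : ∀ y t, 0 ≤ D y t := fun y t => Metric.infDist_nonneg
  have hbd : ∀ n t, ‖(1 / 2 : ℝ) ^ n * min 1 (D (η (e n)) t)‖ ≤ (1 / 2) ^ n := by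
    intro n t
    rw [Real.norm_of_nonneg (mul_nonneg (by positivity) (le_min zero_le_one (hDnn _ _)))]
    exact mul_le_of_le_one_right (by positivity) (min_le_left _ _)
  have hsum : ∀ t, Summable fun n : ℕ => (1 / 2 : ℝ) ^ n * min 1 (D (η (e n)) t) := fun t =>
    Summable.of_norm_bounded summable_geometric_two (fun n => hbd n t)
  have hHc : ContinuousOn H (Icc 0 1) :=
    continuousOn_tsum (fun n => (continuousOn_const.mul (ContinuousOn.inf continuousOn_const (hDc _))))
      summable_geometric_two (fun n t _ => hbd n t)
  have hterm : ∀ s ∈ Icc (0:ℝ) 1, ∀ t ∈ Icc (0:ℝ) 1, s ≤ t → ∀ n : ℕ,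
      (1 / 2 : ℝ) ^ n * min 1 (D (η (e n)) t) ≤ (1 / 2 : ℝ) ^ n * min 1 (D (η (e n)) s) :=
    fun s hs t ht hst n => mul_le_mul_of_nonneg_left
      (min_le_min_left _ (hDanti _ s hs t ht hst)) (by positivity)
  have hHanti : ∀ s ∈ Icc (0:ℝ) 1, ∀ t ∈ Icc (0:ℝ) 1, s ≤ t → H t ≤ H s :=
    fun s hs t ht hst => (hsum t).tsum_le_tsum (hterm s hs t ht hst) (hsum s)
  have hHlt : ∀ s ∈ Icc (0:ℝ) 1, ∀ t ∈ Icc (0:ℝ) 1, s ≤ t → η s ≠ η t → H t < H s := by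
    intro s hs t ht hst hst'
    have hcl : IsClosed (η '' Icc 0 s) :=
      (isCompact_Icc.image_of_continuousOn (hη.mono (Icc_subset_Icc_right hs.2))).isClosed
    have hnot : η t ∉ η '' Icc 0 s := by
      rintro ⟨u, hu, hut⟩
      apply hst'
      have := hmono u ⟨hu.1, hu.2.trans hs.2⟩ s hs t ht hu.2 hst hut
      rw [this, hut]
    have hne0 : (η '' Icc 0 s).Nonempty := ⟨η 0, 0, ⟨le_rfl, hs.1⟩, rfl⟩
    have hpos : 0 < D (η t) s := (hcl.notMem_iff_infDist_pos hne0).1 hnot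
    obtain ⟨δ, hδ, hd⟩ := (Metric.continuousOn_iff.1 hη) t ht (min 1 (D (η t) s) / 2)
      (by positivity)
    obtain ⟨n, hn⟩ := he.exists_dist_lt ⟨t, ht⟩ hδ
    have hn1 := hd (e n) (e n).2 (by rw [dist_comm]; exact hn)
    apply (hsum t).tsum_lt_tsum (i := n) (hterm s hs t ht hst) _ (hsum s)
    apply mul_lt_mul_of_pos_left _ (by positivity)
    have h1 : D (η (e n)) t ≤ dist (η (e n)) (η t) :=
      Metric.infDist_le_dist_of_mem ⟨t, ⟨ht.1, le_rfl⟩, rfl⟩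
    have h2 : D (η t) s ≤ D (η (e n)) s + dist (η t) (η (e n)) :=
      Metric.infDist_le_infDist_add_dist
    rw [dist_comm] at h2
    have h3 : min 1 (D (η t) s) ≤ 1 := min_le_left _ _
    have h4 : min 1 (D (η t) s) ≤ D (η t) s := min_le_right _ _
    apply (min_le_right _ _).trans_lt
    apply lt_min <;> linarith
  have hHeq : ∀ s ∈ Icc (0:ℝ) 1, ∀ t ∈ Icc (0:ℝ) 1, s ≤ t → η s = η t → H s = H t := by
    intro s hs t ht hst h
    have : η '' Icc 0 t = η '' Icc 0 s := by
      apply subset_antisymm _ (hsub hst)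
      rintro _ ⟨u, hu, rfl⟩
      rcases le_total u s with h1 | h1
      · exact ⟨u, ⟨hu.1, h1⟩, rfl⟩
      · exact ⟨s, ⟨hs.1, le_rfl⟩, (hmono s hs u ⟨hu.1, hu.2.trans ht.2⟩ t ht h1 hu.2 h).symm⟩
    simp only [H, D, this]
  have hH : ∀ s ∈ Icc (0:ℝ) 1, ∀ t ∈ Icc (0:ℝ) 1, (H s = H t ↔ η s = η t) := by
    intro s hs t ht
    rcases le_total s t with h | h
    · exact ⟨fun h1 => by_contra fun h2 => (hHlt s hs t ht h h2).ne' h1, hHeq s hs t ht h⟩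
    · exact ⟨fun h1 => by_contra fun h2 => (hHlt t ht s hs h (Ne.symm h2)).ne h1,
        fun h1 => (hHeq t ht s hs h h1.symm).symm⟩
  have z0 : (0:ℝ) ∈ Icc (0:ℝ) 1 := by simp
  have z1 : (1:ℝ) ∈ Icc (0:ℝ) 1 := by simp
  have hH01 : H 1 < H 0 := hHlt 0 z0 1 z1 zero_le_one hne
  let h : ℝ → ℝ := fun t => (H 0 - H t) / (H 0 - H 1)
  have hpos : 0 < H 0 - H 1 := by linarith
  have hc : ContinuousOn h (Icc 0 1) := (continuousOn_const.sub hHc).div_const _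
  have hmaps : MapsTo h (Icc 0 1) (Icc 0 1) := by
    intro t ht
    have := hHanti 0 z0 t ht ht.1
    have := hHanti t ht 1 z1 ht.2
    refine ⟨div_nonneg (by linarith) hpos.le, (div_le_one hpos).2 (by linarith)⟩
  have h0 : h 0 = 0 := by simp [h]
  have h1 : h 1 = 1 := div_self hpos.ne'
  have hh : ∀ s ∈ Icc (0:ℝ) 1, ∀ t ∈ Icc (0:ℝ) 1, (h s = h t ↔ η s = η t) := by
    intro s hs t ht
    rw [← hH s hs t ht]
    simp only [h, div_left_inj' hpos.ne']
    constructor <;> intro <;> linarith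
  have hsurj : ∀ s ∈ Icc (0:ℝ) 1, ∃ t ∈ Icc (0:ℝ) 1, h t = s := by
    intro s hs
    have := intermediate_value_Icc zero_le_one hc
    rw [h0, h1] at this
    exact this hs
  choose! g hg hhg using hsurj
  refine ⟨fun s => η (g s), ?_, ?_, ?_, ?_, ?_⟩
  · rw [continuousOn_iff_isClosed]
    intro T hT
    obtain ⟨T', hT', hTe⟩ := (continuousOn_iff_isClosed.1 hη) T hT
    have hcomp : IsCompact (η ⁻¹' T ∩ Icc 0 1) := by
      rw [hTe]
      exact isCompact_Icc.inter_left hT'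
    refine ⟨h '' (η ⁻¹' T ∩ Icc 0 1),
      (hcomp.image_of_continuousOn (hc.mono inter_subset_right)).isClosed, ?_⟩
    ext s
    constructor
    · rintro ⟨hs1, hs2⟩
      exact ⟨⟨g s, ⟨hs1, hg s hs2⟩, hhg s hs2⟩, hs2⟩
    · rintro ⟨⟨t, ⟨ht1, ht2⟩, rfl⟩, hs2⟩
      refine ⟨?_, hs2⟩
      have := (hh _ (hg _ hs2) t ht2).1 (hhg _ hs2)
      simpa [this] using ht1
  · intro s hs t ht hst
    rw [← hhg s hs, ← hhg t ht]
    exact (hh _ (hg s hs) _ (hg t ht)).2 hst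
  · exact (hh _ (hg 0 z0) 0 z0).1 (by rw [hhg 0 z0, h0])
  · exact (hh _ (hg 1 z1) 1 z1).1 (by rw [hhg 1 z1, h1])
  · rintro _ ⟨s, hs, rfl⟩
    exact ⟨g s, hg s hs, rfl⟩

/-- `α` restricted to `[0, 1]` parametrises an arc from `x` to `y` inside `S`. -/
structure ArcFrom {Y : Type*} [TopologicalSpace Y] (S : Set Y) (x y : Y) (α : ℝ → Y) : Prop where
  cont : ContinuousOn α (Icc 0 1)
  inj : InjOn α (Icc 0 1)
  zero : α 0 = x
  one : α 1 = y
  sub : ∀ t ∈ Icc (0:ℝ) 1, α t ∈ S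

/-- Path connected points are arc connected. -/
theorem JoinedIn.exists_arc {Y : Type*} [MetricSpace Y] {S : Set Y} {x y : Y}
    (h : JoinedIn S x y) (hxy : x ≠ y) : ∃ α, ArcFrom S x y α := by
  obtain ⟨γ, hγ⟩ := h
  have hext : ∀ t, γ.extend t ∈ S := by
    intro t
    rw [Path.extend]
    exact hγ _
  obtain ⟨η, h1, h2, h3, h4, h5⟩ := exists_monotone_fibres γ.continuous_extend
  rw [γ.extend_zero] at h2
  rw [γ.extend_one] at h3
  obtain ⟨α, k1, k2, k3, k4, k5⟩ := exists_injective_of_monotone_fibres h1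
    (by rw [h2, h3]; exact hxy) h5
  refine ⟨α, k1, k2, k3.trans h2, k4.trans h3, fun t ht => ?_⟩
  obtain ⟨u, -, hu⟩ := (k5.trans h4) (mem_image_of_mem _ ht)
  rw [← hu]
  exact hext u

/-! ### Arcs and circles -/

/-- `W` contains no circle. -/
def NoCircle {Y : Type*} [TopologicalSpace Y] (W : Set Y) : Prop :=
  ∀ C ⊆ W, ¬ IsCircleSet C

theorem NoCircle.mono {Y : Type*} [TopologicalSpace Y] {V W : Set Y} (h : NoCircle W)
    (hVW : V ⊆ W) : NoCircle V := fun C hC => h C (hC.trans hVW)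

theorem joinedIn_of_continuousOn {Y : Type*} [TopologicalSpace Y] {α : ℝ → Y} {S : Set Y}
    {a b p q : ℝ} (hα : ContinuousOn α (Icc a b)) (hp : p ∈ Icc a b) (hq : q ∈ Icc a b)
    (hS : ∀ t ∈ Icc a b, α t ∈ S) : JoinedIn S (α p) (α q) := by
  have h := ((convex_Icc a b).isPathConnected ⟨p, hp⟩).image' hα
  refine (h.joinedIn _ (mem_image_of_mem _ hp) _ (mem_image_of_mem _ hq)).mono ?_
  rintro _ ⟨t, ht, rfl⟩
  exact hS t ht

namespace ArcFrom
variable {Y : Type*} [TopologicalSpace Y] {S T : Set Y} {x y z : Y} {α β : ℝ → Y}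

theorem mono (h : ArcFrom S x y α) (hST : S ⊆ T) : ArcFrom T x y α :=
  ⟨h.cont, h.inj, h.zero, h.one, fun t ht => hST (h.sub t ht)⟩

theorem symm (h : ArcFrom S x y α) : ArcFrom S y x (fun t => α (1 - t)) := by
  have hm : MapsTo (fun t : ℝ => 1 - t) (Icc 0 1) (Icc 0 1) := by
    intro t ht
    exact ⟨by linarith [ht.2], by linarith [ht.1]⟩
  refine ⟨h.cont.comp (by fun_prop) hm, fun s hs t ht hst => ?_, by simp [h.one],
    by simp [h.zero], fun t ht => h.sub _ (hm ht)⟩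
  have := h.inj (hm hs) (hm ht) hst
  linarith

theorem subarc (h : ArcFrom S x y α) {s t : ℝ} (hs : 0 ≤ s) (hst : s < t) (ht : t ≤ 1)
    (hT : ∀ u ∈ Icc s t, α u ∈ T) :
    ArcFrom T (α s) (α t) (fun u => α (s + u * (t - s))) := by
  have hm : MapsTo (fun u : ℝ => s + u * (t - s)) (Icc 0 1) (Icc s t) := by
    intro u hu
    constructor
    · nlinarith [hu.1]
    · nlinarith [hu.2]
  have hsub : Icc s t ⊆ Icc 0 1 := Icc_subset_Icc hs ht
  refine ⟨(h.cont.mono hsub).comp (by fun_prop) hm, fun u hu v hv huv => ?_, by simp, by simp,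
    fun u hu => hT _ (hm hu)⟩
  have h1 := h.inj (hsub (hm hu)) (hsub (hm hv)) huv
  have h2 : (u - v) * (t - s) = 0 := by linarith
  rcases mul_eq_zero.1 h2 with h3 | h3 <;> linarith

theorem concat (h : ArcFrom S x z α) (h' : ArcFrom S z y β)
    (hd : ∀ s ∈ Icc (0:ℝ) 1, ∀ t ∈ Icc (0:ℝ) 1, α s = β t → α s = z) :
    ArcFrom S x y (fun t => if t ≤ 1 / 2 then α (2 * t) else β (2 * t - 1)) := by
  have m1 : ∀ t ∈ Icc (0:ℝ) 1, t ≤ 1 / 2 → 2 * t ∈ Icc (0:ℝ) 1 := fun t ht h =>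
    ⟨by linarith [ht.1], by linarith⟩
  have m2 : ∀ t ∈ Icc (0:ℝ) 1, 1 / 2 ≤ t → 2 * t - 1 ∈ Icc (0:ℝ) 1 := fun t ht h =>
    ⟨by linarith, by linarith [ht.2]⟩
  have z0 : (0:ℝ) ∈ Icc (0:ℝ) 1 := by simp
  have z1 : (1:ℝ) ∈ Icc (0:ℝ) 1 := by simp
  refine ⟨?_, ?_, ?_, ?_, ?_⟩
  · apply ContinuousOn.if
    · rintro t ⟨ht1, ht2⟩
      have : t = 1 / 2 := by
        have := frontier_Iic (α := ℝ) (a := 1 / 2)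
        have h3 : t ∈ frontier (Iic (1 / 2 : ℝ)) := ht2
        rw [this] at h3
        exact h3
      subst this
      norm_num [h.one, h'.zero]
    · apply h.cont.comp (by fun_prop)
      rintro t ⟨ht1, ht2⟩
      exact m1 t ht1 (closure_minimal (s := {a : ℝ | a ≤ 1 / 2}) subset_rfl isClosed_Iic ht2)
    · apply h'.cont.comp (by fun_prop)
      rintro t ⟨ht1, ht2⟩
      refine m2 t ht1 (closure_minimal (s := {a : ℝ | ¬ a ≤ 1 / 2}) (t := Ici (1 / 2)) ?_
        isClosed_Ici ht2)
      intro a ha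
      exact (not_le.1 ha).le
  · have key : ∀ s ∈ Icc (0:ℝ) 1, ∀ t ∈ Icc (0:ℝ) 1, s ≤ 1 / 2 → ¬ t ≤ 1 / 2 →
        α (2 * s) = β (2 * t - 1) → False := by
      intro s hs t ht hs2 ht2 hst
      have h1 := hd _ (m1 s hs hs2) _ (m2 t ht (not_le.1 ht2).le) hst
      have h2 := h'.inj (m2 t ht (not_le.1 ht2).le) z0 (by rw [← hst, h1, h'.zero])
      linarith
    intro s hs t ht hst
    dsimp only at hst
    split_ifs at hst with h1 h2 h2
    · have := h.inj (m1 s hs h1) (m1 t ht h2) hst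
      linarith
    · exact (key s hs t ht h1 h2 hst).elim
    · exact (key t ht s hs h2 h1 hst.symm).elim
    · have := h'.inj (m2 s hs (not_le.1 h1).le) (m2 t ht (not_le.1 h2).le) hst
      linarith
  · norm_num [h.zero]
  · norm_num [h'.one]
  · intro t ht
    split_ifs with h1
    · exact h.sub _ (m1 t ht h1)
    · exact h'.sub _ (m2 t ht (not_le.1 h1).le)

/-- Two arcs with common endpoints and no other common point form a circle. -/
theorem exists_circle [T2Space Y] (h : ArcFrom S x y α) (h' : ArcFrom S x y β)
    (hd : ∀ s ∈ Icc (0:ℝ) 1, ∀ t ∈ Icc (0:ℝ) 1, α s = β t → α s = x ∨ α s = y) :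
    ∃ C ⊆ S, IsCircleSet C := by
  -- the upper half of the circle runs along `α` and the lower half along `β`, with parameter `p`;
  -- `e` clamps to `[0, 1]` to make continuity immediate
  let e : ℝ → ℝ := fun t => max 0 (min 1 t)
  have he : ∀ t, e t ∈ Icc (0:ℝ) 1 := fun t => ⟨le_max_left _ _, by simp [e]⟩
  have hee : ∀ t ∈ Icc (0:ℝ) 1, e t = t := fun t ht => by simp [e, ht.1, ht.2]
  have hec : Continuous e := by fun_prop
  let p : Metric.sphere (0:ℂ) 1 → ℝ := fun z => (1 - z.1.re) / 2
  have hpc : Continuous p := by fun_prop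
  have hz : ∀ z : Metric.sphere (0:ℂ) 1, z.1.re ^ 2 + z.1.im ^ 2 = 1 := by
    intro z
    have h1 : ‖z.1‖ = 1 := by simp
    have h2 := Complex.sq_norm z.1
    rw [h1, Complex.normSq_apply] at h2
    nlinarith
  have hp : ∀ z, p z ∈ Icc (0:ℝ) 1 := by
    intro z
    have := hz z
    constructor
    · simp only [p]; nlinarith [sq_nonneg z.1.im]
    · simp only [p]; nlinarith [sq_nonneg z.1.im]
  have hp' : ∀ z : Metric.sphere (0:ℂ) 1, z.1.im = 0 → p z = 0 ∨ p z = 1 := by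
    intro z h0
    have := hz z
    rw [h0] at this
    have h1 : (z.1.re - 1) * (z.1.re + 1) = 0 := by nlinarith
    rcases mul_eq_zero.1 h1 with h2 | h2
    · left; simp only [p]; linarith
    · right; simp only [p]; linarith
  have hpi : ∀ z w : Metric.sphere (0:ℂ) 1, p z = p w → z.1.re = w.1.re := by
    intro z w h
    simp only [p] at h
    linarith
  let f : Metric.sphere (0:ℂ) 1 → Y := fun z => if 0 ≤ z.1.im then α (e (p z)) else β (e (p z))
  have hf : Continuous f := by
    apply Continuous.if_le
    · exact h.cont.comp_continuous (hec.comp hpc) (fun z => he _)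
    · exact h'.cont.comp_continuous (hec.comp hpc) (fun z => he _)
    · fun_prop
    · fun_prop
    · intro z hz0
      rw [hee _ (hp z)]
      rcases hp' z hz0.symm with h1 | h1
      · rw [h1, h.zero, h'.zero]
      · rw [h1, h.one, h'.one]
  have z0 : (0:ℝ) ∈ Icc (0:ℝ) 1 := by simp
  have z1 : (1:ℝ) ∈ Icc (0:ℝ) 1 := by simp
  have key : ∀ z w : Metric.sphere (0:ℂ) 1, ¬ 0 ≤ w.1.im → α (p z) = β (p w) → False := by
    intro z w hw heq
    rcases hd _ (hp z) _ (hp w) heq with h1 | h1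
    · have h2 := h'.inj (hp w) z0 (by rw [← heq, h1, h'.zero])
      have h3 := hz w
      have h4 : w.1.re = 1 := by simp only [p] at h2; linarith
      rw [h4] at h3
      apply hw
      nlinarith
    · have h2 := h'.inj (hp w) z1 (by rw [← heq, h1, h'.one])
      have h3 := hz w
      have h4 : w.1.re = -1 := by simp only [p] at h2; linarith
      rw [h4] at h3
      apply hw
      nlinarith
  have hfi : Function.Injective f := by
    intro z w hzw
    simp only [f, hee _ (hp _)] at hzw
    have k1 := hz z
    have k2 := hz w
    split_ifs at hzw with h1 h2 h2
    · have h3 := hpi z w (h.inj (hp z) (hp w) hzw)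
      apply Subtype.ext
      apply Complex.ext h3
      rw [h3] at k1
      have h4 : z.1.im ^ 2 = w.1.im ^ 2 := by linarith
      exact (pow_left_inj₀ h1 h2 two_ne_zero).1 h4
    · exact (key z w h2 hzw).elim
    · exact (key w z h1 hzw.symm).elim
    · have h3 := hpi z w (h'.inj (hp z) (hp w) hzw)
      apply Subtype.ext
      apply Complex.ext h3
      rw [h3] at k1
      have h4 : (-z.1.im) ^ 2 = (-w.1.im) ^ 2 := by linarith
      have h5 := (pow_left_inj₀ (by linarith) (by linarith) two_ne_zero).1 h4
      linarith
  refine ⟨range f, ?_, ⟨((hf.isClosedEmbedding hfi).isEmbedding.toHomeomorph).symm⟩⟩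
  rintro _ ⟨z, rfl⟩
  simp only [f]
  split_ifs
  · exact h.sub _ (he _)
  · exact h'.sub _ (he _)

end ArcFrom

/-- In a circle-free set, an interior point of an arc separates the endpoints of the arc. -/
theorem ArcFrom.not_joinedIn {Y : Type*} [MetricSpace Y] {W : Set Y} {x y : Y} {α : ℝ → Y}
    (hW : NoCircle W) (h : ArcFrom W x y α) {s : ℝ} (hs : s ∈ Ioo (0:ℝ) 1) :
    ¬ JoinedIn (W \ {α s}) x y := by
  intro hj
  have z0 : (0:ℝ) ∈ Icc (0:ℝ) 1 := by simp
  have z1 : (1:ℝ) ∈ Icc (0:ℝ) 1 := by simp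
  have hs' : s ∈ Icc (0:ℝ) 1 := Ioo_subset_Icc_self hs
  have hxy : x ≠ y := by
    rw [← h.zero, ← h.one]
    intro h1
    exact zero_ne_one (h.inj z0 z1 h1)
  obtain ⟨β, hβ⟩ := hj.exists_arc hxy
  have hK1 : IsClosed (α '' Icc 0 s) := (isCompact_Icc.image_of_continuousOn
    (h.cont.mono (Icc_subset_Icc_right hs.2.le))).isClosed
  have hK2 : IsClosed (α '' Icc s 1) := (isCompact_Icc.image_of_continuousOn
    (h.cont.mono (Icc_subset_Icc_left hs.1.le))).isClosed
  -- the path `β` avoiding `α s` leaves `α [0, s]` for the last time at `t0`, and afterwards meets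
  -- `α [s, 1]` for the first time at `t1`; with the arc of `α` between these points it forms a circle
  set A := Icc (0:ℝ) 1 ∩ β ⁻¹' (α '' Icc 0 s) with hA
  have hAc : IsCompact A := by
    apply isCompact_Icc.of_isClosed_subset (hβ.cont.preimage_isClosed_of_isClosed isClosed_Icc hK1)
      inter_subset_left
  have hA0 : (0:ℝ) ∈ A := ⟨z0, 0, ⟨le_rfl, hs.1.le⟩, by rw [h.zero, hβ.zero]⟩
  set t0 := sSup A with ht0
  have ht0A : t0 ∈ A := hAc.sSup_mem ⟨0, hA0⟩
  set B := Icc t0 1 ∩ β ⁻¹' (α '' Icc s 1) with hB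
  have hsub0 : Icc t0 1 ⊆ Icc 0 1 := Icc_subset_Icc_left ht0A.1.1
  have hBc : IsCompact B := by
    apply isCompact_Icc.of_isClosed_subset
      ((hβ.cont.mono hsub0).preimage_isClosed_of_isClosed isClosed_Icc hK2) inter_subset_left
  have hB1 : (1:ℝ) ∈ B := ⟨⟨ht0A.1.2, le_rfl⟩, 1, ⟨hs.2.le, le_rfl⟩, by rw [h.one, hβ.one]⟩
  set t1 := sInf B with ht1
  have ht1B : t1 ∈ B := hBc.sInf_mem ⟨1, hB1⟩
  obtain ⟨u, hu, hu'⟩ := ht0A.2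
  obtain ⟨v, hv, hv'⟩ := ht1B.2
  have hus : u < s := by
    refine hu.2.lt_of_ne fun h1 => ?_
    have := (hβ.sub t0 ht0A.1).2
    rw [← hu', h1] at this
    exact this rfl
  have hsv : s < v := by
    refine hv.1.lt_of_ne fun h1 => ?_
    have := (hβ.sub t1 (hsub0 ht1B.1)).2
    rw [← hv', ← h1] at this
    exact this rfl
  have hu01 : u ∈ Icc (0:ℝ) 1 := ⟨hu.1, hu.2.trans hs.2.le⟩
  have hv01 : v ∈ Icc (0:ℝ) 1 := ⟨hs.1.le.trans hv.1, hv.2⟩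
  have ht01 : t0 < t1 := by
    refine ht1B.1.1.lt_of_ne fun h1 => ?_
    rw [← h1, ← hu'] at hv'
    have := h.inj hv01 hu01 hv'
    linarith
  have hb : ∀ t ∈ Ioo t0 t1, ∀ r ∈ Icc (0:ℝ) 1, α r ≠ β t := by
    intro t ht r hr hrt
    rcases le_total r s with h1 | h1
    · have : t ∈ A := ⟨⟨ht0A.1.1.trans ht.1.le, ht.2.le.trans ht1B.1.2⟩, r, ⟨hr.1, h1⟩, hrt⟩
      exact absurd (le_csSup hAc.bddAbove this) (not_le.2 ht.1)
    · have : t ∈ B := ⟨⟨ht.1.le, ht.2.le.trans ht1B.1.2⟩, r, ⟨h1, hr.2⟩, hrt⟩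
      exact absurd (csInf_le hBc.bddBelow this) (not_le.2 ht.2)
  have c1 := h.subarc hu.1 (hus.trans hsv) hv.2 (T := W)
    (fun r hr => h.sub r ⟨hu.1.trans hr.1, hr.2.trans hv.2⟩)
  have c2 := hβ.subarc ht0A.1.1 ht01 ht1B.1.2 (T := W)
    (fun r hr => (hβ.sub r ⟨ht0A.1.1.trans hr.1, hr.2.trans ht1B.1.2⟩).1)
  rw [← hu', ← hv'] at c2
  obtain ⟨C, hC, hC'⟩ := c1.exists_circle c2 (by
    intro a ha b hb' hab
    have k1 : u + a * (v - u) ∈ Icc (0:ℝ) 1 := by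
      constructor
      · nlinarith [ha.1, hu.1]
      · nlinarith [ha.2, hv.2]
    have k2 : t0 + b * (t1 - t0) ∈ Icc t0 t1 := by
      constructor
      · nlinarith [hb'.1]
      · nlinarith [hb'.2]
    rcases k2.1.eq_or_lt with h1 | h1
    · left; rw [hab, ← h1, hu']
    rcases k2.2.eq_or_lt with h2 | h2
    · right; rw [hab, h2, hv']
    · exact absurd hab (hb _ ⟨h1, h2⟩ _ k1))
  exact hW C hC hC'

/-- In a circle-free set, an interior point of an arc separates the two sides of the arc. -/
theorem ArcFrom.not_joinedIn' {Y : Type*} [MetricSpace Y] {W : Set Y} {x y : Y} {α : ℝ → Y}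
    (hW : NoCircle W) (h : ArcFrom W x y α) {p s q : ℝ} (hp : 0 ≤ p) (hps : p < s) (hsq : s < q)
    (hq : q ≤ 1) : ¬ JoinedIn (W \ {α s}) (α p) (α q) := by
  have h1 := h.subarc hp (hps.trans hsq) hq (T := W)
    (fun r hr => h.sub r ⟨hp.trans hr.1, hr.2.trans hq⟩)
  have hpos : 0 < q - p := by linarith
  have h2 := h1.not_joinedIn hW (s := (s - p) / (q - p))
    ⟨div_pos (by linarith) hpos, (div_lt_one hpos).2 (by linarith)⟩
  rwa [div_mul_cancel₀ _ hpos.ne', add_sub_cancel] at h2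

/-- In a circle-free set, two paths that meet only in their common end `z` lead to points
separated by `z`. -/
theorem not_joinedIn_of_inter {Y : Type*} [MetricSpace Y] {W S T : Set Y} {x y z : Y}
    (hW : NoCircle W) (hS : S ⊆ W) (hT : T ⊆ W) (hST : S ∩ T ⊆ {z}) (h1 : JoinedIn S x z)
    (h2 : JoinedIn T z y) (hx : x ≠ z) (hy : y ≠ z) : ¬ JoinedIn (W \ {z}) x y := by
  obtain ⟨α, hα⟩ := h1.exists_arc hx
  obtain ⟨β, hβ⟩ := h2.exists_arc hy.symm
  have h3 := (hα.mono hS).concat (hβ.mono hT) (by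
    intro s hs t ht hst
    exact hST ⟨hα.sub s hs, hst ▸ hβ.sub t ht⟩)
  have h4 := h3.not_joinedIn hW (s := 1 / 2) (by norm_num)
  norm_num [hα.one] at h4
  exact h4

theorem IsCircleSet.image {Y Z : Type*} [TopologicalSpace Y] [TopologicalSpace Z] {f : Y → Z}
    (hf : IsEmbedding f) {C : Set Y} (hC : IsCircleSet C) : IsCircleSet (f '' C) := by
  obtain ⟨e⟩ := hC
  exact ⟨(hf.homeomorphImage C).symm.trans e⟩

/-- The space `Y` contains only finitely many circles. -/
def FinCirc (Y : Type*) [TopologicalSpace Y] : Prop :=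
  {C : Set Y | IsCircleSet C}.Finite

theorem FinCirc.of_embedding {Y Z : Type*} [TopologicalSpace Y] [TopologicalSpace Z] {f : Y → Z}
    (hf : IsEmbedding f) (hZ : FinCirc Z) : FinCirc Y :=
  Finite.of_finite_image (f := fun C => f '' C)
    (hZ.subset (by rintro _ ⟨C, hC, rfl⟩; exact hC.image hf))
    (hf.injective.image_injective.injOn)

theorem IsCircleSet.nontrivial {Y : Type*} [TopologicalSpace Y] {C : Set Y} (h : IsCircleSet C) :
    C.Nontrivial := by
  obtain ⟨e⟩ := h
  refine ⟨(e.symm ⟨1, by simp⟩).1, (e.symm ⟨1, by simp⟩).2, (e.symm ⟨-1, by simp⟩).1,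
    (e.symm ⟨-1, by simp⟩).2, fun h => ?_⟩
  have h1 := e.symm.injective (Subtype.ext h)
  have h2 : (1:ℂ) = -1 := congrArg Subtype.val h1
  norm_num at h2

/-- A space with finitely many circles is locally circle-free. -/
theorem FinCirc.exists_open {Y : Type*} [TopologicalSpace Y] [T1Space Y] (h : FinCirc Y) (x : Y) :
    ∃ W, IsOpen W ∧ x ∈ W ∧ NoCircle W := by
  -- remove from the space one point other than `x` of each circle
  have : ∀ C : Set Y, ∃ c, IsCircleSet C → c ∈ C ∧ c ≠ x := by
    intro C
    by_cases hC : IsCircleSet C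
    · obtain ⟨c, hc, hcx⟩ := hC.nontrivial.exists_ne x
      exact ⟨c, fun _ => ⟨hc, hcx⟩⟩
    · exact ⟨x, fun h => absurd h hC⟩
  choose c hc using this
  refine ⟨(c '' {C | IsCircleSet C})ᶜ, (h.image c).isClosed.isOpen_compl, ?_, ?_⟩
  · rintro ⟨C, hC, hCx⟩
    exact (hc C hC).2 hCx
  · intro C hCW hC
    exact hCW (hc C hC).1 ⟨C, hC, rfl⟩

open Filter

/-! ### Peano continua are locally path connected -/

/-- `u` and `v` lie in a connected open subset of `U` of diameter at most `ε`. -/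
def Close {Y : Type*} [MetricSpace Y] (U : Set Y) (ε : ℝ) (u v : Y) : Prop :=
  ∃ V, IsOpen V ∧ IsPreconnected V ∧ V ⊆ U ∧ (∀ a ∈ V, ∀ b ∈ V, dist a b ≤ ε) ∧ u ∈ V ∧ v ∈ V

theorem exists_seq_of_reflTransGen {Y : Type*} {r : Y → Y → Prop} {a b : Y}
    (h : Relation.ReflTransGen r a b) (hb : r b b) :
    ∃ (n : ℕ) (p : ℕ → Y), p 0 = a ∧ (∀ i ≥ n, p i = b) ∧ ∀ i, r (p i) (p (i + 1)) := by
  induction h using Relation.ReflTransGen.head_induction_on with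
  | refl => exact ⟨0, fun _ => b, rfl, fun _ _ => rfl, fun _ => hb⟩
  | @head a c hac _ ih =>
    obtain ⟨n, p, h0, hn, hp⟩ := ih
    refine ⟨n + 1, fun i => Nat.casesOn i a p, rfl, fun i hi => ?_, fun i => ?_⟩
    · cases i with
      | zero => omega
      | succ i => exact hn i (by omega)
    · cases i with
      | zero => simpa [h0] using hac
      | succ i => exact hp i

/-- Two points of a connected open set `U` of a locally connected space are joined by a finite chain
of points whose links lie in small connected open subsets of `U`; a chain from a point to itself
can be taken constant. -/
theorem IsOpen.exists_chain {Y : Type*} [MetricSpace Y] [LocallyConnectedSpace Y] {U : Set Y}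
    (hU : IsOpen U) (hc : IsPreconnected U) {a b : Y} (ha : a ∈ U) (hb : b ∈ U) {ε : ℝ}
    (hε : 0 < ε) :
    ∃ (n : ℕ) (p : ℕ → Y), p 0 = a ∧ (∀ i ≥ n, p i = b) ∧ (∀ i, Close U ε (p i) (p (i + 1))) ∧
      (a = b → ∀ i, p i = b) := by
  have hclose : ∀ x ∈ U, ∀ᶠ y in 𝓝 x, Close U ε x y := by
    intro x hx
    have hN : U ∩ Metric.ball x (ε / 2) ∈ 𝓝 x :=
      inter_mem (hU.mem_nhds hx) (Metric.ball_mem_nhds x (by positivity))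
    obtain ⟨V, hV, hVo, hxV, hVc⟩ :=
      locallyConnectedSpace_iff_subsets_isOpen_isConnected.1 inferInstance x _ hN
    filter_upwards [hVo.mem_nhds hxV] with y hy
    refine ⟨V, hVo, hVc.isPreconnected, fun z hz => (hV hz).1, fun u hu v hv => ?_, hxV, hy⟩
    have h1 := Metric.mem_ball.1 (hV hu).2
    have h2 := Metric.mem_ball'.1 (hV hv).2
    linarith [dist_triangle u x v]
  by_cases hab : a = b
  · exact ⟨0, fun _ => b, hab.symm, fun _ _ => rfl, fun _ => (hclose b hb).self_of_nhds,
      fun _ _ => rfl⟩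
  have h := hc.induction₂ (Relation.ReflTransGen (Close U ε))
    (fun x hx => ((hclose x hx).filter_mono nhdsWithin_le_nhds).mono
      fun y hy => Relation.ReflTransGen.single hy)
    (fun x y z _ _ _ h1 h2 => h1.trans h2)
    (fun x y _ _ h => by
      have : Std.Symm (Close U ε) := ⟨by
        rintro u v ⟨V, h1, h2, h3, h4, h5, h6⟩
        exact ⟨V, h1, h2, h3, h4, h6, h5⟩⟩
      exact Std.Symm.symm _ _ h) ha hb
  obtain ⟨n, p, h1, h2, h3⟩ := exists_seq_of_reflTransGen h (hclose b hb).self_of_nhds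
  exact ⟨n, p, h1, h2, h3, fun h => absurd h hab⟩

/-- `p` is a chain from `x` to `y` inside `U` with links of size at most `ε`, constant from
index `N` on. -/
def GoodChain {Y : Type*} [MetricSpace Y] (U : Set Y) (x y : Y) (ε : ℝ) (s : ℕ × (ℕ → Y)) : Prop :=
  0 < s.1 ∧ s.2 0 = x ∧ (∀ i ≥ s.1, s.2 i = y) ∧ ∀ i, Close U ε (s.2 i) (s.2 (i + 1))

/-- A chain can be refined by subdividing every link into the same number `m` of smaller links, each
staying close to the link it replaces. -/
theorem GoodChain.refine {Y : Type*} [MetricSpace Y] [LocallyConnectedSpace Y] {U : Set Y}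
    {x y : Y} {ε ε' : ℝ} {s : ℕ × (ℕ → Y)} (h : GoodChain U x y ε s) (hε' : 0 < ε') :
    ∃ s', GoodChain U x y ε' s' ∧ ∃ m, 0 < m ∧ s'.1 = s.1 * m ∧
      ∀ k, dist (s.2 (k / m)) (s'.2 k) ≤ ε := by
  obtain ⟨N, p⟩ := s
  obtain ⟨hN, h0, hlast, hcl⟩ := h
  dsimp only at *
  choose V hVo hVc hVU hVd hV1 hV2 using hcl
  choose n q hq0 hqn hq hqc using fun i => (hVo i).exists_chain (hVc i) (hV1 i) (hV2 i) hε'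
  set m := (Finset.range N).sup n + 1 with hm
  have hmpos : 0 < m := Nat.succ_pos _
  have hqm : ∀ i, q i m = p (i + 1) := by
    intro i
    by_cases hi : i < N
    · apply hqn
      have := Finset.le_sup (f := n) (Finset.mem_range.2 hi)
      omega
    · exact hqc i (by rw [hlast i (by omega), hlast (i + 1) (by omega)]) m
  have hqV : ∀ i j, q i j ∈ V i := fun i j => by
    obtain ⟨W, -, -, hW, -, hW1, -⟩ := hq i j
    exact hW hW1
  refine ⟨(N * m, fun k => q (k / m) (k % m)), ⟨Nat.mul_pos hN hmpos, ?_, ?_, ?_⟩, m, hmpos, rfl,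
    ?_⟩
  · simp [hq0, h0]
  · intro k hk
    have hk' : N ≤ k / m := (Nat.le_div_iff_mul_le hmpos).2 hk
    have := hqc (k / m) (by rw [hlast _ hk', hlast (k / m + 1) (by omega)]) (k % m)
    dsimp only
    rw [this, hlast _ (by omega)]
  · intro k
    have key : q ((k + 1) / m) ((k + 1) % m) = q (k / m) (k % m + 1) := by
      by_cases hj : k % m + 1 < m
      · have h1 : (k + 1) / m = k / m := by
          have := Nat.div_add_mod k m
          rw [Nat.div_eq_iff hmpos]
          have h3 : m * (k / m) = k / m * m := mul_comm _ _
          constructor <;> omega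
        have h2 : (k + 1) % m = k % m + 1 := by
          rw [Nat.add_mod, Nat.mod_eq_of_lt (show 1 < m by omega), Nat.mod_eq_of_lt hj]
        rw [h1, h2]
      · have hlt := Nat.mod_lt k hmpos
        have hjm : k % m + 1 = m := by omega
        have hk : k + 1 = m * (k / m + 1) := by
          have := Nat.div_add_mod k m
          rw [mul_add, mul_one]
          omega
        have h1 : (k + 1) / m = k / m + 1 := by rw [hk, Nat.mul_div_cancel_left _ hmpos]
        have h2 : (k + 1) % m = 0 := by rw [hk, Nat.mul_mod_right]
        rw [h1, h2, hjm, hq0, hqm]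
    obtain ⟨W, k1, k2, k3, k4, k5, k6⟩ := hq (k / m) (k % m)
    dsimp only
    rw [key]
    exact ⟨W, k1, k2, k3.trans (hVU _), k4, k5, k6⟩
  · intro k
    exact hVd _ _ (hV1 _) _ (hqV _ _)

/-- In a compact locally connected metric space, two points of a connected open set `U` are joined
by a path in the closure of `U`, obtained as a uniform limit of finer and finer chains. -/
theorem IsOpen.joinedIn_closure {Y : Type*} [MetricSpace Y] [CompactSpace Y]
    [LocallyConnectedSpace Y] {U : Set Y} (hU : IsOpen U) (hc : IsPreconnected U) {x y : Y}
    (hx : x ∈ U) (hy : y ∈ U) : JoinedIn (closure U) x y := by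
  -- Refine chains successively, with links of size `e j` at stage `j`; run through at constant
  -- speed, the chains converge uniformly to a path.
  let e : ℕ → ℝ := fun j => 1 / 2 / 2 ^ j
  have he : ∀ j, 0 < e j := fun j => by positivity
  obtain ⟨n0, p0, h1, h2, h3, -⟩ := hU.exists_chain hc hx hy (he 0)
  have hinit : GoodChain U x y (e 0) (n0 + 1, p0) :=
    ⟨Nat.succ_pos _, h1, fun i hi => h2 i (by simp only at hi; omega), h3⟩
  have hstep : ∀ j, ∀ s : {s // GoodChain U x y (e j) s}, ∃ s' : {s // GoodChain U x y (e (j+1)) s},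
      ∃ m, 0 < m ∧ s'.1.1 = s.1.1 * m ∧ ∀ k, dist (s.1.2 (k / m)) (s'.1.2 k) ≤ e j := by
    intro j s
    obtain ⟨s', hs', h⟩ := s.2.refine (he (j + 1))
    exact ⟨⟨s', hs'⟩, h⟩
  choose F hF using hstep
  let S : (j : ℕ) → {s // GoodChain U x y (e j) s} := fun j => Nat.rec ⟨_, hinit⟩ F j
  have hS : ∀ j, ∃ m, 0 < m ∧ (S (j+1)).1.1 = (S j).1.1 * m ∧
      ∀ k, dist ((S j).1.2 (k / m)) ((S (j+1)).1.2 k) ≤ e j := fun j => hF j (S j)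
  let f : ℕ → ℝ → Y := fun j t => (S j).1.2 ⌊t * (S j).1.1⌋₊
  have hfd : ∀ t j, dist (f j t) (f (j + 1) t) ≤ 1 / 2 / 2 ^ j := by
    intro t j
    obtain ⟨m, hm, h1, h2⟩ := hS j
    have h3 : ⌊t * (S j).1.1⌋₊ = ⌊t * (S (j+1)).1.1⌋₊ / m := by
      rw [← Nat.floor_div_natCast, h1]
      have : (m : ℝ) ≠ 0 := by positivity
      push_cast
      field_simp
    simp only [f, h3]
    exact h2 _
  have hlim : ∀ t, ∃ z, Tendsto (fun j => f j t) atTop (𝓝 z) := fun t =>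
    cauchySeq_tendsto_of_complete (cauchySeq_of_le_geometric_two (hfd t))
  choose g hg using hlim
  have hgd : ∀ t j, dist (f j t) (g t) ≤ 1 / 2 ^ j := fun t =>
    dist_le_of_le_geometric_two_of_tendsto (hfd t) (hg t)
  have hfU : ∀ j t, f j t ∈ U := by
    intro j t
    obtain ⟨V, -, -, hV, -, hV1, -⟩ := (S j).2.2.2.2 ⌊t * (S j).1.1⌋₊
    exact hV hV1
  have hgU : ∀ t, g t ∈ closure U := fun t =>
    mem_closure_of_tendsto (hg t) (Eventually.of_forall fun j => hfU j t)
  have g0 : g 0 = x := by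
    apply tendsto_nhds_unique (hg 0)
    have : ∀ j, f j 0 = x := fun j => by simp [f, (S j).2.2.1]
    simp [this]
  have g1 : g 1 = y := by
    apply tendsto_nhds_unique (hg 1)
    have : ∀ j, f j 1 = y := fun j => by simp [f, (S j).2.2.2.1]
    simp [this]
  have hgc : ContinuousOn g (Icc 0 1) := by
    rw [Metric.continuousOn_iff]
    intro t ht ε hε
    obtain ⟨j, hj⟩ : ∃ j : ℕ, (1 / 2 : ℝ) ^ j < ε / 3 := exists_pow_lt_of_lt_one (by positivity)
      (by norm_num)
    rw [one_div_pow] at hj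
    have hNpos : (0:ℝ) < (S j).1.1 := by exact_mod_cast (S j).2.1
    -- parameters closer than `1 / N` have consecutive indices
    have hfl : ∀ a b : ℝ, 0 ≤ a → a ≤ b → b < a + 1 / (S j).1.1 →
        dist (f j a) (f j b) ≤ e j := by
      intro a b ha hab hb
      have h1 : ⌊a * (S j).1.1⌋₊ ≤ ⌊b * (S j).1.1⌋₊ := Nat.floor_mono (by gcongr)
      have h2 : ⌊b * (S j).1.1⌋₊ ≤ ⌊a * (S j).1.1⌋₊ + 1 := by
        rw [← Nat.floor_add_one (by positivity)]
        apply Nat.floor_mono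
        have := mul_le_mul_of_nonneg_right hb.le hNpos.le
        rw [add_mul, one_div_mul_cancel hNpos.ne'] at this
        exact this
      obtain ⟨V, -, -, -, hV3, hV1, hV2⟩ := (S j).2.2.2.2 ⌊a * (S j).1.1⌋₊
      rcases (show ⌊b * (S j).1.1⌋₊ = ⌊a * (S j).1.1⌋₊ ∨
        ⌊b * (S j).1.1⌋₊ = ⌊a * (S j).1.1⌋₊ + 1 by omega) with h | h
      · simp only [f, h, dist_self]
        exact (he j).le
      · simp only [f, h]
        exact hV3 _ hV1 _ hV2
    refine ⟨1 / (S j).1.1, by positivity, fun u hu hut => ?_⟩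
    have h1 : dist (f j u) (f j t) ≤ e j := by
      rw [Real.dist_eq, abs_lt] at hut
      rcases le_total u t with h | h
      · exact hfl u t hu.1 h (by linarith)
      · rw [dist_comm]
        exact hfl t u ht.1 h (by linarith)
    have h2 : e j ≤ 1 / 2 ^ j := by
      have : (0:ℝ) < 1 / 2 ^ j := by positivity
      simp only [e]
      rw [div_div, mul_comm, ← div_div]
      linarith
    have h3 := hgd u j
    have h4 := hgd t j
    have h5 := dist_triangle4 (g u) (f j u) (f j t) (g t)
    rw [dist_comm (g u) (f j u)] at h5
    linarith
  have := joinedIn_of_continuousOn hgc (p := 0) (q := 1) (by simp) (by simp) (fun t _ => hgU t)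
  rwa [g0, g1] at this

/-- A compact locally connected metric space is locally path connected. -/
theorem locallyPathConnectedSpace_of_compact (Y : Type*) [MetricSpace Y] [CompactSpace Y]
    [LocallyConnectedSpace Y] : LocallyPathConnectedSpace Y := by
  rw [locallyPathConnectedSpace_iff_pathComponentIn_mem_nhds]
  intro x U hU hx
  obtain ⟨K, hK, hKc, hKU⟩ := exists_mem_nhds_isClosed_subset (hU.mem_nhds hx)
  obtain ⟨V, hV, hVo, hxV, hVc⟩ :=
    locallyConnectedSpace_iff_subsets_isOpen_isConnected.1 inferInstance x _ hK
  refine mem_of_superset (hVo.mem_nhds hxV) fun y hy => ?_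
  exact (hVo.joinedIn_closure hVc.isPreconnected hxV hy).mono ((closure_minimal hV hKc).trans hKU)

/-! ### Rim-finiteness and the fixed point property -/

/-- Every point has arbitrarily small open neighbourhoods with finite boundary. -/
def RimFinite (Y : Type*) [TopologicalSpace Y] : Prop :=
  ∀ (x : Y) (V : Set Y), IsOpen V → x ∈ V →
    ∃ U, IsOpen U ∧ x ∈ U ∧ closure U ⊆ V ∧ (frontier U).Finite

theorem RimFinite.of_embedding {Y Z : Type*} [TopologicalSpace Y] [TopologicalSpace Z] {f : Y → Z}
    (hf : IsEmbedding f) (hZ : RimFinite Z) : RimFinite Y := by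
  intro x V hV hx
  obtain ⟨V', hV', rfl⟩ := hf.isOpen_iff.1 hV
  obtain ⟨U, hU, hxU, hUV, hfin⟩ := hZ (f x) V' hV' hx
  exact ⟨f ⁻¹' U, hU.preimage hf.continuous, hxU,
    (hf.continuous.closure_preimage_subset U).trans (preimage_mono hUV),
    (hfin.preimage hf.injective.injOn).subset (hf.continuous.frontier_preimage_subset U)⟩

theorem exists_circleFree_nhd {Y : Type*} [TopologicalSpace Y] [T1Space Y]
    [LocallyPathConnectedSpace Y] (h : FinCirc Y) (x : Y) {V : Set Y} (hV : IsOpen V)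
    (hx : x ∈ V) : ∃ W, IsOpen W ∧ x ∈ W ∧ W ⊆ V ∧ NoCircle W ∧ IsPathConnected W := by
  obtain ⟨W, hW, hxW, hWc⟩ := h.exists_open x
  have hm : x ∈ V ∩ W := ⟨hx, hxW⟩
  exact ⟨pathComponentIn (V ∩ W) x, (hV.inter hW).pathComponentIn x, mem_pathComponentIn_self hm,
    pathComponentIn_subset.trans inter_subset_left,
    hWc.mono (pathComponentIn_subset.trans inter_subset_right), isPathConnected_pathComponentIn hm⟩

/-- A Peano continuum with finitely many circles is rim-finite: finitely many points `z`, each of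
which separates `x` from part of the boundary of a given neighbourhood, bound a smaller one. -/
theorem FinCirc.rimFinite {Y : Type*} [MetricSpace Y] [CompactSpace Y]
    [LocallyPathConnectedSpace Y] (h : FinCirc Y) : RimFinite Y := by
  intro x V hV hx
  obtain ⟨W, hW, hxW, hWV, hWc, hWp⟩ := exists_circleFree_nhd h x hV hx
  obtain ⟨K, hK, hKc, hKW⟩ := exists_mem_nhds_isClosed_subset (hW.mem_nhds hxW)
  set B := interior K with hB
  have hxB : x ∈ B := mem_interior_iff_mem_nhds.2 hK
  have hBW : closure B ⊆ W := (closure_minimal interior_subset hKc).trans hKW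
  have hfr : ∀ y ∈ frontier B, ∃ z, y ≠ z ∧ x ≠ z ∧ ¬ JoinedIn (W \ {z}) x y := by
    intro y hy
    have hyx : x ≠ y := by
      rintro rfl
      exact eq_empty_iff_forall_notMem.1 (isOpen_interior (s := K)).inter_frontier_eq x ⟨hxB, hy⟩
    obtain ⟨α, hα⟩ := (hWp.joinedIn x hxW y (hBW hy.1)).exists_arc hyx
    refine ⟨α (1 / 2), ?_, ?_, hα.not_joinedIn hWc (by norm_num)⟩
    · rw [← hα.one]
      intro h
      have := hα.inj (by norm_num) (by norm_num) h
      norm_num at this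
    · rw [← hα.zero]
      intro h
      have := hα.inj (by norm_num) (by norm_num) h
      norm_num at this
  -- `z y` separates `x` from the boundary point `y` inside `W`
  choose! z hz1 hz2 hz3 using hfr
  have hopen : ∀ y a, IsOpen (pathComponentIn (W \ {z y}) a) := fun y a =>
    (hW.sdiff isClosed_singleton).pathComponentIn a
  obtain ⟨t, ht, hcov⟩ := (isClosed_frontier (s := B)).isCompact.elim_nhds_subcover
    (fun y => pathComponentIn (W \ {z y}) y)
    (fun y hy => (hopen y y).mem_nhds (mem_pathComponentIn_self ⟨hBW hy.1, hz1 y hy⟩))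
  refine ⟨B ∩ ⋂ y ∈ t, pathComponentIn (W \ {z y}) x, isOpen_interior.inter
    (isOpen_biInter_finset fun y _ => hopen y x), ⟨hxB, mem_iInter₂.2 fun y hy =>
      mem_pathComponentIn_self ⟨hxW, hz2 y (ht y hy)⟩⟩,
    (closure_mono inter_subset_left).trans (hBW.trans hWV), ?_⟩
  refine (t.finite_toSet.image z).subset fun p hp => ?_
  have hpU := hp.1
  have hpB : p ∈ closure B := closure_mono inter_subset_left hpU
  -- a point of the closure of a path component of `W \ {z}` other than `z` lies in it
  have hcomp : ∀ y ∈ t, p ≠ z y → JoinedIn (W \ {z y}) x p := by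
    intro y hy hpz
    have hpn := (hopen y p).mem_nhds (mem_pathComponentIn_self ⟨hBW hpB, hpz⟩)
    obtain ⟨q, hq1, hq2⟩ := mem_closure_iff_nhds.1 hpU _ hpn
    have hq3 := mem_iInter₂.1 hq2.2 y hy
    exact JoinedIn.trans hq3 (JoinedIn.symm hq1)
  by_contra hpz
  have hpz' : ∀ y ∈ t, p ≠ z y := fun y hy h => hpz ⟨y, hy, h.symm⟩
  by_cases hpB' : p ∈ B
  · have hmem : p ∈ B ∩ ⋂ y ∈ t, pathComponentIn (W \ {z y}) x :=
      ⟨hpB', mem_iInter₂.2 fun y hy => hcomp y hy (hpz' y hy)⟩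
    have hop : IsOpen (B ∩ ⋂ y ∈ t, pathComponentIn (W \ {z y}) x) :=
      isOpen_interior.inter (isOpen_biInter_finset fun y _ => hopen y x)
    exact eq_empty_iff_forall_notMem.1 hop.inter_frontier_eq p ⟨hmem, hp⟩
  · have hpf : p ∈ frontier B := ⟨hpB, by rwa [isOpen_interior.interior_eq]⟩
    obtain ⟨y, hy, hyp⟩ := mem_iUnion₂.1 (hcov hpf)
    exact hz3 y (ht y hy) ((hcomp y hy (hpz' y hy)).trans (JoinedIn.symm hyp))

/-- A path from `x` to `y` either avoids `b` or contains a path from `x` to `b`. -/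
theorem JoinedIn.or_hit {Y : Type*} [TopologicalSpace Y] {S : Set Y} {x y : Y}
    (h : JoinedIn S x y) (b : Y) : JoinedIn (S \ {b}) x y ∨ JoinedIn S x b := by
  obtain ⟨γ, hγ⟩ := h
  by_cases hb : ∃ t, γ t = b
  · obtain ⟨t, ht⟩ := hb
    right
    have : JoinedIn S (γ 0) (γ t) := by
      refine ⟨γ.subpath 0 t, fun s => ?_⟩
      obtain ⟨u, hu⟩ := (Path.range_subpath γ 0 t ▸ mem_range_self s :
        γ.subpath 0 t s ∈ γ '' uIcc 0 t)
      rw [← hu.2]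
      exact hγ u
    rwa [ht, γ.source] at this
  · left
    exact ⟨γ, fun t => ⟨hγ t, fun h => hb ⟨t, h⟩⟩⟩

theorem ArcFrom.joinedIn {Y : Type*} [TopologicalSpace Y] {S T : Set Y} {x y : Y} {α : ℝ → Y}
    (h : ArcFrom S x y α) {p q : ℝ} (hp : 0 ≤ p) (hpq : p ≤ q) (hq : q ≤ 1)
    (hT : ∀ t ∈ Icc p q, α t ∈ T) : JoinedIn T (α p) (α q) :=
  joinedIn_of_continuousOn (h.cont.mono (Icc_subset_Icc hp hq)) (by simp [hpq]) (by simp [hpq]) hT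

/-- If `b` separates `x` from `a`, then `x` can be joined to `b` off `a`. -/
theorem joinedIn_of_separates {Y : Type*} [MetricSpace Y] {x a b : Y} (h : Joined x a)
    (hxa : x ≠ a) (hab : a ≠ b) (hs : ¬ JoinedIn (univ \ {b}) x a) :
    JoinedIn (univ \ {a}) x b := by
  obtain ⟨α, hα⟩ := (joinedIn_univ.2 h).exists_arc hxa
  by_cases hb : ∃ t ∈ Icc (0:ℝ) 1, α t = b
  · obtain ⟨t, ht, rfl⟩ := hb
    have ht1 : t ≠ 1 := by
      rintro rfl
      exact hab hα.one.symm
    rw [← hα.zero]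
    refine hα.joinedIn le_rfl ht.1 ht.2 fun s hs => ⟨trivial, fun h => ht1 ?_⟩
    have := hα.inj ⟨hs.1, hs.2.trans ht.2⟩ (by simp : (1:ℝ) ∈ Icc (0:ℝ) 1) (h.trans hα.one.symm)
    exact le_antisymm ht.2 (this ▸ hs.2)
  · refine absurd ?_ hs
    rw [← hα.zero, ← hα.one]
    exact hα.joinedIn le_rfl zero_le_one le_rfl fun s hs => ⟨trivial, fun h => hb ⟨s, hs, h⟩⟩

/-- The separation order on a space with base point `x₀`: `x ≤ y` if every path from `x₀` to `y`
runs through `x`. -/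
def SepLE {Y : Type*} [TopologicalSpace Y] (x₀ x y : Y) : Prop :=
  x = x₀ ∨ x = y ∨ ¬ JoinedIn (univ \ {x}) x₀ y

section FPP
variable {Y : Type*} [MetricSpace Y] [PathConnectedSpace Y] {x₀ : Y}

theorem SepLE.trans {a b c : Y} (h1 : SepLE x₀ a b) (h2 : SepLE x₀ b c) : SepLE x₀ a c := by
  rcases h1 with rfl | rfl | h1
  · exact Or.inl rfl
  · exact h2
  by_cases ha : a = x₀
  · exact Or.inl ha
  rcases h2 with rfl | rfl | h2
  · exact absurd (JoinedIn.refl (F := univ \ {a}) ⟨trivial, Ne.symm ha⟩) h1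
  · exact Or.inr (Or.inr h1)
  · refine Or.inr (Or.inr fun h => ?_)
    rcases h.or_hit b with h3 | h3
    · exact h2 (h3.mono fun z hz => ⟨trivial, hz.2⟩)
    · exact h1 h3

theorem SepLE.antisymm {a b : Y} (h1 : SepLE x₀ a b) (h2 : SepLE x₀ b a) : a = b := by
  by_contra hab
  have hb : ∀ {a b : Y}, a ≠ b → SepLE x₀ a b → b ≠ x₀ := by
    rintro a b hab h rfl
    rcases h with h | h | h
    · exact hab h
    · exact hab h
    · exact h (JoinedIn.refl ⟨trivial, Ne.symm hab⟩)
  have hb' := hb hab h1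
  have ha' := hb (Ne.symm hab) h2
  rcases h1 with h1 | h1 | h1
  · exact ha' h1
  · exact hab h1
  rcases h2 with h2 | h2 | h2
  · exact hb' h2
  · exact hab h2.symm
  · exact h1 (joinedIn_of_separates (PathConnectedSpace.joined _ _) (Ne.symm ha') hab h2)

/-- Fixed point property of circle-free Peano continua (dendrites). -/
theorem exists_fixedPoint [CompactSpace Y] [LocallyPathConnectedSpace Y]
    (hY : NoCircle (univ : Set Y)) {g : Y → Y} (hg : Continuous g) : ∃ x, g x = x := by
  by_contra! hno
  obtain ⟨x₀⟩ : Nonempty Y := inferInstance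
  let P := {x // SepLE x₀ x (g x)}
  -- the set of `x` with `x ≤ g x` is closed
  have hPc : IsClosed {x | SepLE x₀ x (g x)} := by
    rw [← isOpen_compl_iff, isOpen_iff_mem_nhds]
    intro x hx
    have hx' : ¬ SepLE x₀ x (g x) := hx
    simp only [SepLE, not_or, not_not] at hx'
    obtain ⟨hx0, hxg, γ, hγ⟩ := hx'
    have hR : IsClosed (range γ) := (isCompact_range γ.continuous).isClosed
    have hxR : x ∉ range γ := by
      rintro ⟨t, ht⟩
      exact (hγ t).2 ht
    obtain ⟨U, V, hU, hV, hxU, hRV, hUV⟩ := SeparatedNhds.of_isCompact_isCompact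
      (isCompact_singleton (x := x)) hR.isCompact (disjoint_singleton_left.2 hxR)
    have hgV : g x ∈ V := hRV ⟨1, γ.target⟩
    have hN := hg.continuousAt.preimage_mem_nhds (pathComponentIn_mem_nhds (hV.mem_nhds hgV))
    filter_upwards [hN, hU.mem_nhds (hxU rfl)] with y hy hyU
    have hyV : y ∉ V := disjoint_left.1 hUV hyU
    have hVy : V ⊆ univ \ {y} := fun v hv => ⟨trivial, fun h => hyV (h ▸ hv)⟩
    show ¬ SepLE x₀ y (g y)
    simp only [SepLE, not_or, not_not]
    refine ⟨?_, ?_, ?_⟩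
    · rintro rfl
      exact hyV (hRV ⟨0, γ.source⟩)
    · intro h
      exact hyV (h ▸ pathComponentIn_subset hy)
    · exact JoinedIn.trans ⟨γ, fun t => hVy (hRV ⟨t, rfl⟩)⟩ (JoinedIn.mono hy hVy)
  have hup : ∀ c : Y, IsClosed {y | SepLE x₀ c y} := by
    intro c
    by_cases hc : c = x₀
    · simp [SepLE, hc]
    have : {y | SepLE x₀ c y} = (pathComponentIn (univ \ {c}) x₀)ᶜ := by
      ext y
      simp only [SepLE, mem_ofPred_eq, hc, false_or, mem_compl_iff]
      constructor
      · rintro (rfl | h) h2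
        · exact (pathComponentIn_subset h2).2 rfl
        · exact h h2
      · exact Or.inr
    rw [this]
    exact ((isOpen_univ.sdiff isClosed_singleton).pathComponentIn x₀).isClosed_compl
  -- a maximal `x` with `x ≤ g x` exists by compactness, since the sets `{y | c ≤ y}` are closed
  obtain ⟨m, hm⟩ : ∃ m : P, ∀ a : P, SepLE x₀ m.1 a.1 → SepLE x₀ a.1 m.1 := by
    apply exists_maximal_of_chains_bounded (r := fun a b : P => SepLE x₀ a.1 b.1)
    · intro c hc
      rcases c.eq_empty_or_nonempty with rfl | hne
      · exact ⟨⟨x₀, Or.inl rfl⟩, by simp⟩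
      have : Nonempty c := hne.to_subtype
      have := IsCompact.nonempty_iInter_of_directed_nonempty_isCompact_isClosed
        (fun a : c => {x | SepLE x₀ x (g x)} ∩ {y | SepLE x₀ a.1.1 y})
        (by
          intro a b
          by_cases hab : a = b
          · exact ⟨a, subset_rfl, by rw [hab]⟩
          rcases hc a.2 b.2 (fun h => hab (Subtype.ext h)) with h | h
          · exact ⟨b, fun y hy => ⟨hy.1, h.trans hy.2⟩, subset_rfl⟩
          · exact ⟨a, subset_rfl, fun y hy => ⟨hy.1, h.trans hy.2⟩⟩)
        (fun a => ⟨a.1.1, a.1.2, Or.inr (Or.inl rfl)⟩)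
        (fun a => (hPc.inter (hup _)).isCompact) (fun a => hPc.inter (hup _))
      obtain ⟨y, hy⟩ := this
      rw [mem_iInter] at hy
      obtain ⟨a0⟩ := ‹Nonempty c›
      exact ⟨⟨y, (hy a0).1⟩, fun a ha => (hy ⟨a, ha⟩).2⟩
    · intro a b c h1 h2
      exact h1.trans h2
  obtain ⟨x, hx⟩ := m
  obtain ⟨α, hα⟩ := (joinedIn_univ.2 (PathConnectedSpace.joined x (g x))).exists_arc (hno x).symm
  -- points of the arc from `x` to `g x` close to `x` are larger than `x` and still satisfy
  -- `x' ≤ g x'`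
  obtain ⟨U, V, hU, hV, hxU, hgV, hUV⟩ := t2_separation (hno x).symm
  have hN := pathComponentIn_mem_nhds (hV.mem_nhds hgV)
  have hev : ∀ᶠ z in 𝓝 x, z ∈ U ∧ g z ∈ pathComponentIn V (g x) :=
    (show ∀ᶠ z in 𝓝 x, z ∈ U from hU.mem_nhds hxU).and (hg.continuousAt.preimage_mem_nhds hN)
  have hcw : Tendsto α (𝓝[Icc 0 1] 0) (𝓝 x) := by
    have := hα.cont 0 (by simp)
    rwa [ContinuousWithinAt, hα.zero] at this
  have hev2 := hcw.eventually hev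
  rw [eventually_nhdsWithin_iff] at hev2
  obtain ⟨δ, hδ, hd⟩ := Metric.eventually_nhds_iff.1 hev2
  set t := min (δ / 2) (1 / 2) with ht
  have ht0 : 0 < t := by positivity
  have htδ : t < δ := (min_le_left _ _).trans_lt (by linarith)
  have ht1 : t < 1 := (min_le_right _ _).trans_lt (by norm_num)
  obtain ⟨k1, k2⟩ := hd (y := t) (by rw [Real.dist_eq, sub_zero, abs_of_pos ht0]; exact htδ)
    ⟨ht0.le, ht1.le⟩
  have htV : α t ∉ V := disjoint_left.1 hUV k1
  have hVt : V ⊆ univ \ {α t} := fun v hv => ⟨trivial, fun h => htV (h ▸ hv)⟩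
  have hxt : x ≠ α t := by
    rw [← hα.zero]
    intro h
    have := hα.inj (by simp) ⟨ht0.le, ht1.le⟩ h
    linarith
  have hle1 : SepLE x₀ x (α t) := by
    by_cases hx0 : x = x₀
    · exact Or.inl hx0
    refine Or.inr (Or.inr fun h => ?_)
    rcases hx with hx | hx | hx
    · exact hx0 hx
    · exact hno x hx.symm
    · apply hx
      apply h.trans
      have := hα.joinedIn (T := univ \ {x}) ht0.le ht1.le le_rfl (fun s hs => ⟨trivial, fun h => by
        have := hα.inj ⟨ht0.le.trans hs.1, hs.2⟩ (by simp : (0:ℝ) ∈ Icc (0:ℝ) 1)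
          (h.trans hα.zero.symm)
        linarith [hs.1]⟩)
      rwa [hα.one] at this
  have hle2 : SepLE x₀ (α t) (g (α t)) := by
    by_cases hx0 : α t = x₀
    · exact Or.inl hx0
    refine Or.inr (Or.inr fun h => ?_)
    have h1 : JoinedIn (univ \ {α t}) x₀ (g x) := h.trans (JoinedIn.mono k2.symm hVt)
    have h2 : JoinedIn (univ \ {α t}) x₀ x := by
      rcases hle1 with h3 | h3 | h3
      · rw [h3]
        exact JoinedIn.refl ⟨trivial, Ne.symm hx0⟩
      · exact absurd h3 hxt
      · exact joinedIn_of_separates (PathConnectedSpace.joined _ _) (Ne.symm hx0) hxt.symm h3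
    exact hα.not_joinedIn hY ⟨ht0, ht1⟩ (h2.symm.trans h1)
  exact hxt (hle1.antisymm (hm ⟨α t, hle2⟩ hle1))
end FPP

/-! ### Minimal maps -/

/-- A minimal self-map of a space: continuous, and every nonempty closed forward invariant set is
the whole space. -/
structure MinMap {Z : Type*} [TopologicalSpace Z] (g : Z → Z) : Prop where
  cont : Continuous g
  eq_univ : ∀ N : Set Z, IsClosed N → N.Nonempty → MapsTo g N N → N = univ

namespace MinMap
variable {Z : Type*} [TopologicalSpace Z] {g : Z → Z}

theorem surjective [CompactSpace Z] [T2Space Z] (h : MinMap g) : Function.Surjective g := by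
  intro y
  have h1 : range g = univ := h.eq_univ _ (isCompact_range h.cont).isClosed ⟨g y, y, rfl⟩
    (fun x _ => ⟨x, rfl⟩)
  exact (h1 ▸ mem_univ y : y ∈ range g)

theorem exists_iterate_mem (h : MinMap g) (x : Z) {V : Set Z} (hV : IsOpen V) (hne : V.Nonempty) :
    ∃ n, g^[n] x ∈ V := by
  by_contra! hno
  have h1 : {y | ∀ n, g^[n] y ∈ Vᶜ} = univ := by
    refine h.eq_univ _ ?_ ⟨x, hno⟩ (fun y hy n => ?_)
    · simp only [ofPred_forall]
      exact isClosed_iInter fun n => hV.isClosed_compl.preimage (h.cont.iterate n)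
    · have := hy (n + 1)
      rwa [Function.iterate_succ_apply] at this
  obtain ⟨v, hv⟩ := hne
  have : v ∈ {y | ∀ n, g^[n] y ∈ Vᶜ} := h1 ▸ mem_univ v
  exact this 0 hv

theorem exists_iterate_mem' (h : MinMap g) (x : Z) {V : Set Z} (hV : IsOpen V) (hne : V.Nonempty) :
    ∃ n, 0 < n ∧ g^[n] x ∈ V := by
  obtain ⟨n, hn⟩ := h.exists_iterate_mem (g x) hV hne
  exact ⟨n + 1, n.succ_pos, by rwa [Function.iterate_succ_apply]⟩

/-- Minimal maps are irreducible. -/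
theorem irreducible [CompactSpace Z] (h : MinMap g) {A : Set Z} (hA : IsClosed A)
    (himg : g '' A = univ) : A = univ := by
  by_contra hne
  have hU : (Aᶜ).Nonempty := nonempty_compl.2 hne
  have hs : ∀ z, ∃ y ∈ A, g y = z := fun z => (himg ▸ mem_univ z : z ∈ g '' A)
  choose s hsA hsg using hs
  obtain ⟨t, ht⟩ := isCompact_univ.elim_finite_subcover (fun n => g^[n] ⁻¹' Aᶜ)
    (fun n => hA.isOpen_compl.preimage (h.cont.iterate n))
    (fun x _ => mem_iUnion.2 (h.exists_iterate_mem x hA.isOpen_compl hU))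
  obtain ⟨m, hm⟩ := t.bddAbove
  obtain ⟨z, -⟩ := hU
  have key : ∀ k n, g^[k] (s^[k + n] z) = s^[n] z := by
    intro k
    induction k with
    | zero => intro n; simp
    | succ k ih =>
      intro n
      rw [Function.iterate_succ_apply, show k + 1 + n = (k + n) + 1 by ring,
        Function.iterate_succ_apply' s, hsg, ih]
  obtain ⟨k, hk, hk2⟩ := mem_iUnion₂.1 (ht (mem_univ (s^[m + 1] z)))
  have hkm : k ≤ m := hm hk
  have := key k (m - k + 1)
  rw [show k + (m - k + 1) = m + 1 by omega] at this
  apply hk2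
  show g^[k] (s^[m + 1] z) ∈ A
  rw [this, Function.iterate_succ_apply']
  exact hsA _

/-- Minimal maps are feebly open: images of nonempty open sets have interior points. -/
theorem interior_image_nonempty [CompactSpace Z] [T2Space Z] (h : MinMap g) {U : Set Z}
    (hU : IsOpen U) (hne : U.Nonempty) : (interior (g '' U)).Nonempty := by
  have h1 : g '' Uᶜ ≠ univ := fun h2 => by
    have := h.irreducible hU.isClosed_compl h2
    obtain ⟨u, hu⟩ := hne
    exact (this ▸ mem_univ u : u ∈ Uᶜ) hu
  have h2 : IsClosed (g '' Uᶜ) := (hU.isClosed_compl.isCompact.image h.cont).isClosed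
  refine (nonempty_compl.2 h1).mono (interior_maximal ?_ h2.isOpen_compl)
  intro y hy
  obtain ⟨x, rfl⟩ := h.surjective y
  exact ⟨x, by_contra fun hx => hy ⟨x, hx, rfl⟩, rfl⟩

theorem finite_of_periodic [T1Space Z] (h : MinMap g) {n : ℕ} (hn : 0 < n) {x : Z}
    (hx : g^[n] x = x) : Finite Z := by
  have hfin : ((fun k => g^[k] x) '' Iio n).Finite := (finite_Iio n).image _
  have h1 := h.eq_univ _ hfin.isClosed ⟨_, 0, hn, rfl⟩ (by
    rintro _ ⟨k, hk, rfl⟩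
    have hk' : k < n := hk
    show g (g^[k] x) ∈ _
    rw [← Function.iterate_succ_apply' g]
    rcases Nat.lt_or_ge (k + 1) n with h2 | h2
    · exact ⟨k + 1, h2, rfl⟩
    · have : k + 1 = n := by omega
      exact ⟨0, hn, by simp [this, hx]⟩)
  rw [h1] at hfin
  exact finite_univ_iff.1 hfin

theorem noPeriodic [T1Space Z] [Infinite Z] (h : MinMap g) {n : ℕ} (hn : 0 < n) (x : Z) :
    g^[n] x ≠ x := fun hx => by
  have := h.finite_of_periodic hn hx
  exact not_finite Z

theorem noIsolated [T1Space Z] [Infinite Z] (h : MinMap g) : NoIsolatedPoints Z := by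
  intro y hy
  obtain ⟨n, hn, h1⟩ := h.exists_iterate_mem' y hy (singleton_nonempty y)
  exact h.noPeriodic hn y h1

end MinMap

/-- A path component of the complement of a point, together with that point, contains a circle
if the space is a Peano continuum with a minimal map. -/
theorem MinMap.not_noCircle_component {K : Type*} [MetricSpace K] [CompactSpace K]
    [PathConnectedSpace K] [LocallyPathConnectedSpace K] [Infinite K] {h : K → K} (hh : MinMap h)
    {z a : K} (haz : a ≠ z) : ¬ NoCircle (insert z (pathComponentIn (univ \ {z}) a)) := by
  intro hno
  have hzo : IsOpen (univ \ {z} : Set K) := isOpen_univ.sdiff isClosed_singleton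
  set D := pathComponentIn (univ \ {z}) a with hD
  have hDo : IsOpen D := hzo.pathComponentIn a
  have haD : a ∈ D := mem_pathComponentIn_self ⟨trivial, haz⟩
  have hzD : z ∉ D := fun hz => (pathComponentIn_subset hz).2 rfl
  -- `insert z D` is a retract of the space under the map `r` collapsing the complement of `D`
  -- to `z`; it is a dendrite if it contains no circle
  have hYc : IsClosed (insert z D) := by
    rw [← isOpen_compl_iff, isOpen_iff_mem_nhds]
    intro x hx
    have hx' : x ≠ z ∧ x ∉ D := by simpa [not_or] using hx
    filter_upwards [(hzo.pathComponentIn x).mem_nhds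
      (mem_pathComponentIn_self ⟨trivial, hx'.1⟩)] with y hy hyY
    rcases hyY with rfl | hyD
    · exact (pathComponentIn_subset hy).2 rfl
    · exact hx'.2 (JoinedIn.trans hyD (JoinedIn.symm hy))
  classical
  let r : K → ↥(insert z D) := fun x => if hx : x ∈ D then ⟨x, Or.inr hx⟩ else ⟨z, Or.inl rfl⟩
  have hrc : Continuous r := by
    rw [Topology.IsInducing.subtypeVal.continuous_iff, ← continuousOn_univ]
    have hu : (univ : Set K) = insert z D ∪ Dᶜ := by
      ext x
      by_cases hx : x ∈ D <;> simp [hx]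
    rw [hu]
    refine ContinuousOn.union_of_isClosed ?_ ?_ hYc hDo.isClosed_compl
    · refine continuousOn_id.congr fun x hx => ?_
      rcases hx with rfl | hx
      · simp [r, hzD]
      · simp [r, hx]
    · refine (continuousOn_const (c := z)).congr fun x hx => ?_
      have hx' : x ∉ D := hx
      simp [r, hx']
  have hrs : Function.Surjective r := by
    rintro ⟨x, rfl | hx⟩
    · exact ⟨x, by simp [r, hzD]⟩
    · exact ⟨x, by simp [r, hx]⟩
  have hq : IsQuotientMap r := hrc.isClosedMap.isQuotientMap hrc hrs
  have := hq.locallyPathConnectedSpace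
  have := hrs.pathConnectedSpace hrc
  have : CompactSpace ↥(insert z D) := isCompact_iff_compactSpace.1 hYc.isCompact
  have hnc : NoCircle (univ : Set ↥(insert z D)) := fun C _ hC =>
    hno _ (by rintro _ ⟨y, -, rfl⟩; exact y.2) (hC.image IsEmbedding.subtypeVal)
  -- a fixed point of `r ∘ h^[n]`, with `h^[n] z ∈ D`, is a periodic point of `h`
  obtain ⟨n, hn, hnD⟩ := hh.exists_iterate_mem' z hDo ⟨a, haD⟩
  obtain ⟨⟨p, hp⟩, hfix⟩ := exists_fixedPoint hnc
    (g := fun y => r (h^[n] y)) (hrc.comp ((hh.cont.iterate n).comp continuous_subtype_val))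
  have hfix' : (r (h^[n] p) : K) = p := congrArg Subtype.val hfix
  by_cases hpD : h^[n] p ∈ D
  · simp only [r, hpD, dif_pos] at hfix'
    exact hh.noPeriodic hn p hfix'
  · simp only [r, hpD, dif_neg, not_false_iff] at hfix'
    exact hpD (hfix' ▸ hnD)

/-! ### Minimal maps on Peano continua with finitely many circles -/

/-- `p` is a branch point of `W`: it splits `W` into at least three path components. -/
def Br {Y : Type*} [TopologicalSpace Y] (W : Set Y) (p : Y) : Prop :=
  ∃ a ∈ W \ {p}, ∃ b ∈ W \ {p}, ∃ c ∈ W \ {p}, ¬ JoinedIn (W \ {p}) a b ∧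
    ¬ JoinedIn (W \ {p}) a c ∧ ¬ JoinedIn (W \ {p}) b c

theorem exists_first {Y : Type*} [TopologicalSpace Y] {α : ℝ → Y} {a b : ℝ}
    (hα : ContinuousOn α (Icc a b)) {C : Set Y} (hC : IsClosed C) (h : ∃ t ∈ Icc a b, α t ∈ C) :
    ∃ t ∈ Icc a b, α t ∈ C ∧ ∀ s ∈ Icc a b, s < t → α s ∉ C := by
  have hcl : IsClosed (Icc a b ∩ α ⁻¹' C) := hα.preimage_isClosed_of_isClosed isClosed_Icc hC
  obtain ⟨t, ht, hl⟩ := (isCompact_Icc.of_isClosed_subset hcl inter_subset_left).exists_isLeast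
    (show (Icc a b ∩ α ⁻¹' C).Nonempty from let ⟨t, h1, h2⟩ := h; ⟨t, h1, h2⟩)
  exact ⟨t, ht.1, ht.2, fun s hs hst hsC => (hl ⟨hs, hsC⟩).not_gt hst⟩

/-- A path leaving an open set crosses the boundary. -/
theorem JoinedIn.first_exit {Y : Type*} [TopologicalSpace Y] {S U : Set Y} {a d : Y}
    (h : JoinedIn S a d) (hU : IsOpen U) (ha : a ∈ U) (hd : d ∉ U) :
    ∃ y ∈ frontier U, JoinedIn (closure U ∩ S) a y := by
  obtain ⟨γ, hγ⟩ := h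
  have hext : ContinuousOn γ.extend (Icc 0 1) := γ.continuous_extend.continuousOn
  obtain ⟨t, ht, htU, hlt⟩ := exists_first hext hU.isClosed_compl ⟨1, by simp, by simpa using hd⟩
  have hin : ∀ s ∈ Icc (0:ℝ) 1, s < t → γ.extend s ∈ U := fun s hs hst =>
    not_not.1 (hlt s hs hst)
  have ht0 : 0 < t := by
    rcases ht.1.eq_or_lt with h | h
    · subst h
      simp at htU
      exact absurd ha htU
    · exact h
  have hcl : γ.extend t ∈ closure U := by
    have h1 : t ∈ closure (Ico 0 t) := by
      rw [closure_Ico ht0.ne]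
      exact ⟨ht.1, le_rfl⟩
    have h2 := γ.continuous_extend.continuousAt.continuousWithinAt.mem_closure_image h1
    refine closure_mono ?_ h2
    rintro _ ⟨s, hs, rfl⟩
    exact hin s ⟨hs.1, hs.2.le.trans ht.2⟩ hs.2
  refine ⟨γ.extend t, ⟨hcl, by rwa [hU.interior_eq]⟩, ?_⟩
  have := joinedIn_of_continuousOn (S := closure U ∩ S) (hext.mono (Icc_subset_Icc_right ht.2))
    (p := 0) (q := t) ⟨le_rfl, ht.1⟩ ⟨ht.1, le_rfl⟩ (fun s hs => by
      have hs' : s ∈ Icc (0:ℝ) 1 := ⟨hs.1, hs.2.trans ht.2⟩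
      refine ⟨?_, ?_⟩
      · rcases hs.2.eq_or_lt with h | h
        · rw [h]; exact hcl
        · exact subset_closure (hin s hs' h)
      · rw [Path.extend_apply γ hs']
        exact hγ _)
  rwa [Path.extend_zero] at this

/-- An arc in an open circle-free path connected set none of whose inner points is a branch point
has open interior. -/
theorem ArcFrom.isOpen_image {Y : Type*} [MetricSpace Y] [LocallyPathConnectedSpace Y] {W : Set Y}
    (hW : IsOpen W) (hWc : NoCircle W) (hWp : IsPathConnected W) {x y : Y} {α : ℝ → Y}
    (hα : ArcFrom W x y α) (hbr : ∀ t ∈ Ioo (0:ℝ) 1, ¬ Br W (α t)) :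
    IsOpen (α '' Ioo 0 1) := by
  rw [isOpen_iff_mem_nhds]
  rintro _ ⟨t, ht, rfl⟩
  have ht' : t ∈ Icc (0:ℝ) 1 := Ioo_subset_Icc_self ht
  have z0 : (0:ℝ) ∈ Icc (0:ℝ) 1 := by simp
  have z1 : (1:ℝ) ∈ Icc (0:ℝ) 1 := by simp
  have htx : α t ≠ x := by
    rw [← hα.zero]
    intro h
    exact ht.1.ne' (hα.inj ht' z0 h)
  have hty : α t ≠ y := by
    rw [← hα.one]
    intro h
    exact ht.2.ne (hα.inj ht' z1 h)
  have hpW := hα.sub t ht'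
  have hn : ∀ z, α t ≠ z → pathComponentIn (W \ {z}) (α t) ∈ 𝓝 (α t) := fun z hz =>
    ((hW.sdiff isClosed_singleton).pathComponentIn _).mem_nhds
      (mem_pathComponentIn_self ⟨hpW, hz⟩)
  filter_upwards [hn x htx, hn y hty] with q hqx hqy
  have hqx' := pathComponentIn_subset hqx
  have hqy' := pathComponentIn_subset hqy
  by_contra hq
  have hqα : ∀ s ∈ Icc (0:ℝ) 1, α s ≠ q := by
    rintro s hs rfl
    rcases hs.1.eq_or_lt with h | h
    · exact hqx'.2 (by rw [← h]; exact hα.zero)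
    rcases hs.2.eq_or_lt with h' | h'
    · exact hqy'.2 (by rw [h']; exact hα.one)
    · exact hq ⟨s, ⟨h, h'⟩, rfl⟩
  obtain ⟨β, hβ⟩ := (hWp.joinedIn q hqx'.1 (α t) hpW).exists_arc (hqα t ht').symm
  have hcl : IsClosed (α '' Icc 0 1) := (isCompact_Icc.image_of_continuousOn hα.cont).isClosed
  obtain ⟨u, hu, ⟨s, hs, hsu⟩, hlt⟩ := exists_first hβ.cont hcl
    ⟨1, z1, by rw [hβ.one]; exact ⟨t, ht', rfl⟩⟩
  -- the initial piece of `β` meets the arc `α` only in `α s`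
  have key : ∀ A : Set ℝ, A ⊆ Icc 0 1 → (β '' Icc 0 u) ∩ (α '' A) ⊆ {α s} := by
    rintro A hA _ ⟨⟨v, hv, rfl⟩, ⟨w, hw, hwv⟩⟩
    rcases hv.2.eq_or_lt with h | h
    · rw [h, hsu]; rfl
    · exact absurd ⟨w, hA hw, hwv⟩ (hlt v ⟨hv.1, hv.2.trans hu.2⟩ h)
  have hβS : JoinedIn (β '' Icc 0 u) q (α s) := by
    rw [hsu, ← hβ.zero]
    exact hβ.joinedIn le_rfl hu.1 hu.2 fun v hv => mem_image_of_mem _ hv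
  have hβW : β '' Icc 0 u ⊆ W := by
    rintro _ ⟨v, hv, rfl⟩
    exact hβ.sub v ⟨hv.1, hv.2.trans hu.2⟩
  have main : ∀ a b, 0 ≤ a → a ≤ b → b ≤ 1 → ∀ v w, (v = a ∧ w = b ∨ v = b ∧ w = a) → α v = α s →
      α w ≠ α s → ¬ JoinedIn (W \ {α s}) q (α w) := by
    intro a b ha hab hb v w hvw hv hw
    have hsub : Icc a b ⊆ Icc 0 1 := Icc_subset_Icc ha hb
    refine not_joinedIn_of_inter (T := α '' Icc a b) hWc hβW ?_ (key _ hsub) hβS ?_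
      (hqα s hs).symm hw
    · rintro _ ⟨v, hv, rfl⟩
      exact hα.sub v (hsub hv)
    · rw [← hv]
      rcases hvw with ⟨rfl, rfl⟩ | ⟨rfl, rfl⟩
      · exact hα.joinedIn ha hab hb fun v hv => mem_image_of_mem _ hv
      · exact (hα.joinedIn ha hab hb fun v hv => mem_image_of_mem _ hv).symm
  rcases hs.1.eq_or_lt with h | h
  · subst h
    rw [hα.zero] at main
    exact main 0 t le_rfl ht.1.le ht.2.le 0 t (Or.inl ⟨rfl, rfl⟩) hα.zero htx
      (JoinedIn.symm hqx)
  rcases hs.2.eq_or_lt with h' | h'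
  · subst h'
    rw [hα.one] at main
    exact main t 1 ht.1.le ht.2.le le_rfl 1 t (Or.inr ⟨rfl, rfl⟩) hα.one hty
      (JoinedIn.symm hqy)
  have hx : x ≠ α s := by
    rw [← hα.zero]
    intro h2
    exact h.ne (hα.inj z0 hs h2)
  have hy : y ≠ α s := by
    rw [← hα.one]
    intro h2
    exact h'.ne' (hα.inj z1 hs h2)
  have m1 := main 0 s le_rfl hs.1 hs.2 s 0 (Or.inr ⟨rfl, rfl⟩) rfl (by rwa [hα.zero])
  have m2 := main s 1 hs.1 hs.2 le_rfl s 1 (Or.inl ⟨rfl, rfl⟩) rfl (by rwa [hα.one])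
  rw [hα.zero] at m1
  rw [hα.one] at m2
  have hxW : x ∈ W := hα.zero ▸ hα.sub 0 z0
  have hyW : y ∈ W := hα.one ▸ hα.sub 1 z1
  exact hbr s ⟨h, h'⟩ ⟨q, ⟨hqx'.1, (hqα s hs).symm⟩, x, ⟨hxW, hx⟩, y, ⟨hyW, hy⟩, m1, m2,
    hα.not_joinedIn hWc ⟨h, h'⟩⟩

section
variable {K : Type*} [MetricSpace K] [CompactSpace K] [PathConnectedSpace K]
  [LocallyPathConnectedSpace K] [Infinite K] {h : K → K}

/-- Every path component of the complement of `p` contains a point of a circle outside the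
circle-free set `W`, so from `a` one can reach the boundary of `U` off `p`. -/
theorem MinMap.exists_exit (hh : MinMap h) {U W : Set K} (hU : IsOpen U) (hUW : closure U ⊆ W)
    (hWc : NoCircle W) {a p : K} (ha : a ∈ U) (hp : p ∈ W) (hap : a ≠ p) :
    ∃ y ∈ frontier U, JoinedIn (W \ {p}) a y := by
  have h1 := hh.not_noCircle_component hap
  have h2 : ¬ insert p (pathComponentIn (univ \ {p}) a) ⊆ W := fun h => h1 (hWc.mono h)
  obtain ⟨d, hd, hdW⟩ := not_subset.1 h2
  rcases hd with rfl | hd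
  · exact absurd hp hdW
  obtain ⟨y, hy, hj⟩ := JoinedIn.first_exit hd hU ha (fun h => hdW (hUW (subset_closure h)))
  exact ⟨y, hy, hj.mono fun z hz => ⟨hUW hz.1, hz.2.2⟩⟩

/-- Among three pairwise separated points one is separated from two given points. -/
theorem Br.exists_third {Y : Type*} [TopologicalSpace Y] {W : Set Y} {p : Y} (hb : Br W p)
    (x y : Y) : ∃ c ∈ W \ {p}, ¬ JoinedIn (W \ {p}) c x ∧ ¬ JoinedIn (W \ {p}) c y := by
  obtain ⟨a, ha, b, hb, c, hc, hab, hac, hbc⟩ := hb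
  by_contra! hno
  have key : ∀ u v w, JoinedIn (W \ {p}) u w → JoinedIn (W \ {p}) v w → JoinedIn (W \ {p}) u v :=
    fun u v w h1 h2 => h1.trans h2.symm
  by_cases h1 : JoinedIn (W \ {p}) a x <;> by_cases h2 : JoinedIn (W \ {p}) b x <;>
    by_cases h3 : JoinedIn (W \ {p}) c x
  all_goals first
    | exact hab (key _ _ _ ‹JoinedIn (W \ {p}) a x› ‹JoinedIn (W \ {p}) b x›)
    | exact hac (key _ _ _ ‹JoinedIn (W \ {p}) a x› ‹JoinedIn (W \ {p}) c x›)
    | exact hbc (key _ _ _ ‹JoinedIn (W \ {p}) b x› ‹JoinedIn (W \ {p}) c x›)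
    | exact hab (key _ _ _ (hno a ha ‹_›) (hno b hb ‹_›))
    | exact hac (key _ _ _ (hno a ha ‹_›) (hno c hc ‹_›))
    | exact hbc (key _ _ _ (hno b hb ‹_›) (hno c hc ‹_›))

/-- A branch point `p` in `U` has a branch that reaches the boundary of `U` and contains neither of
two given points `x` and `y`. -/
theorem MinMap.exists_branch_exit (hh : MinMap h) {U W : Set K} (hU : IsOpen U)
    (hUW : closure U ⊆ W) (hWc : NoCircle W) (hWp : IsPathConnected W) {p : K} (hp : p ∈ U)
    (hb : Br W p) (x y : K) :
    ∃ e ∈ frontier U, ¬ JoinedIn (W \ {p}) e x ∧ ¬ JoinedIn (W \ {p}) e y := by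
  obtain ⟨c, hc, hcx, hcy⟩ := hb.exists_third x y
  have hpW : p ∈ W := hUW (subset_closure hp)
  have hpc : p ≠ c := fun h => hc.2 h.symm
  obtain ⟨β, hβ⟩ := (hWp.joinedIn p hpW c hc.1).exists_arc hpc
  have hcw : Tendsto β (𝓝[Icc 0 1] 0) (𝓝 p) := by
    have := hβ.cont 0 (by simp)
    rwa [ContinuousWithinAt, hβ.zero] at this
  have hev := hcw.eventually (hU.mem_nhds hp)
  rw [eventually_nhdsWithin_iff] at hev
  obtain ⟨δ, hδ, hd⟩ := Metric.eventually_nhds_iff.1 hev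
  set t := min (δ / 2) (1 / 2) with ht
  have ht0 : 0 < t := by positivity
  have htδ : t < δ := (min_le_left _ _).trans_lt (by linarith)
  have ht1 : t < 1 := (min_le_right _ _).trans_lt (by norm_num)
  have hUt : β t ∈ U := hd (y := t)
    (by rw [Real.dist_eq, sub_zero, abs_of_pos ht0]; exact htδ) ⟨ht0.le, ht1.le⟩
  have hne : ∀ s ∈ Icc t 1, β s ≠ p := by
    intro s hs h
    have := hβ.inj ⟨ht0.le.trans hs.1, hs.2⟩ (by simp : (0:ℝ) ∈ Icc (0:ℝ) 1)
      (h.trans hβ.zero.symm)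
    linarith [hs.1]
  have hj : JoinedIn (W \ {p}) (β t) c := by
    have := hβ.joinedIn (T := W \ {p}) ht0.le ht1.le le_rfl
      (fun s hs => ⟨hβ.sub s ⟨ht0.le.trans hs.1, hs.2⟩, hne s hs⟩)
    rwa [hβ.one] at this
  obtain ⟨e, he, hje⟩ := hh.exists_exit hU hUW hWc hUt hpW (hne t ⟨le_rfl, ht1.le⟩)
  exact ⟨e, he, fun h => hcx (hj.symm.trans (hje.trans h)),
    fun h => hcy (hj.symm.trans (hje.trans h))⟩

end

/-- `α` parametrises an arc whose interior is open in the space. -/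
structure OpenArc {Y : Type*} [TopologicalSpace Y] (α : ℝ → Y) : Prop where
  cont : ContinuousOn α (Icc 0 1)
  inj : InjOn α (Icc 0 1)
  isOpen : IsOpen (α '' Ioo 0 1)

namespace OpenArc
variable {Y : Type*} [TopologicalSpace Y] [T2Space Y] {α : ℝ → Y}

theorem image_open (h : OpenArc α) {V : Set ℝ} (hV : IsOpen V) : IsOpen (α '' (V ∩ Ioo 0 1)) := by
  have : α '' (V ∩ Ioo 0 1) = α '' Ioo 0 1 \ α '' (Icc 0 1 \ V) := by
    ext y
    constructor
    · rintro ⟨t, ⟨htV, ht⟩, rfl⟩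
      refine ⟨⟨t, ht, rfl⟩, ?_⟩
      rintro ⟨s, hs, hst⟩
      rw [h.inj hs.1 (Ioo_subset_Icc_self ht) hst] at hs
      exact hs.2 htV
    · rintro ⟨⟨t, ht, rfl⟩, h2⟩
      exact ⟨t, ⟨by_contra fun hV => h2 ⟨t, ⟨Ioo_subset_Icc_self ht, hV⟩, rfl⟩, ht⟩, rfl⟩
  rw [this]
  have hc : IsCompact (Icc (0:ℝ) 1 \ V) := isCompact_Icc.diff hV
  exact h.isOpen.sdiff (hc.image_of_continuousOn (h.cont.mono sdiff_subset)).isClosed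

/-- The inverse of the parametrisation. -/
noncomputable def inv (α : ℝ → Y) : Y → ℝ := Function.invFunOn α (Icc 0 1)

theorem inv_apply (h : OpenArc α) {t : ℝ} (ht : t ∈ Icc (0:ℝ) 1) : inv α (α t) = t :=
  h.inj.leftInvOn_invFunOn ht

theorem continuousOn_inv (h : OpenArc α) : ContinuousOn (inv α) (α '' Ioo 0 1) := by
  rintro _ ⟨t, ht, rfl⟩
  refine ContinuousAt.continuousWithinAt ?_
  rw [ContinuousAt, h.inv_apply (Ioo_subset_Icc_self ht)]
  intro V hV
  obtain ⟨V', hV', hVo, htV⟩ := mem_nhds_iff.1 hV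
  rw [Filter.mem_map]
  refine Filter.mem_of_superset ((h.image_open hVo).mem_nhds ⟨t, ⟨htV, ht⟩, rfl⟩) ?_
  rintro _ ⟨s, hs, rfl⟩
  show inv α (α s) ∈ V
  rw [h.inv_apply (Ioo_subset_Icc_self hs.2)]
  exact hV' hs.1

end OpenArc

/-- The set of interior points of open arcs. -/
def arcPoints (Y : Type*) [TopologicalSpace Y] : Set Y :=
  {x | ∃ α : ℝ → Y, OpenArc α ∧ x ∈ α '' Ioo 0 1}

theorem isOpen_arcPoints (Y : Type*) [TopologicalSpace Y] : IsOpen (arcPoints Y) := by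
  rw [isOpen_iff_mem_nhds]
  rintro x ⟨α, hα, hx⟩
  exact Filter.mem_of_superset (hα.isOpen.mem_nhds hx) fun y hy => ⟨α, hα, hy⟩

theorem ArcFrom.openArc {Y : Type*} [MetricSpace Y] [LocallyPathConnectedSpace Y] {W : Set Y}
    (hW : IsOpen W) (hWc : NoCircle W) (hWp : IsPathConnected W) {x y : Y} {α : ℝ → Y}
    (hα : ArcFrom W x y α) (hbr : ∀ t ∈ Ioo (0:ℝ) 1, ¬ Br W (α t)) : OpenArc α :=
  ⟨hα.cont, hα.inj, hα.isOpen_image hW hWc hWp hbr⟩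

/-- The image of a connected set adhering to `p` under a real function contains a one-sided
punctured neighbourhood of the value at `p`. -/
theorem one_sided {Y : Type*} [TopologicalSpace Y] {f : Y → ℝ} {C : Set Y} {p : Y}
    (hC : IsPreconnected C) (hf : ContinuousOn f C) (hp : f p ∈ closure (f '' C))
    (hne : ∃ c ∈ C, f c ≠ f p) :
    (∃ δ > 0, Ioo (f p) (f p + δ) ⊆ f '' C) ∨ (∃ δ > 0, Ioo (f p - δ) (f p) ⊆ f '' C) := by
  have hoc := (hC.image f hf).ordConnected
  obtain ⟨c, hc, hcp⟩ := hne
  rcases hcp.lt_or_gt with h | h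
  · right
    refine ⟨f p - f c, by linarith, fun s hs => ?_⟩
    obtain ⟨w, hw, hwC⟩ := mem_closure_iff.1 hp (Ioi s) isOpen_Ioi hs.2
    refine hoc.out ⟨c, hc, rfl⟩ hwC ⟨?_, le_of_lt hw⟩
    linarith [hs.1]
  · left
    refine ⟨f c - f p, by linarith, fun s hs => ?_⟩
    obtain ⟨w, hw, hwC⟩ := mem_closure_iff.1 hp (Iio s) isOpen_Iio hs.1
    refine hoc.out hwC ⟨c, hc, rfl⟩ ⟨le_of_lt hw, ?_⟩
    linarith [hs.2]

section
variable {K : Type*} [MetricSpace K] [CompactSpace K] [PathConnectedSpace K]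
  [LocallyPathConnectedSpace K] [Infinite K] {h : K → K}

theorem MinMap.exists_ne_mem (hh : MinMap h) {U : Set K} (hU : IsOpen U) {x : K} (hx : x ∈ U) :
    ∃ y ∈ U, x ≠ y := by
  by_contra! hno
  have : U = {x} := by
    ext y
    exact ⟨fun hy => (hno y hy).symm, fun hy => by rw [mem_singleton_iff.1 hy]; exact hx⟩
  exact hh.noIsolated x (this ▸ hU)

/-- Some arc has open interior: otherwise branch points are dense on every arc, infinitely many
branches reach the finite boundary of a neighbourhood, and two of them end at the same point. -/
theorem MinMap.arcPoints_nonempty (hh : MinMap h) (hK : FinCirc K) : (arcPoints K).Nonempty := by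
  obtain ⟨x₀⟩ : Nonempty K := inferInstance
  obtain ⟨W, hW, hxW, -, hWc, hWp⟩ := exists_circleFree_nhd hK x₀ isOpen_univ trivial
  obtain ⟨U, hU, hxU, hUW, hfin⟩ := hK.rimFinite x₀ W hW hxW
  obtain ⟨U₀, hU₀, hxU₀, hU₀U, -, hU₀p⟩ := exists_circleFree_nhd hK x₀ hU hxU
  obtain ⟨y, hy, hxy⟩ := hh.exists_ne_mem hU₀ hxU₀
  obtain ⟨α, hα⟩ := (hU₀p.joinedIn x₀ hxU₀ y hy).exists_arc hxy
  have hUW' : U ⊆ W := subset_closure.trans hUW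
  have hαW : ArcFrom W x₀ y α := hα.mono (hU₀U.trans hUW')
  set P := {u ∈ Ioo (0:ℝ) 1 | Br W (α u)} with hP
  by_cases hPf : P.Finite
  · -- a subinterval without branch points
    obtain ⟨a, b, ha, hab, hb, hno⟩ : ∃ a b : ℝ, 0 ≤ a ∧ a < b ∧ b ≤ 1 ∧ ∀ u ∈ Ioo a b, u ∉ P := by
      have h1 : (Ioo (0:ℝ) 1 \ P).Nonempty :=
        ((Ioo_infinite (zero_lt_one (α := ℝ))).sdiff hPf).nonempty
      obtain ⟨u, hu⟩ := h1
      have ho : IsOpen (Ioo (0:ℝ) 1 \ P) := isOpen_Ioo.sdiff hPf.isClosed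
      obtain ⟨a, b, hab, hs⟩ := mem_nhds_iff_exists_Ioo_subset.1 (ho.mem_nhds hu)
      have hlt : a < b := hab.1.trans hab.2
      have h2 : Ioo a b ⊆ Ioo 0 1 := fun z hz => (hs hz).1
      have h3 := (Ioo_subset_Ioo_iff hlt).1 h2
      exact ⟨a, b, h3.1, hlt, h3.2, fun z hz => (hs hz).2⟩
    have hβ := hαW.subarc ha hab hb (T := W)
      (fun u hu => hαW.sub u ⟨ha.trans hu.1, hu.2.trans hb⟩)
    have hO := hβ.openArc hW hWc hWp (fun t ht hbr => by
      have hmem : a + t * (b - a) ∈ Ioo a b := ⟨by nlinarith [ht.1], by nlinarith [ht.2]⟩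
      exact hno _ hmem ⟨⟨ha.trans_lt hmem.1, hmem.2.trans_le hb⟩, hbr⟩)
    exact ⟨_, _, hO, 1 / 2, by norm_num, rfl⟩
  · exfalso
    have hex : ∀ u ∈ P, ∃ e ∈ frontier U, ¬ JoinedIn (W \ {α u}) e x₀ ∧
        ¬ JoinedIn (W \ {α u}) e y := fun u hu =>
      hh.exists_branch_exit hU hUW hWc hWp
        (hU₀U (hα.sub u (Ioo_subset_Icc_self hu.1))) hu.2 x₀ y
    choose! e he hex hey using hex
    -- A path from the common end of two branches meets the arc first at some `α s`; this point must be
    -- the base point of each of the two branches.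
    obtain ⟨u, hu, v, hv, huv, heq⟩ := Set.Infinite.exists_ne_map_eq_of_mapsTo hPf he hfin
    have hcl : IsClosed (α '' Icc 0 1) := (isCompact_Icc.image_of_continuousOn hα.cont).isClosed
    obtain ⟨γ, hγ⟩ := hWp.joinedIn (e u) (hUW (he u hu).1) x₀ hxW
    obtain ⟨t, ht, ⟨s, hs, hst⟩, hlt⟩ := exists_first (γ.continuous_extend.continuousOn (s := Icc 0 1))
      hcl ⟨1, by simp, 0, by simp, by simp [hα.zero]⟩
    have key : ∀ w ∈ P, e w = e u → s = w := by
      intro w hw hew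
      by_contra hsw
      have hw' := Ioo_subset_Icc_self hw.1
      have hj : JoinedIn (W \ {α w}) (e u) (α s) := by
        have := joinedIn_of_continuousOn (S := W \ {α w}) (γ.continuous_extend.continuousOn (s := Icc 0 t))
          (p := 0) (q := t) ⟨le_rfl, ht.1⟩ ⟨ht.1, le_rfl⟩ (fun r hr => by
            have hr' : r ∈ Icc (0:ℝ) 1 := ⟨hr.1, hr.2.trans ht.2⟩
            refine ⟨by rw [Path.extend_apply γ hr']; exact hγ _, fun hrw => ?_⟩
            rcases hr.2.eq_or_lt with h | h
            · rw [h, ← hst] at hrw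
              exact hsw (hα.inj hs hw' hrw)
            · exact hlt r hr' h ⟨w, hw', (mem_singleton_iff.1 hrw).symm⟩)
        rwa [Path.extend_zero, ← hst] at this
      rcases lt_or_gt_of_ne hsw with h | h
      · have := hα.joinedIn (T := W \ {α w}) le_rfl hs.1 hs.2 (fun r hr =>
          ⟨hαW.sub r ⟨hr.1, hr.2.trans hs.2⟩, fun hrw => by
            have := hα.inj ⟨hr.1, hr.2.trans hs.2⟩ hw' hrw
            linarith [hr.2]⟩)
        rw [hα.zero] at this
        exact hex w hw (hew ▸ hj.trans this.symm)
      · have := hα.joinedIn (T := W \ {α w}) hs.1 hs.2 le_rfl (fun r hr =>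
          ⟨hαW.sub r ⟨hs.1.trans hr.1, hr.2⟩, fun hrw => by
            have := hα.inj ⟨hs.1.trans hr.1, hr.2⟩ hw' hrw
            linarith [hr.1]⟩)
        rw [hα.one] at this
        exact hey w hw (hew ▸ hj.trans this)
    exact huv ((key u hu rfl).symm.trans (key v hv heq.symm))

/-- Images of disjoint sets inside an open arc cannot overlap, by irreducibility. -/
theorem MinMap.no_overlap (hh : MinMap h) {α : ℝ → K} (hα : OpenArc α) {C C' : Set K}
    (hC : IsOpen C) (hCC' : Disjoint C C') (hCI : MapsTo h C (α '' Ioo 0 1))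
    (hCI' : MapsTo h C' (α '' Ioo 0 1)) {s t : ℝ} (hst : s < t)
    (h1 : Ioo s t ⊆ (OpenArc.inv α ∘ h) '' C) (h2 : Ioo s t ⊆ (OpenArc.inv α ∘ h) '' C') :
    False := by
  have hf : ContinuousOn (OpenArc.inv α ∘ h) C :=
    hα.continuousOn_inv.comp hh.cont.continuousOn hCI
  set O := C ∩ (OpenArc.inv α ∘ h) ⁻¹' Ioo s t with hO
  have hOo : IsOpen O := hf.isOpen_inter_preimage hC isOpen_Ioo
  have hOne : O.Nonempty := by
    obtain ⟨c, hc, hcv⟩ := h1 (⟨by linarith, by linarith⟩ : (s + t) / 2 ∈ Ioo s t)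
    exact ⟨c, hc, by rw [mem_preimage, hcv]; exact ⟨by linarith, by linarith⟩⟩
  have himg : h '' Oᶜ = univ := by
    rw [eq_univ_iff_forall]
    intro z
    obtain ⟨w, rfl⟩ := hh.surjective z
    by_cases hw : w ∈ O
    · obtain ⟨c, hc, hcv⟩ := h2 hw.2
      refine ⟨c, fun h => disjoint_left.1 hCC' h.1 hc, ?_⟩
      obtain ⟨a, ha, hac⟩ := hCI' hc
      obtain ⟨b, hb, hbw⟩ := hCI hw.1
      simp only [Function.comp_apply, ← hac, ← hbw, hα.inv_apply (Ioo_subset_Icc_self ha),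
        hα.inv_apply (Ioo_subset_Icc_self hb)] at hcv
      rw [← hac, ← hbw, hcv]
    · exact ⟨w, hw, rfl⟩
  have := hh.irreducible hOo.isClosed_compl himg
  obtain ⟨o, ho⟩ := hOne
  exact (this ▸ mem_univ o : o ∈ Oᶜ) ho

/-- A set `W` that is mapped into an open arc has no branch points: in the coordinate of the arc, the
image of each of three branches at `p` would contain a one-sided neighbourhood of the image of
`p`, so the images of two of them would overlap, contradicting irreducibility. -/
theorem MinMap.not_br (hh : MinMap h) {α : ℝ → K} (hα : OpenArc α) {W : Set K} (hW : IsOpen W)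
    (hWp : IsPathConnected W) (hWI : MapsTo h W (α '' Ioo 0 1)) {p : K} (hp : p ∈ W) :
    ¬ Br W p := by
  rintro ⟨a, ha, b, hb, c, hc, hab, hac, hbc⟩
  set f := OpenArc.inv α ∘ h with hfdef
  have hf : ContinuousOn f W := hα.continuousOn_inv.comp hh.cont.continuousOn hWI
  have hsub : ∀ a, pathComponentIn (W \ {p}) a ⊆ W := fun a =>
    pathComponentIn_subset.trans sdiff_subset
  have hop : ∀ a, IsOpen (pathComponentIn (W \ {p}) a) := fun a =>
    (hW.sdiff isClosed_singleton).pathComponentIn a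
  have hside : ∀ a ∈ W \ {p}, (∃ δ > 0, Ioo (f p) (f p + δ) ⊆ f '' pathComponentIn (W \ {p}) a) ∨
      (∃ δ > 0, Ioo (f p - δ) (f p) ⊆ f '' pathComponentIn (W \ {p}) a) := by
    intro a ha
    apply one_sided (isPathConnected_pathComponentIn ha).isConnected.isPreconnected
      (hf.mono (hsub a))
    · -- `p` adheres to the component: look at the last piece of an arc from `a` to `p`
      obtain ⟨β, hβ⟩ := (hWp.joinedIn a ha.1 p hp).exists_arc ha.2
      have hmem : ∀ t ∈ Ico (0:ℝ) 1, β t ∈ pathComponentIn (W \ {p}) a := by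
        intro t ht
        have := hβ.joinedIn (T := W \ {p}) le_rfl ht.1 ht.2.le (fun r hr =>
          ⟨hβ.sub r ⟨hr.1, hr.2.trans ht.2.le⟩, fun hrp => by
            have := hβ.inj ⟨hr.1, hr.2.trans ht.2.le⟩ (by simp : (1:ℝ) ∈ Icc (0:ℝ) 1)
              (hrp.trans hβ.one.symm)
            linarith [hr.2, ht.2]⟩)
        rw [hβ.zero] at this
        exact this
      have h1 : (1:ℝ) ∈ closure (Ico (0:ℝ) 1) := by
        rw [closure_Ico zero_ne_one]
        simp
      have hcw : ContinuousWithinAt (f ∘ β) (Ico 0 1) 1 := by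
        refine ((hf.comp hβ.cont fun t ht => hβ.sub t ht) 1 (by simp)).mono Ico_subset_Icc_self
      have := hcw.mem_closure_image h1
      simp only [Function.comp_apply, hβ.one] at this
      refine closure_mono ?_ this
      rintro _ ⟨t, ht, rfl⟩
      exact ⟨β t, hmem t ht, rfl⟩
    · by_contra! hno
      obtain ⟨u, hu⟩ := hh.interior_image_nonempty (hop a) ⟨a, mem_pathComponentIn_self ha⟩
      have hval : ∀ z ∈ pathComponentIn (W \ {p}) a, h z = h p := by
        intro z hz
        have h1 := hno z hz
        obtain ⟨s, hs, hsz⟩ := hWI (hsub a hz)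
        obtain ⟨t, ht, htp⟩ := hWI hp
        simp only [hfdef, Function.comp_apply, ← hsz, ← htp,
          hα.inv_apply (Ioo_subset_Icc_self hs), hα.inv_apply (Ioo_subset_Icc_self ht)] at h1
        rw [← hsz, ← htp, h1]
      have heq : interior (h '' pathComponentIn (W \ {p}) a) = {h p} := by
        apply Subset.antisymm
        · intro z hz
          obtain ⟨w, hw, rfl⟩ := interior_subset hz
          exact hval w hw
        · rintro _ rfl
          obtain ⟨w, hw, rfl⟩ := interior_subset hu
          rwa [hval w hw] at hu
      exact hh.noIsolated (h p) (heq ▸ isOpen_interior)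
  have hov : ∀ a b, ¬ JoinedIn (W \ {p}) a b → ∀ s t, s < t →
      Ioo s t ⊆ f '' pathComponentIn (W \ {p}) a → Ioo s t ⊆ f '' pathComponentIn (W \ {p}) b →
      False := by
    intro a b hab s t hst h1 h2
    refine hh.no_overlap hα (hop a) ?_ (hWI.mono_left (hsub a)) (hWI.mono_left (hsub b)) hst h1 h2
    rw [disjoint_left]
    intro z hz1 hz2
    exact hab (JoinedIn.trans hz1 (JoinedIn.symm hz2))
  have hR : ∀ a b, ¬ JoinedIn (W \ {p}) a b →
      (∃ δ > 0, Ioo (f p) (f p + δ) ⊆ f '' pathComponentIn (W \ {p}) a) →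
      (∃ δ > 0, Ioo (f p) (f p + δ) ⊆ f '' pathComponentIn (W \ {p}) b) → False := by
    rintro a b hab ⟨δ, hδ, h1⟩ ⟨ε, hε, h2⟩
    exact hov a b hab (f p) (f p + min δ ε) (by simp [hδ, hε])
      ((Ioo_subset_Ioo_right (by simp)).trans h1) ((Ioo_subset_Ioo_right (by simp)).trans h2)
  have hL : ∀ a b, ¬ JoinedIn (W \ {p}) a b →
      (∃ δ > 0, Ioo (f p - δ) (f p) ⊆ f '' pathComponentIn (W \ {p}) a) →
      (∃ δ > 0, Ioo (f p - δ) (f p) ⊆ f '' pathComponentIn (W \ {p}) b) → False := by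
    rintro a b hab ⟨δ, hδ, h1⟩ ⟨ε, hε, h2⟩
    exact hov a b hab (f p - min δ ε) (f p) (by simp [hδ, hε])
      ((Ioo_subset_Ioo_left (by linarith [min_le_left δ ε])).trans h1)
      ((Ioo_subset_Ioo_left (by linarith [min_le_right δ ε])).trans h2)
  rcases hside a ha with h1 | h1 <;> rcases hside b hb with h2 | h2 <;>
    rcases hside c hc with h3 | h3
  · exact hR _ _ hab h1 h2
  · exact hR _ _ hab h1 h2
  · exact hR _ _ hac h1 h3
  · exact hL _ _ hbc h2 h3
  · exact hR _ _ hbc h2 h3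
  · exact hL _ _ hac h1 h3
  · exact hL _ _ hab h1 h2
  · exact hL _ _ hab h1 h2

/-- The preimage of an interior point of an open arc is such a point. -/
theorem MinMap.mem_arcPoints (hh : MinMap h) (hK : FinCirc K) {x : K} (hx : h x ∈ arcPoints K) :
    x ∈ arcPoints K := by
  obtain ⟨α, hα, hxα⟩ := hx
  obtain ⟨W, hW, hxW, hWI, hWc, hWp⟩ := exists_circleFree_nhd hK x
    (hα.isOpen.preimage hh.cont) hxα
  have hnb : ∀ p ∈ W, ¬ Br W p := fun p hp => hh.not_br hα hW hWp hWI hp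
  by_contra hxF
  -- `x` does not separate `W`: an arc from one side to the other would run through `x`, and it has
  -- open interior
  have hend : ∀ a ∈ W \ {x}, ∀ b ∈ W \ {x}, JoinedIn (W \ {x}) a b := by
    intro a ha b hb
    by_contra hab
    have hne : a ≠ b := fun h => hab (h ▸ JoinedIn.refl ha)
    obtain ⟨β, hβ⟩ := (hWp.joinedIn a ha.1 b hb.1).exists_arc hne
    have hO := hβ.openArc hW hWc hWp (fun t ht => hnb _ (hβ.sub t (Ioo_subset_Icc_self ht)))
    by_cases hmem : ∃ t ∈ Icc (0:ℝ) 1, β t = x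
    · obtain ⟨t, ht, rfl⟩ := hmem
      refine hxF ⟨β, hO, t, ⟨ht.1.lt_of_ne ?_, ht.2.lt_of_ne ?_⟩, rfl⟩
      · rintro rfl
        exact ha.2 hβ.zero.symm
      · rintro rfl
        exact hb.2 hβ.one.symm
    · apply hab
      rw [← hβ.zero, ← hβ.one]
      exact hβ.joinedIn le_rfl zero_le_one le_rfl fun t ht => ⟨hβ.sub t ht, fun h => hmem ⟨t, ht, h⟩⟩
  obtain ⟨U, hU, hxU, hUW, hfin⟩ := hK.rimFinite x W hW hxW
  obtain ⟨y, hyW, hxy⟩ := hh.exists_ne_mem hW hxW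
  obtain ⟨β, hβ⟩ := (hWp.joinedIn x hxW y hyW).exists_arc hxy
  have hux : ∀ u ∈ frontier U, u ≠ x := by
    rintro u hu rfl
    exact eq_empty_iff_forall_notMem.1 hU.inter_frontier_eq u ⟨hxU, hu⟩
  -- For `z` near `x`, the finitely many boundary points of `U` can be joined to `y` off `z`. Choosing
  -- `z` on an arc from `x` to `y` and leaving `U` from `x` off `z` gives a path from `x` to `y` off
  -- `z`, although `z` lies on that arc in the circle-free set `W`.
  have hev : ∀ u ∈ frontier U, ∀ᶠ z in 𝓝 x, JoinedIn (W \ {z}) u y := by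
    intro u hu
    obtain ⟨γ, hγ⟩ := hend u ⟨hUW hu.1, hux u hu⟩ y ⟨hyW, hxy.symm⟩
    have hR : IsClosed (range γ) := (isCompact_range γ.continuous).isClosed
    have hxR : x ∉ range γ := by
      rintro ⟨t, ht⟩
      exact (hγ t).2 ht
    filter_upwards [hR.isOpen_compl.mem_nhds hxR] with z hz
    exact ⟨γ, fun t => ⟨(hγ t).1, fun h => hz ⟨t, h⟩⟩⟩
  have hev2 : ∀ᶠ z in 𝓝 x, ∀ u ∈ frontier U, JoinedIn (W \ {z}) u y :=
    (Filter.eventually_all_finite hfin).2 hev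
  have hcw : Tendsto β (𝓝[Icc 0 1] 0) (𝓝 x) := by
    have := hβ.cont 0 (by simp)
    rwa [ContinuousWithinAt, hβ.zero] at this
  have hev3 := hcw.eventually hev2
  rw [eventually_nhdsWithin_iff] at hev3
  obtain ⟨δ, hδ, hd⟩ := Metric.eventually_nhds_iff.1 hev3
  set t := min (δ / 2) (1 / 2) with ht
  have ht0 : 0 < t := by positivity
  have htδ : t < δ := (min_le_left _ _).trans_lt (by linarith)
  have ht1 : t < 1 := (min_le_right _ _).trans_lt (by norm_num)
  have hUt := hd (y := t)
    (by rw [Real.dist_eq, sub_zero, abs_of_pos ht0]; exact htδ) ⟨ht0.le, ht1.le⟩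
  have hxt : x ≠ β t := by
    rw [← hβ.zero]
    intro h
    exact ht0.ne (hβ.inj (by simp) ⟨ht0.le, ht1.le⟩ h)
  obtain ⟨u, hu, hju⟩ := hh.exists_exit hU hUW hWc hxU (hβ.sub t ⟨ht0.le, ht1.le⟩) hxt
  exact hβ.not_joinedIn hWc ⟨ht0, ht1⟩ (hju.trans (hUt u hu))

/-- The complement of `arcPoints K` is closed and forward invariant, and it is not the whole space;
hence it is empty. -/
theorem MinMap.arcPoints_eq_univ (hh : MinMap h) (hK : FinCirc K) : arcPoints K = univ := by
  by_contra hne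
  have h1 := hh.eq_univ (arcPoints K)ᶜ (isOpen_arcPoints K).isClosed_compl (nonempty_compl.2 hne)
    (fun x hx hx' => hx (hh.mem_arcPoints hK hx'))
  obtain ⟨x, hx⟩ := hh.arcPoints_nonempty hK
  exact (h1 ▸ mem_univ x : x ∈ (arcPoints K)ᶜ) hx

/-- A circle consisting of interior points of open arcs is open. -/
theorem IsCircleSet.isOpen {Y : Type*} [TopologicalSpace Y] [T2Space Y] {C : Set Y}
    (hC : IsCircleSet C) (hY : arcPoints Y = univ) : IsOpen C := by
  obtain ⟨e⟩ := hC
  rw [isOpen_iff_mem_nhds]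
  intro x hx
  obtain ⟨α, hα, hxα⟩ : x ∈ arcPoints Y := hY ▸ mem_univ x
  let ex : ℝ → Metric.sphere (0:ℂ) 1 := fun s => ⟨Complex.exp (s * Complex.I), by simp⟩
  have hexc : Continuous ex := by
    apply Continuous.subtype_mk
    fun_prop
  let c : ℝ → Y := fun s => (e.symm (ex s) : Y)
  have hc : Continuous c := continuous_subtype_val.comp (e.symm.continuous.comp hexc)
  have hcC : ∀ s, c s ∈ C := fun s => (e.symm (ex s)).2
  set θ := Complex.arg (e ⟨x, hx⟩ : ℂ) with hθ
  have hcθ : c θ = x := by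
    have h1 : ex θ = e ⟨x, hx⟩ := by
      apply Subtype.ext
      show Complex.exp (θ * Complex.I) = _
      have h2 := Complex.norm_mul_exp_arg_mul_I (e ⟨x, hx⟩ : ℂ)
      have h3 : ‖(e ⟨x, hx⟩ : ℂ)‖ = 1 := by simp
      rw [h3] at h2
      simpa using h2
    show (e.symm (ex θ) : Y) = x
    rw [h1]
    simp
  have hcinj : ∀ s t, |s - t| < 2 * Real.pi → c s = c t → s = t := by
    intro s t hst h
    have h1 : ex s = ex t := e.symm.injective (Subtype.ext h)
    have h2 : Complex.exp (s * Complex.I) = Complex.exp (t * Complex.I) := congrArg Subtype.val h1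
    obtain ⟨n, hn⟩ := Complex.exp_eq_exp_iff_exists_int.1 h2
    have h3 : s = t + n * (2 * Real.pi) := by
      have := congrArg Complex.im hn
      simpa using this
    have h4 : |(n:ℝ)| < 1 := by
      rw [h3, add_sub_cancel_left, abs_mul, abs_of_pos Real.two_pi_pos] at hst
      have := Real.two_pi_pos
      by_contra hge
      push Not at hge
      nlinarith
    have h5 : n = 0 := by
      rw [← Int.cast_abs] at h4
      have : |n| < 1 := by exact_mod_cast h4
      exact Int.abs_lt_one_iff.1 this
    rw [h3, h5]
    simp
  have hev : ∀ᶠ s in 𝓝 θ, c s ∈ α '' Ioo 0 1 :=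
    hc.continuousAt.eventually (hα.isOpen.mem_nhds (by rw [hcθ]; exact hxα))
  obtain ⟨δ, hδ, hd⟩ := Metric.eventually_nhds_iff.1 hev
  set η := min (δ / 2) 1 with hη
  have hη0 : 0 < η := by positivity
  have hηδ : η < δ := (min_le_left _ _).trans_lt (by linarith)
  have hη1 : η ≤ 1 := min_le_right _ _
  have hmem : ∀ s ∈ Icc (θ - η) (θ + η), c s ∈ α '' Ioo 0 1 := by
    intro s hs
    apply hd
    rw [Real.dist_eq, abs_lt]
    constructor <;> linarith [hs.1, hs.2]
  set f := OpenArc.inv α ∘ c with hf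
  have hfc : ContinuousOn f (Icc (θ - η) (θ + η)) :=
    hα.continuousOn_inv.comp hc.continuousOn hmem
  have hαf : ∀ s ∈ Icc (θ - η) (θ + η), α (f s) = c s ∧ f s ∈ Ioo (0:ℝ) 1 := by
    intro s hs
    obtain ⟨t, ht, hts⟩ := hmem s hs
    have : f s = t := by
      rw [hf, Function.comp_apply, ← hts, hα.inv_apply (Ioo_subset_Icc_self ht)]
    rw [this]
    exact ⟨hts, ht⟩
  have hfi : InjOn f (Icc (θ - η) (θ + η)) := by
    intro s hs t ht hst
    apply hcinj
    · rw [abs_lt]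
      have := Real.pi_gt_three
      constructor <;> linarith [hs.1, hs.2, ht.1, ht.2]
    · rw [← (hαf s hs).1, ← (hαf t ht).1, hst]
  have hle : θ - η ≤ θ + η := by linarith
  have hθm : θ ∈ Icc (θ - η) (θ + η) := ⟨by linarith, by linarith⟩
  have hlm : θ - η ∈ Icc (θ - η) (θ + η) := ⟨by linarith, by linarith⟩
  have hrm : θ + η ∈ Icc (θ - η) (θ + η) := ⟨by linarith, by linarith⟩
  -- the image of the parameter interval contains an open interval around the value at `θ`
  obtain ⟨u, v, huθ, hθv, hsub⟩ : ∃ u v, u < f θ ∧ f θ < v ∧ Ioo u v ⊆ f '' Icc (θ - η) (θ + η) := by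
    rcases ContinuousOn.strictMonoOn_of_injOn_Icc' hle hfc hfi with hm | hm
    · exact ⟨f (θ - η), f (θ + η), hm hlm hθm (by linarith), hm hθm hrm (by linarith),
        Ioo_subset_Icc_self.trans (intermediate_value_Icc hle hfc)⟩
    · exact ⟨f (θ + η), f (θ - η), hm hθm hrm (by linarith), hm hlm hθm (by linarith),
        Ioo_subset_Icc_self.trans (intermediate_value_Icc' hle hfc)⟩
  refine Filter.mem_of_superset ((hα.image_open (isOpen_Ioo (a := u) (b := v))).mem_nhds
    ⟨f θ, ⟨⟨huθ, hθv⟩, (hαf θ hθm).2⟩, (hαf θ hθm).1.trans hcθ⟩) ?_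
  rintro _ ⟨w, hw, rfl⟩
  obtain ⟨s, hs, rfl⟩ := hsub hw.1
  rw [(hαf s hs).1]
  exact hcC s

/-- An infinite Peano continuum with finitely many circles and a minimal map is a circle. -/
theorem MinMap.isCircle (hh : MinMap h) (hK : FinCirc K) :
    Nonempty (K ≃ₜ Metric.sphere (0:ℂ) 1) := by
  have h1 : ¬ NoCircle (univ : Set K) := fun hno => by
    -- without circles, the map would have a fixed point
    obtain ⟨x, hx⟩ := exists_fixedPoint hno hh.cont
    exact hh.noPeriodic one_pos x hx
  unfold NoCircle at h1
  push Not at h1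
  obtain ⟨C, -, hC⟩ := h1
  have hCo : IsOpen C := hC.isOpen (hh.arcPoints_eq_univ hK)
  have hCc : IsClosed C := by
    obtain ⟨e⟩ := hC
    have : CompactSpace C := e.symm.compactSpace
    exact (isCompact_iff_compactSpace.2 this).isClosed
  have hCu : C = univ := by
    rcases isClopen_iff.1 ⟨hCc, hCo⟩ with h | h
    · have := hC.nontrivial
      simp [h] at this
    · exact h
  obtain ⟨e⟩ := hC
  exact ⟨(Homeomorph.Set.univ K).symm.trans ((Homeomorph.setCongr hCu.symm).trans e)⟩
end

/-! ### Components of rim-finite minimal systems -/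

/-- A connected set that meets an open set and its complement meets the boundary. -/
theorem IsPreconnected.exists_mem_frontier {Y : Type*} [TopologicalSpace Y] {s U : Set Y}
    (hs : IsPreconnected s) (hU : IsOpen U) {x y : Y} (hx : x ∈ s) (hxU : x ∈ U) (hy : y ∈ s)
    (hyU : y ∉ U) : ∃ b ∈ s, b ∈ frontier U := by
  by_contra! hno
  have h1 : ∀ z ∈ s, z ∉ U → z ∉ closure U := fun z hz hzU hzc =>
    hno z hz ⟨hzc, by rwa [hU.interior_eq]⟩
  obtain ⟨z, -, hz1, hz2⟩ := hs U (closure U)ᶜ hU isClosed_closure.isOpen_compl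
    (fun z hz => by
      by_cases hzU : z ∈ U
      · exact Or.inl hzU
      · exact Or.inr (h1 z hz hzU)) ⟨x, hx, hxU⟩ ⟨y, hy, h1 y hy hyU⟩
  exact hz2 (subset_closure hz1)

theorem isOpen_component_of_finite {Z : Type*} [TopologicalSpace Z]
    [Finite (ConnectedComponents Z)] (x : Z) : IsOpen (connectedComponent x) := by
  rw [← isClosed_compl_iff]
  have h : (connectedComponent x)ᶜ = ⋃ c ∈ {c : ConnectedComponents Z | c ≠ x},
      ((↑) : Z → ConnectedComponents Z) ⁻¹' {c} := by
    ext y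
    rw [mem_compl_iff, ← ConnectedComponents.coe_eq_coe']
    simp
  rw [h]
  refine (toFinite _).isClosed_biUnion fun c _ => ?_
  obtain ⟨y, rfl⟩ := ConnectedComponents.surjective_coe c
  rw [connectedComponents_preimage_singleton]
  exact isClosed_connectedComponent

/-- In a compact Hausdorff space, components have neighbourhood bases of clopen sets. -/
theorem exists_isClopen_subset {Z : Type*} [TopologicalSpace Z] [CompactSpace Z] [T2Space Z]
    {z : Z} {U : Set Z} (hU : IsOpen U) (h : connectedComponent z ⊆ U) :
    ∃ V, IsClopen V ∧ z ∈ V ∧ V ⊆ U := by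
  rw [connectedComponent_eq_iInter_isClopen] at h
  have : Nonempty { s : Set Z // IsClopen s ∧ z ∈ s } := ⟨⟨univ, isClopen_univ, trivial⟩⟩
  obtain ⟨V, hV⟩ := exists_subset_nhds_of_compactSpace
    (V := fun s : { s : Set Z // IsClopen s ∧ z ∈ s } => s.1)
    (fun a b => ⟨⟨a.1 ∩ b.1, a.2.1.inter b.2.1, a.2.2, b.2.2⟩, inter_subset_left, inter_subset_right⟩)
    (fun a => a.2.1.isClosed) (fun x hx => hU.mem_nhds (h hx))
  exact ⟨V.1, V.2.1, V.2.2, hV⟩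

/-- Boundary bumping: in a continuum, components of the closure of an open proper subset reach the
boundary. -/
theorem exists_mem_frontier_component {K : Type*} [TopologicalSpace K] [CompactSpace K] [T2Space K]
    [PreconnectedSpace K] {U : Set K} (hU : IsOpen U) (hne : U ≠ univ) {z : K} (hz : z ∈ U) :
    ∃ b ∈ frontier U, b ∈ connectedComponentIn (closure U) z := by
  have hzT : z ∈ closure U := subset_closure hz
  by_contra! hno
  have : CompactSpace ↥(closure U) := isCompact_iff_compactSpace.1 isClosed_closure.isCompact
  have h1 : connectedComponent (⟨z, hzT⟩ : ↥(closure U)) ⊆ Subtype.val ⁻¹' U := by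
    intro w hw
    by_contra hwU
    refine hno w ⟨w.2, by rwa [hU.interior_eq]⟩ ?_
    rw [connectedComponentIn_eq_image hzT]
    exact ⟨w, hw, rfl⟩
  obtain ⟨V, hV, hzV, hVU⟩ := exists_isClopen_subset (hU.preimage continuous_subtype_val) h1
  have hVc : IsClosed ((↑) '' V : Set K) := isClosed_closure.isClosedEmbedding_subtypeVal.isClosedMap _ hV.1
  have hVo : IsOpen ((↑) '' V : Set K) := by
    obtain ⟨V', hV', rfl⟩ := isOpen_induced_iff.1 hV.2
    have : ((↑) '' (Subtype.val ⁻¹' V' : Set ↥(closure U)) : Set K) = V' ∩ U := by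
      ext y
      constructor
      · rintro ⟨w, hw, rfl⟩
        exact ⟨hw, hVU hw⟩
      · rintro ⟨hy, hyU⟩
        exact ⟨⟨y, subset_closure hyU⟩, hy, rfl⟩
    rw [this]
    exact hV'.inter hU
  rcases isClopen_iff.1 ⟨hVc, hVo⟩ with h | h
  · exact eq_empty_iff_forall_notMem.1 h z ⟨_, hzV, rfl⟩
  · apply hne
    rw [eq_univ_iff_forall]
    intro y
    obtain ⟨w, hw, rfl⟩ := (h ▸ mem_univ y : y ∈ ((↑) '' V : Set K))
    exact hVU hw

theorem isClosed_connectedComponentIn {K : Type*} [TopologicalSpace K] {T : Set K}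
    (hT : IsClosed T) (z : K) : IsClosed (connectedComponentIn T z) := by
  by_cases hz : z ∈ T
  · rw [connectedComponentIn_eq_image hz]
    exact hT.isClosedEmbedding_subtypeVal.isClosedMap _ isClosed_connectedComponent
  · rw [connectedComponentIn_eq_empty hz]
    exact isClosed_empty

/-- Rim-finite continua are locally connected. -/
theorem RimFinite.locallyConnectedSpace {K : Type*} [TopologicalSpace K] [CompactSpace K]
    [T2Space K] [PreconnectedSpace K] (h : RimFinite K) : LocallyConnectedSpace K := by
  rw [locallyConnectedSpace_iff_connectedComponentIn_open]
  intro F hF x hx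
  rw [isOpen_iff_mem_nhds]
  intro y hy
  rw [connectedComponentIn_eq hy]
  have hyF := connectedComponentIn_subset _ _ hy
  obtain ⟨U, hU, hyU, hUF, hfin⟩ := h y F hF hyF
  set B := frontier U \ connectedComponentIn (closure U) y with hB
  have hBf : B.Finite := hfin.subset sdiff_subset
  have hcl : IsClosed (⋃ b ∈ B, connectedComponentIn (closure U) b) :=
    hBf.isClosed_biUnion fun b _ => isClosed_connectedComponentIn isClosed_closure b
  have hyO : y ∈ U \ ⋃ b ∈ B, connectedComponentIn (closure U) b := by
    refine ⟨hyU, fun hm => ?_⟩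
    obtain ⟨b, hb, hyb⟩ := mem_iUnion₂.1 hm
    apply hb.2
    rw [← connectedComponentIn_eq hyb]
    exact mem_connectedComponentIn hb.1.1
  refine Filter.mem_of_superset ((hU.sdiff hcl).mem_nhds hyO) ?_
  rintro z ⟨hzU, hzB⟩
  apply connectedComponentIn_mono _ hUF
  by_cases hne : U = univ
  · subst hne
    rw [closure_univ]
    rw [connectedComponentIn_univ]
    rw [PreconnectedSpace.connectedComponent_eq_univ]
    trivial
  obtain ⟨b, hb, hbz⟩ := exists_mem_frontier_component hU hne hzU
  have hzz : z ∈ connectedComponentIn (closure U) z := mem_connectedComponentIn (subset_closure hzU)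
  by_cases hby : b ∈ connectedComponentIn (closure U) y
  · rwa [connectedComponentIn_eq hby, ← connectedComponentIn_eq hbz]
  · refine absurd (mem_iUnion₂.2 ⟨b, ⟨hb, hby⟩, ?_⟩) hzB
    rwa [← connectedComponentIn_eq hbz]

/-- A rim-finite compact metric space has only countably many nondegenerate components. -/
theorem RimFinite.exists_countable {Z : Type*} [MetricSpace Z] [CompactSpace Z] (h : RimFinite Z) :
    ∃ Q : Set Z, Q.Countable ∧ ∀ x, connectedComponent x ≠ {x} → ∃ q ∈ Q, q ∈ connectedComponent x := by
  have h1 : ∀ n : ℕ, ∃ Q : Set Z, Q.Finite ∧ ∀ x, ∀ y ∈ connectedComponent x,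
      1 / ((n:ℝ) + 1) ≤ dist y x → ∃ q ∈ Q, q ∈ connectedComponent x := by
    intro n
    have hr : (0:ℝ) < 1 / ((n:ℝ) + 1) / 2 := by positivity
    choose U hU hxU hUV hfin using fun x : Z => h x (Metric.ball x (1 / ((n:ℝ) + 1) / 2))
      Metric.isOpen_ball (Metric.mem_ball_self hr)
    obtain ⟨t, ht⟩ := isCompact_univ.elim_finite_subcover U hU
      (fun x _ => mem_iUnion.2 ⟨x, hxU x⟩)
    refine ⟨⋃ x ∈ t, frontier (U x), t.finite_toSet.biUnion fun x _ => hfin x, ?_⟩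
    intro x y hy hd
    obtain ⟨w, hw, hxw⟩ := mem_iUnion₂.1 (ht (mem_univ x))
    have hyw : y ∉ U w := by
      intro hyw
      have h2 := hUV w (subset_closure hyw)
      have h3 := hUV w (subset_closure hxw)
      rw [Metric.mem_ball] at h2 h3
      have := dist_triangle_right y x w
      linarith
    have := (isPreconnected_connectedComponent (x := x)).exists_mem_frontier
      (hU w) mem_connectedComponent hxw hy hyw
    obtain ⟨q, hq1, hq2⟩ := this
    exact ⟨q, mem_iUnion₂.2 ⟨w, hw, hq2⟩, hq1⟩
  choose Q hQ hQx using h1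
  refine ⟨⋃ n, Q n, countable_iUnion fun n => (hQ n).countable, fun x hx => ?_⟩
  obtain ⟨y, hy, hyx⟩ : ∃ y ∈ connectedComponent x, y ≠ x := by
    by_contra! hno
    exact hx (Subset.antisymm (fun y hy => hno y hy) (by
      rintro _ rfl
      exact mem_connectedComponent))
  obtain ⟨n, hn⟩ := exists_nat_one_div_lt (dist_pos.2 hyx)
  obtain ⟨q, hq, hqx⟩ := hQx n x y hy hn.le
  exact ⟨q, mem_iUnion.2 ⟨n, hq⟩, hqx⟩

section
variable {Z : Type*} [MetricSpace Z] [CompactSpace Z] {g : Z → Z}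

theorem Continuous.mem_component {Y Z : Type*} [TopologicalSpace Y] [TopologicalSpace Z] {g : Y → Z}
    (hg : Continuous g) {x y : Y} (h : y ∈ connectedComponent x) :
    g y ∈ connectedComponent (g x) :=
  hg.image_connectedComponent_subset x ⟨y, h, rfl⟩

/-- If the component of `q` has an interior point, then the orbit of `q` returns to it for the first
time after `m` steps, and the space is the union of the components of the first `m` points. -/
theorem MinMap.exists_union (hg : MinMap g) {q : Z} (hq : (interior (connectedComponent q)).Nonempty) :
    ∃ m, 0 < m ∧ g^[m] q ∈ connectedComponent q ∧
      (∀ j, 0 < j → j < m → g^[j] q ∉ connectedComponent q) ∧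
      ∀ x, ∃ j < m, x ∈ connectedComponent (g^[j] q) := by
  have hex : ∃ m, 0 < m ∧ g^[m] q ∈ connectedComponent q := by
    obtain ⟨m, hm, h1⟩ := hg.exists_iterate_mem' q isOpen_interior hq
    exact ⟨m, hm, interior_subset h1⟩
  classical
  refine ⟨Nat.find hex, (Nat.find_spec hex).1, (Nat.find_spec hex).2,
    fun j hj hjm hjq => Nat.find_min hex hjm ⟨hj, hjq⟩, ?_⟩
  set m := Nat.find hex with hm
  have hm0 : 0 < m := (Nat.find_spec hex).1
  have hmq : g^[m] q ∈ connectedComponent q := (Nat.find_spec hex).2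
  have hu := hg.eq_univ (⋃ j ∈ Iio m, connectedComponent (g^[j] q))
    ((finite_Iio m).isClosed_biUnion fun j _ => isClosed_connectedComponent)
    ⟨q, mem_iUnion₂.2 ⟨0, hm0, mem_connectedComponent⟩⟩ (by
      intro x hx
      obtain ⟨j, hj, hxj⟩ := mem_iUnion₂.1 hx
      have h1 := hg.cont.mem_component hxj
      rw [← Function.iterate_succ_apply' g] at h1
      rcases Nat.lt_or_ge (j + 1) m with h2 | h2
      · exact mem_iUnion₂.2 ⟨j + 1, h2, h1⟩
      · have hj' : j < m := hj
        have h3 : j.succ = m := by omega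
        rw [h3, ← connectedComponent_eq hmq] at h1
        exact mem_iUnion₂.2 ⟨0, hm0, h1⟩)
  intro x
  obtain ⟨j, hj, hx⟩ := mem_iUnion₂.1 (hu ▸ mem_univ x : x ∈ ⋃ j ∈ Iio m, connectedComponent (g^[j] q))
  exact ⟨j, hj, hx⟩

/-- An open component is periodic, and the first return map is minimal on it. As it is a Peano
continuum with finitely many circles, it is a circle. -/
theorem MinMap.component_isCircle (hg : MinMap g) [Infinite Z] (hRF : RimFinite Z) (hFC : FinCirc Z)
    {q : Z} (hq : IsOpen (connectedComponent q)) : IsCircleSet (connectedComponent q) := by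
  have hqne : (interior (connectedComponent q)).Nonempty := by
    rw [hq.interior_eq]
    exact ⟨q, mem_connectedComponent⟩
  obtain ⟨m, hm0, hmq, hmin, -⟩ := hg.exists_union hqne
  have hmaps : MapsTo g^[m] (connectedComponent q) (connectedComponent q) := by
    intro x hx
    rw [connectedComponent_eq hmq]
    exact (hg.cont.iterate m).mem_component hx
  -- the first `m` images of a closed set invariant under the return map cover the space, and only
  -- the zeroth one meets the component of `q`
  have hmm : MinMap (hmaps.restrict g^[m] _ _) := by
    refine ⟨((hg.cont.iterate m).continuousOn).mapsToRestrict hmaps, fun N hN hNne hNN => ?_⟩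
    have hN' : IsClosed ((↑) '' N : Set Z) :=
      isClosed_connectedComponent.isClosedEmbedding_subtypeVal.isClosedMap _ hN
    have hu := hg.eq_univ (⋃ j ∈ Iio m, g^[j] '' ((↑) '' N))
      ((finite_Iio m).isClosed_biUnion fun j _ =>
        (hN'.isCompact.image (hg.cont.iterate j)).isClosed) (by
        obtain ⟨x, hx⟩ := hNne
        exact ⟨x, mem_iUnion₂.2 ⟨0, hm0, ⟨x, ⟨x, hx, rfl⟩, rfl⟩⟩⟩) (by
        intro x hx
        obtain ⟨j, hj, _, ⟨y, hy, rfl⟩, rfl⟩ := mem_iUnion₂.1 hx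
        rw [← Function.iterate_succ_apply' g]
        rcases Nat.lt_or_ge (j + 1) m with h2 | h2
        · exact mem_iUnion₂.2 ⟨j + 1, h2, _, ⟨y, hy, rfl⟩, rfl⟩
        · have hj' : j < m := hj
          have h3 : j.succ = m := by omega
          rw [h3]
          exact mem_iUnion₂.2 ⟨0, hm0, _, ⟨_, hNN hy, rfl⟩, rfl⟩)
    rw [eq_univ_iff_forall]
    intro x
    obtain ⟨j, hj, _, ⟨y, hy, rfl⟩, hyx⟩ := mem_iUnion₂.1
      (hu ▸ mem_univ (x : Z) : (x : Z) ∈ ⋃ j ∈ Iio m, g^[j] '' ((↑) '' N))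
    rcases Nat.eq_zero_or_pos j with rfl | hj0
    · have : y = x := Subtype.ext hyx
      rwa [← this]
    · exfalso
      apply hmin j hj0 hj
      have h1 := (hg.cont.iterate j).mem_component y.2
      rw [hyx] at h1
      have h2 := connectedComponent_eq h1
      have h3 := connectedComponent_eq x.2
      rw [h3, ← h2]
      exact mem_connectedComponent
  have : CompactSpace (connectedComponent q) :=
    isCompact_iff_compactSpace.1 isClosed_connectedComponent.isCompact
  have : ConnectedSpace (connectedComponent q) :=
    isConnected_iff_connectedSpace.1 isConnected_connectedComponent
  have := (RimFinite.of_embedding (Y := connectedComponent q) IsEmbedding.subtypeVal hRF).locallyConnectedSpace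
  have := locallyPathConnectedSpace_of_compact (connectedComponent q)
  have : PathConnectedSpace (connectedComponent q) := PathConnectedSpace.of_locallyPathConnectedSpace
  have : Infinite (connectedComponent q) := by
    rw [← not_finite_iff_infinite]
    intro hf
    have hf' : (connectedComponent q).Finite := hf
    have h2 : IsOpen (connectedComponent q \ (connectedComponent q \ {q})) :=
      hq.sdiff (hf'.subset sdiff_subset).isClosed
    have h3 : connectedComponent q \ (connectedComponent q \ {q}) = {q} := by
      rw [sdiff_sdiff_right_self]
      simpa using mem_connectedComponent
    exact hg.noIsolated q (h3 ▸ h2)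
  exact hmm.isCircle (FinCirc.of_embedding IsEmbedding.subtypeVal hFC)

/-- An infinite rim-finite compact space with finitely many circles and a minimal map is a
cantoroid or a finite union of disjoint circles. -/
theorem MinMap.dichotomy (hg : MinMap g) [Infinite Z] (hRF : RimFinite Z) (hFC : FinCirc Z) :
    Dense {x : Z | connectedComponent x = {x}} ∨ FinUnionDisjCircles (univ : Set Z) := by
  by_cases hd : Dense {x : Z | connectedComponent x = {x}}
  · exact Or.inl hd
  right
  set D := {x : Z | connectedComponent x = {x}} with hD
  obtain ⟨Q, hQ, hQx⟩ := hRF.exists_countable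
  -- Baire category: the closure of the degenerate components and the countably many nondegenerate
  -- components cover the space
  have hone : ∃ q : Z, (interior (connectedComponent q)).Nonempty := by
    have : Countable Q := hQ.to_subtype
    have hdense := dense_iUnion_interior_of_closed
      (f := fun o : Option Q => o.elim (closure D) fun q => connectedComponent (q : Z)) (by
        rintro (_ | q)
        · exact isClosed_closure
        · exact isClosed_connectedComponent) (by
        rw [eq_univ_iff_forall]
        intro x
        by_cases hx : connectedComponent x = {x}
        · exact mem_iUnion.2 ⟨none, subset_closure hx⟩
        · obtain ⟨q, hq, hqx⟩ := hQx x hx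
          refine mem_iUnion.2 ⟨some ⟨q, hq⟩, ?_⟩
          show x ∈ connectedComponent q
          rw [← connectedComponent_eq hqx]
          exact mem_connectedComponent)
    have hOne : ((closure D)ᶜ).Nonempty := by
      rw [nonempty_compl]
      exact fun h => hd (dense_iff_closure_eq.2 h)
    obtain ⟨x, hxO, hx⟩ := hdense.inter_open_nonempty _ isClosed_closure.isOpen_compl hOne
    obtain ⟨o, ho⟩ := mem_iUnion.1 hx
    rcases o with _ | q
    · exact absurd (interior_subset ho) hxO
    · exact ⟨q, x, ho⟩
  obtain ⟨q, hq⟩ := hone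
  obtain ⟨m, hm0, -, -, hall⟩ := hg.exists_union hq
  have hfin : Finite (ConnectedComponents Z) := by
    refine Finite.of_surjective 
      (fun j : Fin m => ((↑) : Z → ConnectedComponents Z) (g^[j] q)) ?_
    intro c
    obtain ⟨x, rfl⟩ := ConnectedComponents.surjective_coe c
    obtain ⟨j, hj, hx⟩ := hall x
    exact ⟨⟨j, hj⟩, (ConnectedComponents.coe_eq_coe'.2 hx).symm⟩
  have hopen : ∀ x : Z, IsOpen (connectedComponent x) := isOpen_component_of_finite
  have hcirc : ∀ x : Z, IsCircleSet (connectedComponent x) := fun x =>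
    hg.component_isCircle hRF hFC (hopen x)
  obtain ⟨n, ⟨e⟩⟩ := Finite.exists_equiv_fin (ConnectedComponents Z)
  refine ⟨n, fun i => ((↑) : Z → ConnectedComponents Z) ⁻¹' {e.symm i}, ?_, ?_, ?_, ?_⟩
  · have := (e (q : ConnectedComponents Z)).2
    omega
  · intro i
    obtain ⟨x, hx⟩ := ConnectedComponents.surjective_coe (e.symm i)
    show IsCircleSet (ConnectedComponents.mk ⁻¹' {e.symm i})
    rw [← hx, connectedComponents_preimage_singleton]
    exact hcirc x
  · intro i j hij
    rw [Function.onFun, disjoint_left]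
    intro x hx hx'
    exact hij (e.symm.injective (hx.symm.trans hx'))
  · symm
    rw [eq_univ_iff_forall]
    intro x
    exact mem_iUnion.2 ⟨e (x : ConnectedComponents Z), by simp⟩
end

/-! ### Minimal maps on cantoroids and finite spaces -/

section Cantoroid
variable {Z : Type*} [MetricSpace Z] [CompactSpace Z]

/-- In a cantoroid every nonempty open set contains a degenerate component outside any given
finite set. -/
theorem exists_degenerate (hiso : NoIsolatedPoints Z)
    (hD : Dense {x : Z | connectedComponent x = {x}}) {U : Set Z} (hU : IsOpen U)
    (hne : U.Nonempty) {t : Set Z} (ht : t.Finite) :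
    ∃ x ∈ U, connectedComponent x = {x} ∧ x ∉ t := by
  have h1 : (U \ t).Nonempty := by
    obtain ⟨u, hu⟩ := hne
    have : (𝓝[≠] u).NeBot := by
      rw [neBot_iff]
      intro h
      exact hiso u (isOpen_singleton_iff_punctured_nhds u |>.2 h)
    have hinf : U.Infinite := infinite_of_mem_nhds u (hU.mem_nhds hu)
    exact (hinf.sdiff ht).nonempty
  obtain ⟨x, hx, hxD⟩ := hD.inter_open_nonempty _ (hU.sdiff ht.isClosed) h1
  exact ⟨x, hx.1, hxD, hx.2⟩

theorem exists_degenerate_injective (hiso : NoIsolatedPoints Z)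
    (hD : Dense {x : Z | connectedComponent x = {x}}) {ι : Type*} [Finite ι] {U : ι → Set Z}
    (hU : ∀ i, IsOpen (U i)) (hne : ∀ i, (U i).Nonempty) :
    ∃ x : ι → Z, Function.Injective x ∧ ∀ i, x i ∈ U i ∧ connectedComponent (x i) = {x i} := by
  classical
  have := Fintype.ofFinite ι
  suffices h : ∀ s : Finset ι, ∃ x : ι → Z, InjOn x s ∧
      ∀ i, x i ∈ U i ∧ connectedComponent (x i) = {x i} by
    obtain ⟨x, hx, hx'⟩ := h Finset.univ
    exact ⟨x, by simpa [injOn_univ] using hx, hx'⟩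
  intro s
  induction s using Finset.induction_on with
  | empty =>
    choose x hx using fun i => exists_degenerate hiso hD (hU i) (hne i) (t := ∅) finite_empty
    exact ⟨x, by simp, fun i => ⟨(hx i).1, (hx i).2.1⟩⟩
  | insert a s ha ih =>
    obtain ⟨x, hx, hx'⟩ := ih
    obtain ⟨y, hyU, hy, hyt⟩ := exists_degenerate hiso hD (hU a) (hne a)
      (s.finite_toSet.image x)
    refine ⟨Function.update x a y, ?_, ?_⟩
    · have hne' : ∀ i ∈ s, i ≠ a := fun i hi h => ha (h ▸ hi)
      rw [Finset.coe_insert, injOn_insert (by simpa using ha)]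
      refine ⟨?_, ?_⟩
      · intro i hi j hj hij
        rw [Function.update_of_ne (hne' i hi), Function.update_of_ne (hne' j hj)] at hij
        exact hx hi hj hij
      · rintro ⟨i, hi, h⟩
        rw [Function.update_of_ne (hne' i hi), Function.update_self] at h
        exact hyt ⟨i, hi, h⟩
    · intro i
      by_cases h : i = a
      · subst h; simp [hyU, hy]
      · simpa [Function.update_of_ne h] using hx' i

/-- Finitely many nonempty open sets of a cantoroid contain pairwise disjoint nonempty clopen
sets. -/
theorem exists_disjoint_clopen (hiso : NoIsolatedPoints Z)
    (hD : Dense {x : Z | connectedComponent x = {x}}) {ι : Type*} [Finite ι] {U : ι → Set Z}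
    (hU : ∀ i, IsOpen (U i)) (hne : ∀ i, (U i).Nonempty) :
    ∃ H : ι → Set Z, (∀ i, IsClopen (H i)) ∧ (∀ i, (H i).Nonempty) ∧ (∀ i, H i ⊆ U i) ∧
      Pairwise (Function.onFun Disjoint H) := by
  obtain ⟨x, hinj, hx⟩ := exists_degenerate_injective hiso hD hU hne
  obtain ⟨O, hO, hdisj⟩ := (finite_range x).t2_separation
  have : ∀ i, ∃ H, IsClopen H ∧ x i ∈ H ∧ H ⊆ U i ∩ O (x i) := fun i =>
    exists_isClopen_subset ((hU i).inter (hO (x i)).2) (by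
      rw [(hx i).2]; rintro _ rfl; exact ⟨(hx i).1, (hO _).1⟩)
  choose H hH hxH hHU using this
  refine ⟨H, hH, fun i => ⟨_, hxH i⟩, fun i => (hHU i).trans inter_subset_left, ?_⟩
  intro i j hij
  exact (hdisj (mem_range_self i) (mem_range_self j) (hinj.ne hij)).mono
    ((hHU i).trans inter_subset_right) ((hHU j).trans inter_subset_right)

/-- A locally constant open relation on `Z`, each of whose points is joined to every point by a
chain; it is an approximation to the graph of a minimal map. -/
structure Chained (Φ : Z → Set Z) : Prop where
  lc : IsLocallyConstant Φ
  opn : ∀ x, IsOpen (Φ x)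
  nonempty : ∀ x, (Φ x).Nonempty
  trans : ∀ x y, Relation.TransGen (fun a b => b ∈ Φ a) x y

/-- A chained relation on a cantoroid can be shrunk to one whose values have diameter at most `ε`:
the value at `x` becomes the part of `Φ x` in one small ball, and the ball is chosen locally
constantly in `x` in such a way that all possible choices occur. -/
theorem Chained.split (hiso : NoIsolatedPoints Z)
    (hD : Dense {x : Z | connectedComponent x = {x}}) {Φ : Z → Set Z} (hΦ : Chained Φ)
    {ε : ℝ} (hε : 0 < ε) :
    ∃ Ψ : Z → Set Z, Chained Ψ ∧ (∀ x, Ψ x ⊆ Φ x) ∧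
      ∀ x, ∀ y ∈ Ψ x, ∀ z ∈ Ψ x, dist y z ≤ ε := by
  classical
  obtain ⟨s, -, hsf, hs⟩ := (isCompact_univ (X := Z)).finite_cover_balls (half_pos hε)
  have := hsf.to_subtype
  let B : s → Set Z := fun i => Metric.ball (i : Z) (ε / 2)
  have hB : ∀ z, ∃ i, z ∈ B i := fun z => by
    obtain ⟨i, hi, hz⟩ := mem_iUnion₂.1 (hs (mem_univ z))
    exact ⟨⟨i, hi⟩, hz⟩
  have := hΦ.lc.range_finite.to_subtype
  let U : (range Φ × range Φ × s) × s → Set Z := fun p =>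
    if (Φ ⁻¹' {p.1.1.1} ∩ p.1.2.1.1 ∩ B p.1.2.2).Nonempty then
      Φ ⁻¹' {p.1.1.1} ∩ p.1.2.1.1 ∩ B p.1.2.2 else univ
  have hU : ∀ p, IsOpen (U p) := by
    intro p
    simp only [U]
    split_ifs
    · refine ((hΦ.lc.isOpen_fiber _).inter ?_).inter Metric.isOpen_ball
      obtain ⟨w, hw⟩ := p.1.2.1.2
      rw [← hw]; exact hΦ.opn w
    · exact isOpen_univ
  by_cases hZ : Nonempty Z
  swap
  · have : IsEmpty Z := not_nonempty_iff.1 hZ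
    exact ⟨Φ, hΦ, fun _ => subset_rfl, fun x => isEmptyElim x⟩
  have hUne : ∀ p, (U p).Nonempty := by
    intro p
    simp only [U]
    split_ifs with h
    · exact h
    · exact univ_nonempty
  -- Disjoint clopen sets are reserved so that every value of `Φ` is still attained inside every ball
  -- together with every choice of a target ball.
  obtain ⟨H, hHc, hHne, hHU, hHd⟩ := exists_disjoint_clopen hiso hD hU hUne
  let j0 : s := (hB (Classical.arbitrary Z)).choose
  have hHd' : ∀ {p p' z}, z ∈ H p → z ∈ H p' → p = p' := fun {p p' z} h h' => by
    by_contra hne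
    exact (hHd hne).le_bot ⟨h, h'⟩
  let q : Z → s := fun z => if h : ∃ p, z ∈ H p then h.choose.2 else j0
  have hq : ∀ p, ∀ z ∈ H p, q z = p.2 := by
    intro p z hz
    have h : ∃ p, z ∈ H p := ⟨p, hz⟩
    simp only [q, dif_pos h]
    rw [hHd' h.choose_spec hz]
  have hqlc : IsLocallyConstant q := by
    rw [IsLocallyConstant.iff_eventually_eq]
    intro z
    by_cases h : ∃ p, z ∈ H p
    · obtain ⟨p, hp⟩ := h
      filter_upwards [(hHc p).isOpen.mem_nhds hp] with z' hz'
      rw [hq p z hp, hq p z' hz']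
    · have ho : IsOpen (⋃ p, H p)ᶜ := (isClosed_iUnion_of_finite fun p => (hHc p).isClosed).isOpen_compl
      filter_upwards [ho.mem_nhds (by simpa using h)] with z' hz'
      have h' : ¬ ∃ p, z' ∈ H p := by simpa using hz'
      simp only [q, dif_neg h, dif_neg h']
  have key : ∀ x w i j z, z ∈ Φ w → z ∈ B i → Φ z = Φ x →
      ∃ x', x' ∈ Φ w ∧ x' ∈ B i ∧ Φ x' = Φ x ∧ q x' = j := by
    intro x w i j z h1 h2 h3
    let p : (range Φ × range Φ × s) × s := ((⟨Φ x, x, rfl⟩, ⟨Φ w, w, rfl⟩, i), j)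
    obtain ⟨x', hx'⟩ := hHne p
    have h := hHU p hx'
    have hne : (Φ ⁻¹' {p.1.1.1} ∩ p.1.2.1.1 ∩ B p.1.2.2).Nonempty := ⟨z, ⟨h3, h1⟩, h2⟩
    simp only [U, if_pos hne] at h
    exact ⟨x', h.1.2, h.2, h.1.1, hq p x' hx'⟩
  let G : Set Z → s → s := fun A j => if (A ∩ B j).Nonempty then j else
    if h : ∃ i, (A ∩ B i).Nonempty then h.choose else j
  have hG : ∀ A j, A.Nonempty → (A ∩ B (G A j)).Nonempty := by
    rintro A j ⟨a, ha⟩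
    have h : ∃ i, (A ∩ B i).Nonempty := (hB a).imp fun i hi => ⟨a, ha, hi⟩
    by_cases h1 : (A ∩ B j).Nonempty
    · simpa only [G, if_pos h1] using h1
    · simp only [G, if_neg h1, dif_pos h]
      exact h.choose_spec
  let Ψ : Z → Set Z := fun x => Φ x ∩ B (G (Φ x) (q x))
  have hmem : ∀ x z, z ∈ Φ x → z ∈ B (q x) → z ∈ Ψ x := by
    intro x z h1 h2
    refine ⟨h1, ?_⟩
    have : (Φ x ∩ B (q x)).Nonempty := ⟨z, h1, h2⟩
    simpa only [G, if_pos this] using h2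
  -- A chain for `Φ` is shadowed by a chain for `Ψ`: each point is replaced by one with the same value
  -- of `Φ` whose target ball is the one containing the next point.
  have claim : ∀ x y, Relation.TransGen (fun a b => b ∈ Φ a) x y → ∀ w i, x ∈ Φ w → x ∈ B i →
      ∃ x', x' ∈ Φ w ∧ x' ∈ B i ∧ Φ x' = Φ x ∧ Relation.TransGen (fun a b => b ∈ Ψ a) x' y := by
    intro x y h
    induction h using Relation.TransGen.head_induction_on with
    | single h =>
      intro w i h1 h2
      rename_i x
      obtain ⟨j, hj⟩ := hB y
      obtain ⟨x', h3, h4, h5, h6⟩ := key x w i j x h1 h2 rfl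
      exact ⟨x', h3, h4, h5, .single (hmem x' y (h5 ▸ h) (h6 ▸ hj))⟩
    | head h h0 ih =>
      rename_i x z
      intro w i h1 h2
      obtain ⟨i', hi'⟩ := hB z
      obtain ⟨z', hz1, hz2, -, hz4⟩ := ih x i' h hi'
      obtain ⟨j, hj⟩ := hB z'
      obtain ⟨x', h3, h4, h5, h6⟩ := key x w i j x h1 h2 rfl
      exact ⟨x', h3, h4, h5, .head (hmem x' z' (h5 ▸ hz1) (h6 ▸ hj)) hz4⟩
  refine ⟨Ψ, ⟨?_, fun x => (hΦ.opn x).inter Metric.isOpen_ball,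
    fun x => hG _ _ (hΦ.nonempty x), ?_⟩, fun x => inter_subset_left, ?_⟩
  · exact (hΦ.lc.prodMk hqlc).comp fun p : Set Z × s => p.1 ∩ B (G p.1 p.2)
  · intro x y
    obtain ⟨z, hz1, hz2⟩ := hG (Φ x) (q x) (hΦ.nonempty x)
    obtain ⟨z', h1, h2, -, h4⟩ := claim z y (hΦ.trans z y) x _ hz1 hz2
    exact .head ⟨h1, h2⟩ h4
  · intro x y hy z hz
    have h1 := Metric.mem_ball.1 hy.2
    have h2 := Metric.mem_ball'.1 hz.2
    have := dist_triangle y (G (Φ x) (q x) : Z) z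
    linarith

end Cantoroid

/-- In a finite digraph in which `v` can be reached from every vertex, there is a rank that can
be lowered along an edge at every vertex other than `v`. -/
theorem exists_rank {Q : Type*} [Finite Q] (E : Q → Q → Prop) (v : Q)
    (h : ∀ a, Relation.ReflTransGen E a v) :
    ∃ (d : Q → ℕ) (K : ℕ), (∀ a, d a ≤ K) ∧ d v = 0 ∧ ∀ a, a ≠ v → ∃ b, E a b ∧ d b < d a := by
  classical
  let S : ℕ → Set Q := fun n => Nat.rec (motive := fun _ => Set Q) {v} (fun _ s => {a | ∃ b ∈ s, E a b}) n
  have hS : ∀ a, ∃ n, a ∈ S n := by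
    intro a
    induction h a using Relation.ReflTransGen.head_induction_on with
    | refl => exact ⟨0, rfl⟩
    | head h h0 ih =>
      obtain ⟨n, hn⟩ := ih
      exact ⟨n + 1, _, hn, h⟩
  have := Fintype.ofFinite Q
  let d : Q → ℕ := fun a => Nat.find (hS a)
  refine ⟨d, Finset.univ.sup d, fun a => Finset.le_sup (f := d) (Finset.mem_univ a), ?_, ?_⟩
  · exact (Nat.find_eq_zero (hS v)).2 rfl
  · intro a ha
    have h1 := Nat.find_spec (hS a)
    change ∃ b, E a b ∧ d b < d a
    change a ∈ S (d a) at h1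
    rcases hn : d a with _ | n
    · rw [hn] at h1; exact absurd h1 ha
    · rw [hn] at h1
      obtain ⟨b, hb, hE⟩ := h1
      refine ⟨b, hE, ?_⟩
      exact Nat.lt_succ_of_le (Nat.find_min' (hS b) hb)

section Cantoroid
variable {Z : Type*} [MetricSpace Z] [CompactSpace Z]

/-- A chained relation on a cantoroid can be shrunk so that, off a given nonempty open set `V`, a
locally constant function with values in `ℕ` strictly decreases along it. Hence no nonempty set
invariant under a selection of the closed relation is disjoint from `V`. -/
theorem Chained.level (hiso : NoIsolatedPoints Z)
    (hD : Dense {x : Z | connectedComponent x = {x}}) {Φ : Z → Set Z} (hΦ : Chained Φ)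
    {V : Set Z} (hV : IsOpen V) (hVne : V.Nonempty) :
    ∃ (Ψ : Z → Set Z) (l : Z → ℕ), Chained Ψ ∧ (∀ x, Ψ x ⊆ Φ x) ∧ IsLocallyConstant l ∧
      ∀ x, x ∉ V → ∀ y ∈ Ψ x, l y < l x := by
  classical
  -- It suffices to treat a clopen subset of `V` on which `Φ` is constant.
  obtain ⟨W, hWc, hWne, hWV, hWΦ⟩ : ∃ W, IsClopen W ∧ W.Nonempty ∧ W ⊆ V ∧
      ∀ x ∈ W, ∀ y ∈ W, Φ x = Φ y := by
    obtain ⟨x, hx, hxD, -⟩ := exists_degenerate hiso hD hV hVne (t := ∅) finite_empty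
    obtain ⟨W, hW, hxW, hWs⟩ := exists_isClopen_subset (z := x)
      (hV.inter (hΦ.lc.isOpen_fiber (Φ x))) (by
        rw [hxD]; rintro _ rfl; exact ⟨hx, rfl⟩)
    exact ⟨W, hW, ⟨x, hxW⟩, fun y hy => (hWs hy).1, fun y hy z hz =>
      (hWs hy).2.trans (hWs hz).2.symm⟩
  suffices H : ∃ (Ψ : Z → Set Z) (l : Z → ℕ), Chained Ψ ∧ (∀ x, Ψ x ⊆ Φ x) ∧
      IsLocallyConstant l ∧ ∀ x, x ∉ W → ∀ y ∈ Ψ x, l y < l x by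
    obtain ⟨Ψ, l, h1, h2, h3, h4⟩ := H
    exact ⟨Ψ, l, h1, h2, h3, fun x hx => h4 x fun h => hx (hWV h)⟩
  let c0 : Z → Set Z × Prop := fun x => (Φ x, x ∈ W)
  have hWlc : IsLocallyConstant (fun x => x ∈ W) := by
    rw [IsLocallyConstant.iff_eventually_eq]
    intro x
    by_cases hx : x ∈ W
    · filter_upwards [hWc.isOpen.mem_nhds hx] with y hy
      simp [hx, hy]
    · filter_upwards [hWc.compl.isOpen.mem_nhds hx] with y hy
      have hy' : y ∉ W := hy
      simp [hx, hy']
  have hc0 : IsLocallyConstant c0 := hΦ.lc.prodMk hWlc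
  have := hc0.range_finite.to_subtype
  let Q := range c0
  let c : Z → Q := rangeFactorization c0
  have hcs : Function.Surjective c := rangeFactorization_surjective
  have hc : IsLocallyConstant c := by
    intro s
    have : c ⁻¹' s = c0 ⁻¹' (Subtype.val '' s) := by
      ext x
      constructor
      · intro hx; exact ⟨c x, hx, rfl⟩
      · rintro ⟨y, hy, hxy⟩
        have : c x = y := Subtype.ext hxy.symm
        rwa [mem_preimage, this]
    rw [this]; exact hc0 _
  have hcΦ : ∀ {x y}, c x = c y → Φ x = Φ y := fun h => congrArg (fun p : Q => p.1.1) h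
  have hcW : ∀ {x y}, c x = c y → (x ∈ W ↔ y ∈ W) := fun h =>
    iff_of_eq (congrArg (fun p : Q => p.1.2) h)
  obtain ⟨w0, hw0⟩ := hWne
  let v : Q := c w0
  have hcv : ∀ {x}, c x = v ↔ x ∈ W := by
    intro x
    refine ⟨fun h => (hcW h).2 hw0, fun h => ?_⟩
    refine Subtype.ext (Prod.ext (hWΦ x h w0 hw0) ?_)
    simp [c, v, rangeFactorization, c0, h, hw0]
  let E : Q → Q → Prop := fun a b => ∃ x y, c x = a ∧ c y = b ∧ y ∈ Φ x
  have hE : ∀ a b, Relation.TransGen E a b := by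
    intro a b
    obtain ⟨x, rfl⟩ := hcs a
    obtain ⟨y, rfl⟩ := hcs b
    exact (hΦ.trans x y).lift c fun x y h => ⟨x, y, rfl, rfl, h⟩
  -- `d` is the distance to the class `v` of the set `W`, and `e` is the distance from it.
  obtain ⟨d, K, hdK, hdv, hd⟩ := exists_rank E v fun a => (hE a v).to_reflTransGen
  obtain ⟨e, N, heN, hev, he⟩ := exists_rank (fun a b => E b a) v fun a => by
    have := (hE v a).to_reflTransGen
    exact Relation.reflTransGen_swap.1 this
  have he' : ∀ b : {b : Q // b ≠ v}, ∃ a, E a b ∧ e a < e b := fun b => he b b.2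
  choose pr hprE hpre using he'
  have hd' : ∀ a : {a : Q // a ≠ v}, ∃ b, E a b ∧ d b < d a := fun a => hd a a.2
  choose nx hnxE hnxd using hd'
  have hUE : ∀ a b : Q, E a b → ∃ U : Set Z, IsOpen U ∧ U.Nonempty ∧
      ∀ z ∈ U, c z = b ∧ ∀ x, c x = a → z ∈ Φ x := by
    rintro _ _ ⟨x, y, rfl, rfl, hxy⟩
    refine ⟨c ⁻¹' {c y} ∩ Φ x, (hc.isOpen_fiber _).inter (hΦ.opn x), ⟨y, rfl, hxy⟩, ?_⟩
    rintro z ⟨hz1, hz2⟩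
    exact ⟨hz1, fun x' hx' => hcΦ hx' ▸ hz2⟩
  choose! U hUo hUne hU using hUE
  let UU : {b : Q // b ≠ v} ⊕ {a : Q // a ≠ v} → Set Z :=
    Sum.elim (fun b => U (pr b) b) (fun a => U a (nx a))
  obtain ⟨H, hHc, hHne, hHU, hHd⟩ := exists_disjoint_clopen hiso hD (U := UU)
    (by rintro (b | a); exacts [hUo _ _ (hprE b), hUo _ _ (hnxE a)])
    (by rintro (b | a); exacts [hUne _ _ (hprE b), hUne _ _ (hnxE a)])
  -- The reserved sets carry high levels, decreasing with the distance from `W`.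
  let T : Set Z := ⋃ b, H (Sum.inl b)
  have hTc : IsClopen T := isClopen_iUnion_of_finite fun b => hHc _
  let l : Z → ℕ := fun z => if z ∈ T then K + 1 + (N - e (c z)) else d (c z)
  have hHb : ∀ b, ∀ z ∈ H (Sum.inl b), c z = b ∧ z ∈ T ∧ ∀ x, c x = pr b → z ∈ Φ x := by
    intro b z hz
    have h := hU _ _ (hprE b) z (hHU (Sum.inl b) hz)
    exact ⟨h.1, mem_iUnion.2 ⟨b, hz⟩, h.2⟩
  have hHa : ∀ a, ∀ z ∈ H (Sum.inr a), c z = nx a ∧ z ∉ T ∧ ∀ x, c x = a → z ∈ Φ x := by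
    intro a z hz
    have h := hU _ _ (hnxE a) z (hHU (Sum.inr a) hz)
    refine ⟨h.1, fun hT => ?_, h.2⟩
    obtain ⟨b, hb⟩ := mem_iUnion.1 hT
    exact (hHd (by simp : (Sum.inl b : {b : Q // b ≠ v} ⊕ {a : Q // a ≠ v}) ≠ Sum.inr a)).le_bot
      ⟨hb, hz⟩
  have hllc : IsLocallyConstant l := by
    rw [IsLocallyConstant.iff_eventually_eq]
    intro x
    have hcx := (IsLocallyConstant.iff_eventually_eq c).1 hc x
    by_cases hx : x ∈ T
    · filter_upwards [hTc.isOpen.mem_nhds hx, hcx] with y hy hcy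
      simp only [l, if_pos hx, if_pos hy, hcy]
    · filter_upwards [hTc.compl.isOpen.mem_nhds hx, hcx] with y hy hcy
      have hy' : y ∉ T := hy
      simp only [l, if_neg hx, if_neg hy', hcy]
  have hdl : ∀ z, d (c z) ≤ l z := by
    intro z
    have := hdK (c z)
    simp only [l]; split_ifs <;> omega
  -- Off `W` only the steps that lower the level are kept.
  let Ψ : Z → Set Z := fun x => if x ∈ W then Φ x else Φ x ∩ {y | l y < l x}
  have hΨW : ∀ x ∈ W, Ψ x = Φ x := fun x hx => if_pos hx
  have hΨ : ∀ x y, y ∈ Φ x → l y < l x → y ∈ Ψ x := by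
    intro x y h1 h2
    simp only [Ψ]; split_ifs
    exacts [h1, ⟨h1, h2⟩]
  have hΨne : ∀ x, (Ψ x).Nonempty := by
    intro x
    by_cases hx : x ∈ W
    · rw [hΨW x hx]; exact hΦ.nonempty x
    · have hne : c x ≠ v := fun h => hx (hcv.1 h)
      obtain ⟨z, hz⟩ := hHne (Sum.inr ⟨c x, hne⟩)
      obtain ⟨h1, h2, h3⟩ := hHa _ z hz
      refine ⟨z, hΨ x z (h3 x rfl) ?_⟩
      have : l z = d (c z) := if_neg h2
      rw [this, h1]
      exact (hnxd ⟨c x, hne⟩).trans_le (hdl x)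
  have toW : ∀ n x, l x = n → ∀ y, (∀ w ∈ W, Relation.TransGen (fun a b => b ∈ Ψ a) w y) →
      Relation.TransGen (fun a b => b ∈ Ψ a) x y := by
    intro n
    induction n using Nat.strong_induction_on with
    | _ n ih =>
      intro x hx y hy
      by_cases hxW : x ∈ W
      · exact hy x hxW
      · obtain ⟨z, hz⟩ := hΨne x
        have hz' : z ∈ Φ x ∩ {y | l y < l x} := by simpa only [Ψ, if_neg hxW] using hz
        exact .head hz (ih _ (hx ▸ hz'.2) z rfl y hy)
  have reach : ∀ n, ∀ b : {b : Q // b ≠ v}, e b = n → ∀ y ∈ H (Sum.inl b), ∀ w ∈ W,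
      Relation.TransGen (fun a b => b ∈ Ψ a) w y := by
    intro n
    induction n using Nat.strong_induction_on with
    | _ n ih =>
      intro b hb y hy w hw
      obtain ⟨h1, h2, h3⟩ := hHb b y hy
      by_cases hp : pr b = v
      · refine .single ?_
        rw [hΨW w hw]
        exact h3 w (by rw [hp]; exact hcv.2 hw)
      · obtain ⟨u, hu⟩ := hHne (Sum.inl ⟨pr b, hp⟩)
        obtain ⟨g1, g2, g3⟩ := hHb _ u hu
        have hlt := hpre b
        refine .tail (ih _ (hb ▸ hlt) ⟨pr b, hp⟩ rfl u hu w hw) (hΨ u y (h3 u g1) ?_)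
        have e1 := heN (c y)
        have e2 := heN (c u)
        have g1' : e (c u) = e (pr b) := by rw [g1]
        have h1' : e (c y) = e b := by rw [h1]
        simp only [l, if_pos g2, if_pos h2]
        omega
  refine ⟨Ψ, l, ⟨?_, ?_, hΨne, ?_⟩, ?_, hllc, ?_⟩
  · exact (hc0.prodMk hllc).comp fun p : (Set Z × Prop) × ℕ =>
      if p.1.2 then p.1.1 else p.1.1 ∩ {y | l y < p.2}
  · intro x
    simp only [Ψ]; split_ifs
    · exact hΦ.opn x
    · exact (hΦ.opn x).inter (hllc {n | n < l x})
  · intro x y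
    refine toW _ x rfl y fun w hw => ?_
    by_cases hyT : y ∈ T
    · obtain ⟨b, hb⟩ := mem_iUnion.1 hyT
      exact reach _ b rfl y hb w hw
    · obtain ⟨z, hzy⟩ : ∃ z, y ∈ Φ z := by
        obtain ⟨z, -, hz⟩ := Relation.TransGen.tail'_iff.1 (hΦ.trans w y)
        exact ⟨z, hz⟩
      by_cases hz : c z = v
      · refine .single ?_
        rw [hΨW w hw, hcΦ ((hcv.2 hw).trans hz.symm)]
        exact hzy
      · obtain ⟨u, hu⟩ := hHne (Sum.inl ⟨c z, hz⟩)
        obtain ⟨g1, g2, -⟩ := hHb _ u hu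
        refine .tail (reach _ ⟨c z, hz⟩ rfl u hu w hw) (hΨ u y (hcΦ g1 ▸ hzy) ?_)
        have := hdK (c y)
        simp only [l, if_neg hyT, if_pos g2]
        omega
  · intro x
    simp only [Ψ]; split_ifs
    · exact subset_rfl
    · exact inter_subset_left
  · intro x hx y hy
    have hy' : y ∈ Φ x ∩ {y | l y < l x} := by simpa only [Ψ, if_neg hx] using hy
    exact hy'.2

end Cantoroid

section Cantoroid
variable {Z : Type*} [MetricSpace Z] [CompactSpace Z]

/-- A cantoroid carries a minimal map that is constant on every component. -/
theorem exists_minMap_of_cantoroid [Nonempty Z] (hiso : NoIsolatedPoints Z)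
    (hD : Dense {x : Z | connectedComponent x = {x}}) :
    ∃ g : Z → Z, MinMap g ∧ ∀ x y, connectedComponent x = connectedComponent y → g x = g y := by
  classical
  obtain ⟨V, hVo, hV⟩ : ∃ V : ℕ → Set Z, (∀ n, IsOpen (V n)) ∧
      ∀ O, IsOpen O → O.Nonempty → ∃ n, (V n).Nonempty ∧ V n ⊆ O := by
    obtain ⟨b, hbc, -, hb⟩ := TopologicalSpace.exists_countable_basis Z
    obtain ⟨V, hV⟩ := (hbc.insert ∅).exists_eq_range ⟨∅, mem_insert _ _⟩
    refine ⟨V, fun n => ?_, ?_⟩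
    · rcases (hV ▸ mem_range_self n : V n ∈ insert ∅ b) with h | h
      · rw [h]; exact isOpen_empty
      · exact hb.isOpen h
    · rintro O hO ⟨x, hx⟩
      obtain ⟨W, hW, hxW, hWO⟩ := hb.exists_subset_of_mem_open hx hO
      obtain ⟨n, rfl⟩ := (hV ▸ mem_insert_of_mem _ hW : W ∈ range V)
      exact ⟨n, ⟨x, hxW⟩, hWO⟩
  have step : ∀ (n : ℕ) (Φ : {Φ : Z → Set Z // Chained Φ}), ∃ Ψ : {Φ : Z → Set Z // Chained Φ},
      (∀ x, Ψ.1 x ⊆ Φ.1 x) ∧ (∀ x, ∀ y ∈ Ψ.1 x, ∀ z ∈ Ψ.1 x, dist y z ≤ 1 / ((n : ℝ) + 1)) ∧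
      ((V n).Nonempty → ∃ l : Z → ℕ, IsLocallyConstant l ∧
        ∀ x, x ∉ V n → ∀ y ∈ Ψ.1 x, l y < l x) := by
    rintro n ⟨Φ, hΦ⟩
    obtain ⟨Ψ, hΨ, hsub, hdist⟩ := hΦ.split hiso hD (ε := 1 / ((n : ℝ) + 1)) (by positivity)
    by_cases hne : (V n).Nonempty
    · obtain ⟨Θ, l, h1, h2, h3, h4⟩ := hΨ.level hiso hD (hVo n) hne
      exact ⟨⟨Θ, h1⟩, fun x => (h2 x).trans (hsub x),
        fun x y hy z hz => hdist x y (h2 x hy) z (h2 x hz), fun _ => ⟨l, h3, h4⟩⟩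
    · exact ⟨⟨Ψ, hΨ⟩, hsub, hdist, fun h => absurd h hne⟩
  -- `Φ n` is a decreasing sequence of chained relations with values shrinking to points; `g x` is the
  -- point common to the closures of all `Φ n x`.
  choose nxt hsub hdist hlev using step
  let Φ : ℕ → {Φ : Z → Set Z // Chained Φ} := fun n =>
    Nat.rec (motive := fun _ => {Φ : Z → Set Z // Chained Φ})
      ⟨fun _ => univ, IsLocallyConstant.const _, fun _ => isOpen_univ, fun _ => univ_nonempty,
        fun _ _ => .single (mem_univ _)⟩ nxt n
  have hanti : ∀ x, Antitone fun n => closure ((Φ n).1 x) := fun x =>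
    antitone_nat_of_succ_le fun n => closure_mono (hsub n (Φ n) x)
  have hex : ∀ x, (⋂ n, closure ((Φ n).1 x)).Nonempty := fun x =>
    IsCompact.nonempty_iInter_of_directed_nonempty_isCompact_isClosed _
      (hanti x).directed_ge (fun n => ((Φ n).2.nonempty x).closure)
      (fun n => isClosed_closure.isCompact) fun n => isClosed_closure
  choose g hg using hex
  have hg' : ∀ n x, g x ∈ closure ((Φ n).1 x) := fun n x => mem_iInter.1 (hg x) n
  have hclose : ∀ n x y, (Φ (n + 1)).1 x = (Φ (n + 1)).1 y → dist (g x) (g y) ≤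
      1 / ((n : ℝ) + 1) := by
    intro n x y hxy
    have h1 := hg' (n + 1) x
    have h2 := hg' (n + 1) y
    rw [← hxy] at h2
    have hcl : IsClosed {p : Z × Z | dist p.1 p.2 ≤ 1 / ((n : ℝ) + 1)} :=
      isClosed_le continuous_dist continuous_const
    have h3 : closure ((Φ (n + 1)).1 x ×ˢ (Φ (n + 1)).1 x) ⊆
        {p : Z × Z | dist p.1 p.2 ≤ 1 / ((n : ℝ) + 1)} :=
      closure_minimal (fun p hp => hdist n (Φ n) x p.1 hp.1 p.2 hp.2) hcl
    rw [closure_prod_eq] at h3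
    exact h3 (mk_mem_prod h1 h2)
  refine ⟨g, ⟨?_, ?_⟩, ?_⟩
  · rw [Metric.continuous_iff']
    intro x ε hε
    obtain ⟨n, hn⟩ := exists_nat_one_div_lt hε
    filter_upwards [(IsLocallyConstant.iff_eventually_eq _).1 (Φ (n + 1)).2.lc x] with y hy
    exact (hclose n y x hy).trans_lt hn
  · intro N hNc hNne hN
    by_contra hne
    obtain ⟨n, hVne, hVN⟩ := hV Nᶜ hNc.isOpen_compl (nonempty_compl.2 hne)
    obtain ⟨l, hl, hlV⟩ := hlev n (Φ n) hVne
    have hlt : ∀ x ∈ N, l (g x) < l x := by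
      intro x hx
      have hcl : IsClosed {y | l y < l x} :=
        ⟨hl {n | n < l x}ᶜ⟩
      exact closure_minimal (hlV x fun h => hVN h hx) hcl (hg' (n + 1) x)
    -- An invariant set that misses `V n` would contain an infinite descending chain of levels.
    obtain ⟨x, hx, hmin⟩ := exists_minimalFor_of_wellFoundedLT (· ∈ N) l hNne
    exact absurd (hlt x hx) (not_lt.2 (hmin (hN hx) (hlt x hx).le))
  · intro x y hxy
    rw [← dist_le_zero]
    refine ge_of_tendsto (tendsto_one_div_add_atTop_nhds_zero_nat (𝕜 := ℝ))
      (Eventually.of_forall fun n => hclose n x y ?_)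
    exact (Φ (n + 1)).2.lc.apply_eq_of_isPreconnected isPreconnected_connectedComponent
      mem_connectedComponent (hxy ▸ mem_connectedComponent)

/-- A nonempty finite set has a cyclic permutation. -/
theorem exists_transitive_perm (Q : Type*) [Nonempty Q] [Finite Q] :
    ∃ σ : Equiv.Perm Q, ∀ x y, ∃ n : ℕ, (σ ^ n) x = y := by
  have := Fintype.ofFinite Q
  obtain ⟨k, hk⟩ : ∃ k, Fintype.card Q = k + 1 :=
    Nat.exists_eq_succ_of_ne_zero Fintype.card_ne_zero
  let e : Q ≃ ZMod (k + 1) := Fintype.equivOfCardEq (by rw [hk, ZMod.card])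
  have hrot : ∀ (a : ZMod (k + 1)) (n : ℕ),
      (e.symm.permCongr (Equiv.addRight 1) ^ n) (e.symm a) = e.symm (a + n) := by
    intro a n
    induction n with
    | zero => simp
    | succ n ih =>
      rw [pow_succ', Equiv.Perm.mul_apply, ih]
      simp [Equiv.permCongr_apply, add_assoc]
  refine ⟨e.symm.permCongr (Equiv.addRight 1), fun x y => ⟨(e y - e x).val, ?_⟩⟩
  have := hrot (e x) (e y - e x).val
  simpa using this

/-- Every nonempty finite discrete space carries a minimal map. -/
theorem exists_minMap_of_finite [Nonempty Z] [Finite Z] : ∃ g : Z → Z, MinMap g := by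
  obtain ⟨σ, hσ⟩ := exists_transitive_perm Z
  refine ⟨σ, continuous_of_discreteTopology, fun N _ ⟨x, hx⟩ hN => ?_⟩
  refine eq_univ_of_forall fun y => ?_
  obtain ⟨n, rfl⟩ := hσ x y
  induction n with
  | zero => exact hx
  | succ n ih => rw [pow_succ', Equiv.Perm.mul_apply]; exact hN ih

end Cantoroid

/-! ### Extension of maps that are constant on components -/

/-- In a Peano continuum, paths between all pairs of points can be chosen so that paths between
close points are uniformly small. -/
theorem exists_small_paths (Y : Type*) [MetricSpace Y] [CompactSpace Y] [PathConnectedSpace Y]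
    [LocallyPathConnectedSpace Y] :
    ∃ P : ∀ a b : Y, Path a b, ∀ ε > 0, ∃ δ > 0, ∀ a b, dist a b < δ →
      ∀ s, dist (P a b s) a < ε := by
  classical
  have hsm : ∀ ε > 0, ∃ δ > 0, ∀ a b : Y, dist a b < δ → JoinedIn (Metric.ball a ε) a b := by
    intro ε hε
    have hopen : ∀ y : Y, IsOpen (pathComponentIn (Metric.ball y (ε / 2)) y) := fun y =>
      Metric.isOpen_ball.pathComponentIn y
    obtain ⟨δ, hδ, h⟩ := lebesgue_number_lemma_of_metric (isCompact_univ (X := Y)) hopen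
      (fun y _ => mem_iUnion.2 ⟨y, mem_pathComponentIn_self (Metric.mem_ball_self (half_pos hε))⟩)
    refine ⟨δ, hδ, fun a b hab => ?_⟩
    obtain ⟨y, hy⟩ := h a (mem_univ a)
    have ha : JoinedIn (Metric.ball y (ε / 2)) y a := hy (Metric.mem_ball_self hδ)
    have hb : JoinedIn (Metric.ball y (ε / 2)) y b := hy (Metric.mem_ball'.2 hab)
    refine (ha.symm.trans hb).mono fun z hz => ?_
    have h1 := Metric.mem_ball.1 hz
    have h2 := Metric.mem_ball'.1 ha.target_mem
    have := dist_triangle z y a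
    exact Metric.mem_ball.2 (by linarith)
  -- The path from `a` to `b` is chosen in the ball of radius `1 / (n + 1)` around `a` for the largest
  -- `n` for which this is possible.
  let good : Y → Y → ℕ → Prop := fun a b n => JoinedIn (Metric.ball a (1 / ((n : ℝ) + 1))) a b
  have hmono : ∀ a b m n, m ≤ n → good a b n → good a b m := fun a b m n hmn h =>
    JoinedIn.mono h (Metric.ball_subset_ball (Nat.one_div_le_one_div hmn))
  have hP : ∀ a b : Y, ∃ γ : Path a b, ∀ n, good a b n →
      ∀ s, dist (γ s) a < 1 / ((n : ℝ) + 1) := by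
    intro a b
    by_cases hab : a = b
    · subst hab
      exact ⟨Path.refl a, fun n _ s => by simpa using by positivity⟩
    · obtain ⟨k, hk⟩ := exists_nat_one_div_lt (dist_pos.2 (Ne.symm hab))
      have hbad : ∃ n, ¬ good a b n := ⟨k, fun h =>
        absurd (Metric.mem_ball.1 h.target_mem) (not_lt.2 hk.le)⟩
      have hmin : ∀ n, good a b n → n < Nat.find hbad := fun n hn => by
        by_contra h
        exact Nat.find_spec hbad (hmono a b _ _ (not_lt.1 h) hn)
      rcases hm : Nat.find hbad with _ | m
      · exact ⟨PathConnectedSpace.somePath a b, fun n hn => absurd (hmin n hn) (by omega)⟩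
      · have hg : good a b m := not_not.1 (Nat.find_min hbad (by omega))
        refine ⟨hg.somePath, fun n hn s => ?_⟩
        have := hmin n hn
        exact (Metric.mem_ball.1 (hg.somePath_mem s)).trans_le
          (Nat.one_div_le_one_div (by omega))
  choose P hP using hP
  refine ⟨P, fun ε hε => ?_⟩
  obtain ⟨n, hn⟩ := exists_nat_one_div_lt hε
  obtain ⟨δ, hδ, h⟩ := hsm (1 / ((n : ℝ) + 1)) (by positivity)
  exact ⟨δ, hδ, fun a b hab s => (hP a b n (h a b hab) s).trans hn⟩

/-- Interpolation along a closed unbounded subset of the line by small paths. -/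
theorem exists_interp {Y : Type*} [MetricSpace Y] (P : ∀ a b : Y, Path a b)
    (hP : ∀ ε > 0, ∃ δ > 0, ∀ a b, dist a b < δ → ∀ s, dist (P a b s) a < ε)
    {C : Set ℝ} (hC : IsClosed C) (hlo : ∀ t, ∃ s ∈ C, s ≤ t) (hhi : ∀ t, ∃ s ∈ C, t ≤ s)
    {r : ℝ → Y} (hr : ContinuousOn r C) :
    ∃ F : ℝ → Y, Continuous F ∧ EqOn F r C ∧ ∀ t, ∃ p ∈ C, ∃ q ∈ C, p ≤ t ∧ t ≤ q ∧
      (∀ s ∈ C, s ≤ p ∨ q ≤ s) ∧ ∃ s, F t = P (r p) (r q) s := by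
  have h1 : ∀ t, ∃ p ∈ C, p ≤ t ∧ ∀ s ∈ C, s ≤ t → s ≤ p := by
    intro t
    obtain ⟨s, hs, hst⟩ := hlo t
    have hb : BddAbove (C ∩ Iic t) := ⟨t, fun _ h => h.2⟩
    have hm := (hC.inter isClosed_Iic).csSup_mem ⟨s, hs, hst⟩ hb
    exact ⟨_, hm.1, hm.2, fun s hs hst => le_csSup hb ⟨hs, hst⟩⟩
  have h2 : ∀ t, ∃ q ∈ C, t ≤ q ∧ ∀ s ∈ C, t ≤ s → q ≤ s := by
    intro t
    obtain ⟨s, hs, hst⟩ := hhi t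
    have hb : BddBelow (C ∩ Ici t) := ⟨t, fun _ h => h.2⟩
    have hm := (hC.inter isClosed_Ici).csInf_mem ⟨s, hs, hst⟩ hb
    exact ⟨_, hm.1, hm.2, fun s hs hst => csInf_le hb ⟨hs, hst⟩⟩
  choose p hpC hpt hp using h1
  choose q hqC hqt hq using h2
  -- `p t` and `q t` are the neighbours of `t` in `C`; on the gap between them `F` runs along the
  -- chosen path.
  let F : ℝ → Y := fun t => (P (r (p t)) (r (q t))).extend ((t - p t) / (q t - p t))
  have hpeq : ∀ {t}, t ∈ C → p t = t := fun {t} ht => le_antisymm (hpt t) (hp t t ht le_rfl)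
  have hF : ∀ t, ∃ s, F t = P (r (p t)) (r (q t)) s := by
    intro t
    have hmem : (t - p t) / (q t - p t) ∈ Icc (0 : ℝ) 1 := by
      have := hpt t; have := hqt t
      exact ⟨div_nonneg (by linarith) (by linarith),
        div_le_one_of_le₀ (by linarith) (by linarith)⟩
    exact ⟨⟨_, hmem⟩, Path.extend_apply _ hmem⟩
  have hFr : EqOn F r C := by
    intro t ht
    simp only [F, hpeq ht, sub_self, zero_div, Path.extend_zero]
  have hgap : ∀ a ∈ C, ∀ b ∈ C, a < b → (∀ s ∈ C, s ≤ a ∨ b ≤ s) → EqOn F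
      (fun t => (P (r a) (r b)).extend ((t - a) / (b - a))) (Icc a b) := by
    intro a ha b hb hab hs t ht
    rcases eq_or_lt_of_le ht.1 with rfl | hat
    · simp [hFr ha]
    rcases eq_or_lt_of_le ht.2 with rfl | htb
    · have : t - a ≠ 0 := by linarith
      simp [hFr hb, div_self this]
    have hpa : p t = a := le_antisymm
      ((hs _ (hpC t)).resolve_right fun h => absurd (hpt t) (not_le.2 (htb.trans_le h)))
      (hp t a ha hat.le)
    have hqb : q t = b := le_antisymm (hq t b hb htb.le)
      ((hs _ (hqC t)).resolve_left fun h => absurd (hqt t) (not_le.2 (h.trans_lt hat)))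
    have e : ∀ p' q', p' = a → q' = b → (P (r p') (r q')).extend ((t - p') / (q' - p')) =
        (P (r a) (r b)).extend ((t - a) / (b - a)) := by rintro _ _ rfl rfl; rfl
    exact e _ _ hpa hqb
  have hgc : ∀ a ∈ C, ∀ b ∈ C, a < b → (∀ s ∈ C, s ≤ a ∨ b ≤ s) → ContinuousOn F (Icc a b) := by
    intro a ha b hb hab hs
    refine ContinuousOn.congr ?_ (hgap a ha b hb hab hs)
    exact ((Path.continuous_extend _).comp
      ((continuous_id.sub continuous_const).div_const _)).continuousOn
  refine ⟨F, continuous_iff_continuousAt.2 fun t => ?_, hFr, fun t =>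
    ⟨p t, hpC t, q t, hqC t, hpt t, hqt t, fun s hs => ?_, hF t⟩⟩
  swap
  · rcases le_total s t with h | h
    exacts [Or.inl (hp t s hs h), Or.inr (hq t s hs h)]
  by_cases ht : t ∈ C
  swap
  · have hpl : p t < t := lt_of_le_of_ne (hpt t) fun h => ht (h ▸ hpC t)
    have hql : t < q t := lt_of_le_of_ne (hqt t) fun h => ht (h ▸ hqC t)
    refine (hgc _ (hpC t) _ (hqC t) (hpl.trans hql) fun s hs => ?_).continuousAt
      (Icc_mem_nhds hpl hql)
    rcases le_total s t with h | h
    exacts [Or.inl (hp t s hs h), Or.inr (hq t s hs h)]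
  -- If `C` accumulates at `t` from one side, the small paths give continuity from that side.
  have main : ∀ ε > 0, ∃ η > 0, ∀ u, |p u - t| < η → |q u - t| < η → dist (F u) (F t) < ε := by
    intro ε hε
    obtain ⟨δ, hδ, hPδ⟩ := hP (ε / 2) (half_pos hε)
    obtain ⟨η, hη, h⟩ := Metric.continuousOn_iff.1 hr t ht (min (δ / 2) (ε / 2))
      (lt_min (half_pos hδ) (half_pos hε))
    refine ⟨η, hη, fun u h1 h2 => ?_⟩
    have g1 := lt_min_iff.1 (h _ (hpC u) (by rwa [Real.dist_eq]))
    have g2 := lt_min_iff.1 (h _ (hqC u) (by rwa [Real.dist_eq]))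
    obtain ⟨s, hs⟩ := hF u
    have g3 := hPδ (r (p u)) (r (q u)) (by
      have := dist_triangle_right (r (p u)) (r (q u)) (r t)
      linarith [g1.1, g2.1]) s
    rw [hs, hFr ht]
    have := dist_triangle (P (r (p u)) (r (q u)) s) (r (p u)) (r t)
    linarith [g1.2]
  rw [continuousAt_iff_continuous_left_right]
  constructor
  · by_cases hacc : ∀ η > 0, ∃ s ∈ C, s < t ∧ t - η < s
    · rw [Metric.continuousWithinAt_iff]
      intro ε hε
      obtain ⟨η, hη, h⟩ := main ε hε
      obtain ⟨s, hs, hst, hsη⟩ := hacc η hη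
      refine ⟨t - s, by linarith, fun u hu hut => ?_⟩
      rw [Real.dist_eq, abs_lt] at hut
      have hu' : u ≤ t := hu
      have i1 := hp u s hs (by linarith)
      have i2 := hq u t ht hu'
      have i3 := hpt u
      have i4 := hqt u
      exact h u (by rw [abs_lt]; constructor <;> linarith) (by rw [abs_lt]; constructor <;> linarith)
    · push Not at hacc
      obtain ⟨η, hη, h⟩ := hacc
      obtain ⟨a, ha, hat, hmax⟩ : ∃ a ∈ C, a < t ∧ ∀ s ∈ C, s ≤ a ∨ t ≤ s := by
        refine ⟨p (t - η / 2), hpC _, (hpt _).trans_lt (by linarith), fun s hs => ?_⟩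
        by_cases hst : t ≤ s
        · exact Or.inr hst
        · exact Or.inl (hp _ s hs (by linarith [h s hs (not_le.1 hst)]))
      exact ((hgc a ha t ht hat hmax) t (right_mem_Icc.2 hat.le)).mono_of_mem_nhdsWithin
        (Icc_mem_nhdsLE hat)
  · by_cases hacc : ∀ η > 0, ∃ s ∈ C, t < s ∧ s < t + η
    · rw [Metric.continuousWithinAt_iff]
      intro ε hε
      obtain ⟨η, hη, h⟩ := main ε hε
      obtain ⟨s, hs, hst, hsη⟩ := hacc η hη
      refine ⟨s - t, by linarith, fun u hu hut => ?_⟩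
      rw [Real.dist_eq, abs_lt] at hut
      have hu' : t ≤ u := hu
      have i1 := hq u s hs (by linarith)
      have i2 := hp u t ht hu'
      have i3 := hpt u
      have i4 := hqt u
      exact h u (by rw [abs_lt]; constructor <;> linarith) (by rw [abs_lt]; constructor <;> linarith)
    · push Not at hacc
      obtain ⟨η, hη, h⟩ := hacc
      obtain ⟨b, hb, htb, hmin⟩ : ∃ b ∈ C, t < b ∧ ∀ s ∈ C, s ≤ t ∨ b ≤ s := by
        refine ⟨q (t + η / 2), hqC _, lt_of_lt_of_le (by linarith) (hqt _), fun s hs => ?_⟩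
        by_cases hst : s ≤ t
        · exact Or.inl hst
        · exact Or.inr (hq _ s hs (by linarith [h s hs (not_le.1 hst)]))
      exact ((hgc t ht b hb htb hmin) t (left_mem_Icc.2 htb.le)).mono_of_mem_nhdsWithin
        (Icc_mem_nhdsGE htb)

/-- A continuous function that is constant on components factors through a subset of the line. -/
theorem exists_factor {K Y : Type*} [MetricSpace K] [CompactSpace K] [MetricSpace Y]
    [Nonempty Y] {f : K → Y} (hf : Continuous f)
    (hcc : ∀ x y, connectedComponent x = connectedComponent y → f x = f y) :
    ∃ (p : K → ℝ) (s : ℝ → Y), Continuous p ∧ ContinuousOn s (range p) ∧ ∀ x, f x = s (p x) := by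
  classical
  -- Since `f` is constant on components, which are quasicomponents, there are countable clopen covers
  -- on whose members `f` is nearly constant.
  have hcov : ∀ n : ℕ, ∃ U : ℕ → Set K, (∀ i, IsClopen (U i)) ∧ (∀ x, ∃ i, x ∈ U i) ∧
      ∀ i, ∀ x ∈ U i, ∀ y ∈ U i, dist (f x) (f y) < 1 / ((n : ℝ) + 1) := by
    intro n
    have : ∀ x, ∃ V, IsClopen V ∧ x ∈ V ∧ ∀ y ∈ V, dist (f y) (f x) < 1 / ((n : ℝ) + 1) / 2 := by
      intro x
      obtain ⟨V, h1, h2, h3⟩ := exists_isClopen_subset (z := x)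
        (U := f ⁻¹' Metric.ball (f x) (1 / ((n : ℝ) + 1) / 2)) (Metric.isOpen_ball.preimage hf) (by
          intro y hy
          rw [mem_preimage, hcc y x (connectedComponent_eq hy).symm]
          exact Metric.mem_ball_self (by positivity))
      exact ⟨V, h1, h2, h3⟩
    choose V hV hxV hVd using this
    obtain ⟨s, hs, hsU⟩ := TopologicalSpace.countable_cover_nhds fun x =>
      (hV x).isOpen.mem_nhds (hxV x)
    obtain ⟨U, hU⟩ := ((hs.image V).insert ∅).exists_eq_range ⟨∅, mem_insert _ _⟩
    refine ⟨U, fun i => ?_, fun x => ?_, fun i x hx y hy => ?_⟩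
    · rcases (hU ▸ mem_range_self i : U i ∈ insert ∅ (V '' s)) with h | ⟨z, -, h⟩
      · rw [h]; exact isClopen_empty
      · rw [← h]; exact hV z
    · obtain ⟨z, hz, hxz⟩ := mem_iUnion₂.1 (hsU ▸ mem_univ x : x ∈ ⋃ x ∈ s, V x)
      obtain ⟨i, hi⟩ := (hU ▸ mem_insert_of_mem _ (mem_image_of_mem V hz) : V z ∈ range U)
      exact ⟨i, hi ▸ hxz⟩
    · rcases (hU ▸ mem_range_self i : U i ∈ insert ∅ (V '' s)) with h | ⟨z, -, h⟩
      · rw [h] at hx; exact hx.elim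
      · rw [← h] at hx hy
        have := dist_triangle_right (f x) (f y) (f z)
        linarith [hVd z x hx, hVd z y hy]
  choose U hU hxU hUd using hcov
  -- Membership in the clopen sets is coded by a point of the standard Cantor set in the line.
  let β : K → ℕ → Bool := fun x k => decide (x ∈ U k.unpair.1 k.unpair.2)
  have hβ : Continuous β := by
    refine continuous_pi fun k => ?_
    rw [continuous_bool_rng true]
    have : (fun x => β x k) ⁻¹' {true} = U k.unpair.1 k.unpair.2 := by ext x; simp [β]
    rw [this]; exact hU _ _
  let p : K → ℝ := fun x => (cantorSetHomeomorphNatToBool.symm (β x) : ℝ)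
  have hp : Continuous p := continuous_subtype_val.comp
    (cantorSetHomeomorphNatToBool.symm.continuous.comp hβ)
  have hpf : ∀ x y, p x = p y → f x = f y := by
    intro x y hxy
    have hb : β x = β y := cantorSetHomeomorphNatToBool.symm.injective (Subtype.ext hxy)
    rw [← dist_le_zero]
    refine ge_of_tendsto (tendsto_one_div_add_atTop_nhds_zero_nat (𝕜 := ℝ))
      (Eventually.of_forall fun n => ?_)
    obtain ⟨i, hi⟩ := hxU n x
    have h := congrFun hb (Nat.pair n i)
    simp only [β, Nat.unpair_pair, decide_eq_decide] at h
    exact (hUd n i x hi y (h.1 hi)).le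
  let s : ℝ → Y := fun t => if h : t ∈ range p then f h.choose else Classical.arbitrary Y
  have hs : ∀ x, f x = s (p x) := by
    intro x
    have h : p x ∈ range p := mem_range_self x
    simp only [s, dif_pos h]
    exact hpf _ _ h.choose_spec.symm
  refine ⟨p, s, hp, ?_, hs⟩
  rw [continuousOn_iff_continuous_domRestrict]
  have hq : IsQuotientMap (rangeFactorization p) :=
    (hp.subtype_mk _).isClosedMap.isQuotientMap (hp.subtype_mk _) rangeFactorization_surjective
  rw [hq.continuous_iff]
  have : (range p).domRestrict s ∘ rangeFactorization p = f := by
    ext x; exact (hs x).symm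
  rw [this]; exact hf

/-- A map into a Peano continuum that is constant on the components of a closed set extends. -/
theorem exists_extension_of_const_components {K X Y : Type*} [MetricSpace K] [CompactSpace K]
    [MetricSpace Y] [CompactSpace Y] [PathConnectedSpace Y] [LocallyPathConnectedSpace Y]
    [TopologicalSpace X] [NormalSpace X] {e : K → X} (he : IsClosedEmbedding e)
    {f : K → Y} (hf : Continuous f)
    (hcc : ∀ x y, connectedComponent x = connectedComponent y → f x = f y) :
    ∃ F : X → Y, Continuous F ∧ ∀ x, F (e x) = f x := by
  rcases isEmpty_or_nonempty K with hK | hK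
  · obtain ⟨y⟩ := PathConnectedSpace.nonempty (X := Y)
    exact ⟨fun _ => y, continuous_const, fun x => hK.elim x⟩
  obtain ⟨P, hP⟩ := exists_small_paths Y
  obtain ⟨p, s, hp, hs, hfs⟩ := exists_factor hf hcc
  have hC : IsCompact (range p) := isCompact_range hp
  obtain ⟨m, hm, hml⟩ := hC.exists_isLeast (range_nonempty p)
  obtain ⟨M, hM, hMl⟩ := hC.exists_isGreatest (range_nonempty p)
  have hmM : m ≤ M := hml hM
  -- Extending `s` by constants beyond the range makes its domain unbounded in both directions, as
  -- `exists_interp` requires.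
  let r : ℝ → Y := fun t => s (max m (min M t))
  have hrs : EqOn r s (range p) := by
    intro t ht
    simp only [r, min_eq_right (hMl ht), max_eq_right (hml ht)]
  have hr : ContinuousOn r (Iic m ∪ range p ∪ Ici M) := by
    refine ContinuousOn.union_of_isClosed (ContinuousOn.union_of_isClosed ?_ ?_ isClosed_Iic
      hC.isClosed) ?_ (isClosed_Iic.union hC.isClosed) isClosed_Ici
    · refine (continuousOn_const (c := s m)).congr fun t ht => ?_
      have ht' : t ≤ m := ht
      simp only [r, min_eq_right (ht'.trans hmM), max_eq_left ht']
    · exact hs.congr hrs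
    · refine (continuousOn_const (c := s M)).congr fun t ht => ?_
      have ht' : M ≤ t := ht
      simp only [r, min_eq_left ht', max_eq_right hmM]
  obtain ⟨G, hG, hGr, -⟩ := exists_interp P hP
    ((isClosed_Iic.union hC.isClosed).union isClosed_Ici)
    (fun t => ⟨min t m, Or.inl (Or.inl (min_le_right t m)), min_le_left t m⟩)
    (fun t => ⟨max t M, Or.inr (le_max_right t M), le_max_left t M⟩) hr
  obtain ⟨g, hg⟩ := ContinuousMap.exists_extension he ⟨p, hp⟩
  refine ⟨fun x => G (g x), hG.comp g.continuous, fun x => ?_⟩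
  have h1 : g (e x) = p x := congrArg (fun h : C(K, ℝ) => h x) hg
  show G (g (e x)) = f x
  rw [h1, hGr (Or.inl (Or.inr ⟨x, rfl⟩)), hrs ⟨x, rfl⟩, hfs]

/-! ### Finite unions of circles -/

theorem MinMap.conj {Z W : Type*} [TopologicalSpace Z] [TopologicalSpace W] (e : Z ≃ₜ W)
    {g : Z → Z} (hg : MinMap g) : MinMap fun w => e (g (e.symm w)) := by
  refine ⟨e.continuous.comp (hg.cont.comp e.symm.continuous), fun N hN hne hmap => ?_⟩
  have h := hg.eq_univ (e ⁻¹' N) (hN.preimage e.continuous)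
    (hne.preimage e.surjective) (fun x hx => by simpa using hmap hx)
  exact eq_univ_of_forall fun w => by
    have : e.symm w ∈ e ⁻¹' N := h ▸ mem_univ _
    simpa using this

/-- A finite union of disjoint circles carries a minimal map: permute the circles cyclically and
rotate by an irrational angle. -/
theorem exists_minMap_circles (ι : Type*) [Finite ι] [Nonempty ι] [TopologicalSpace ι]
    [DiscreteTopology ι] : ∃ g : ι × AddCircle (1 : ℝ) → ι × AddCircle (1 : ℝ), MinMap g := by
  obtain ⟨σ, hσ⟩ := exists_transitive_perm ι
  let a : AddCircle (1 : ℝ) := ((√2 : ℝ) : AddCircle (1 : ℝ))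
  let T : ι × AddCircle (1 : ℝ) → ι × AddCircle (1 : ℝ) := fun p => (σ p.1, p.2 + a)
  have hT : ∀ (m : ℕ) i x, T^[m] (i, x) = ((σ ^ m) i, x + m • a) := by
    intro m
    induction m with
    | zero => simp
    | succ m ih =>
      intro i x
      rw [Function.iterate_succ_apply', ih, pow_succ', Equiv.Perm.mul_apply, succ_nsmul, ← add_assoc]
  refine ⟨T, ⟨?_, fun N hN hne hmap => ?_⟩⟩
  · exact (continuous_of_discreteTopology.comp continuous_fst).prodMk
      (continuous_snd.add continuous_const)
  obtain ⟨⟨i, x⟩, hx⟩ := hne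
  have hiter : ∀ m, ∀ p ∈ N, T^[m] p ∈ N := fun m => hmap.iterate m
  have : Finite (Equiv.Perm ι) := inferInstance
  have hk : 0 < orderOf σ := orderOf_pos σ
  set k := orderOf σ
  have hdense : DenseRange fun m : ℕ => m • (k • a) := by
    have h1 : DenseRange fun m : ℤ => m • (((k : ℝ) * √2 : ℝ) : AddCircle (1 : ℝ)) := by
      rw [AddCircle.denseRange_zsmul_coe_iff, div_one]
      exact irrational_sqrt_two.natCast_mul hk.ne'
    have h2 : (((k : ℝ) * √2 : ℝ) : AddCircle (1 : ℝ)) = k • a := by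
      rw [← nsmul_eq_mul]; rfl
    rw [h2] at h1
    exact denseRange_zsmul_iff_nsmul.1 h1
  -- The iterate `T^[k]` preserves each circle and rotates it by the irrational angle `k • a`.
  have hfib : ∀ y, (i, y) ∈ N := by
    intro y
    have hcl : IsClosed {y | (i, x + y) ∈ N} :=
      hN.preimage (continuous_const.prodMk (continuous_const.add continuous_id))
    have hsub : range (fun m : ℕ => m • (k • a)) ⊆ {y | (i, x + y) ∈ N} := by
      rintro _ ⟨m, rfl⟩
      have := hiter (k * m) _ hx
      rw [hT, pow_mul, pow_orderOf_eq_one, one_pow, mul_comm, mul_nsmul'] at this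
      simpa using this
    have h := closure_minimal hsub hcl (hdense (y - x))
    simpa using h
  refine eq_univ_of_forall fun ⟨j, y⟩ => ?_
  obtain ⟨m, rfl⟩ := hσ i j
  have := hiter m _ (hfib (y - m • a))
  rwa [hT, sub_add_cancel] at this

theorem FinUnionDisjCircles.exists_minMap {Z : Type*} [MetricSpace Z]
    (h : FinUnionDisjCircles (univ : Set Z)) : ∃ g : Z → Z, MinMap g := by
  obtain ⟨n, C, hn, hC, hdisj, hU⟩ := h
  have : Nonempty (Fin n) := ⟨⟨0, hn⟩⟩
  have : Fact ((0 : ℝ) < 1) := ⟨one_pos⟩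
  have hk : ∀ i, Nonempty (AddCircle (1 : ℝ) ≃ₜ C i) := by
    intro i
    obtain ⟨h⟩ := hC i
    have e : Circle ≃ₜ Metric.sphere (0 : ℂ) 1 :=
      Homeomorph.setCongr (s := (Submonoid.unitSphere ℂ : Set ℂ)) rfl
    exact ⟨((AddCircle.homeomorphCircle one_ne_zero).trans e).trans h.symm⟩
  let k := fun i => (hk i).some
  let ψ : Fin n × AddCircle (1 : ℝ) → Z := fun p => k p.1 p.2
  have hψ : Continuous ψ := by
    rw [continuous_prod_of_discrete_left]
    exact fun i => continuous_subtype_val.comp (k i).continuous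
  have hbij : Function.Bijective ψ := by
    constructor
    · rintro ⟨i, x⟩ ⟨j, y⟩ hxy
      have hij : i = j := by
        by_contra hne
        have hxy' : (k i x : Z) = k j y := hxy
        exact (hdisj hne).le_bot ⟨(k i x).2, hxy' ▸ (k j y).2⟩
      subst hij
      exact Prod.ext rfl ((k i).injective (Subtype.ext hxy))
    · intro z
      obtain ⟨i, hi⟩ := mem_iUnion.1 (hU ▸ mem_univ z : z ∈ ⋃ i, C i)
      exact ⟨(i, (k i).symm ⟨z, hi⟩), by simp [ψ]⟩
  obtain ⟨g, hg⟩ := exists_minMap_circles (Fin n)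
  exact ⟨_, hg.conj (hψ.homeoOfEquivCompactToT2 (f := Equiv.ofBijective ψ hbij))⟩

section CircleExt
variable {Y : Type*} [MetricSpace Y] [CompactSpace Y]

/-- In a rim-finite space, open sets with finite boundary separate a compact set from the complement
of a neighbourhood. -/
theorem RimFinite.exists_between (hY : RimFinite Y) {K V : Set Y} (hK : IsCompact K)
    (hV : IsOpen V) (hKV : K ⊆ V) :
    ∃ U, IsOpen U ∧ K ⊆ U ∧ closure U ⊆ V ∧ (frontier U).Finite := by
  refine hK.induction_on (p := fun S => ∃ U, IsOpen U ∧ S ⊆ U ∧ closure U ⊆ V ∧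
    (frontier U).Finite) ⟨∅, isOpen_empty, subset_rfl, by simp, by simp⟩ ?_ ?_ ?_
  · rintro s t hst ⟨U, h1, h2, h3⟩
    exact ⟨U, h1, hst.trans h2, h3⟩
  · rintro s t ⟨U, h1, h2, h3, h4⟩ ⟨U', h1', h2', h3', h4'⟩
    refine ⟨U ∪ U', h1.union h1', union_subset_union h2 h2', ?_, ?_⟩
    · rw [closure_union]; exact union_subset h3 h3'
    · exact (h4.union h4').subset fun x hx => (frontier_union_subset U U' hx).imp
        (fun h => h.1) fun h => h.2
  · intro x hx
    obtain ⟨U, h1, h2, h3, h4⟩ := hY x V hV (hKV hx)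
    exact ⟨U, mem_nhdsWithin_of_mem_nhds (h1.mem_nhds h2), U, h1, subset_rfl, h3, h4⟩

/-- A map defined on a circle extends to a neighbourhood of the circle. -/
theorem IsCircleSet.exists_nhd_extension {C V : Set Y} (hC : IsCircleSet C) (hCc : IsCompact C)
    (hV : IsOpen V) (hCV : C ⊆ V) {f : Y → Y} (hf : ContinuousOn f C) :
    ∃ W, IsOpen W ∧ C ⊆ W ∧ W ⊆ V ∧ ∃ F : Y → Y, ContinuousOn F W ∧ EqOn F f C := by
  obtain ⟨h⟩ := hC
  obtain ⟨φ, hφ⟩ := ContinuousMap.exists_extension (Y := ℂ) hCc.isClosed.isClosedEmbedding_subtypeVal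
    ⟨fun x => (h x : ℂ), continuous_subtype_val.comp h.continuous⟩
  have hφ' : ∀ x : C, φ x = h x := fun x => congrArg (fun g : C(C, ℂ) => g x) hφ
  have hnorm : ∀ x : C, ‖φ x‖ = 1 := fun x => by
    rw [hφ' x]; simp
  let W := V ∩ {x | φ x ≠ 0}
  have hW : IsOpen W := hV.inter (isOpen_ne_fun φ.continuous continuous_const)
  -- `h.symm ∘ u` retracts `W` onto the circle.
  let u : W → Metric.sphere (0 : ℂ) 1 := fun x => ⟨φ x / ‖φ x‖, by
    have : ‖φ x‖ ≠ 0 := norm_ne_zero_iff.2 x.2.2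
    simp [this]⟩
  have hu : Continuous u := by
    refine Continuous.subtype_mk ?_ _
    have h1 : Continuous fun x : W => φ x := φ.continuous.comp continuous_subtype_val
    refine h1.div (Complex.continuous_ofReal.comp h1.norm) fun x => ?_
    exact Complex.ofReal_ne_zero.2 (norm_ne_zero_iff.2 x.2.2)
  classical
  let F : Y → Y := fun x => if hx : x ∈ W then f (h.symm (u ⟨x, hx⟩)) else x
  refine ⟨W, hW, fun x hx => ⟨hCV hx, fun h0 => ?_⟩, inter_subset_left, F, ?_, ?_⟩
  · have := hnorm ⟨x, hx⟩
    rw [h0] at this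
    simp at this
  · rw [continuousOn_iff_continuous_domRestrict]
    have : W.domRestrict F = fun x => f (h.symm (u x)) := by
      ext x; exact dif_pos x.2
    rw [this]
    exact (continuousOn_iff_continuous_domRestrict.1 hf).comp (h.symm.continuous.comp hu)
  · intro x hx
    have hxW : x ∈ W := ⟨hCV hx, fun h0 => by
      have := hnorm ⟨x, hx⟩
      rw [h0] at this
      simp at this⟩
    have : u ⟨x, hxW⟩ = h ⟨x, hx⟩ := by
      refine Subtype.ext ?_
      show φ x / ‖φ x‖ = h ⟨x, hx⟩
      rw [hnorm ⟨x, hx⟩, hφ' ⟨x, hx⟩]; simp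
    simp only [F, dif_pos hxW, this, Homeomorph.symm_apply_apply]

/-- In a rim-finite Peano continuum, maps defined on finite unions of disjoint circles extend. -/
theorem exists_extension_of_circles [PathConnectedSpace Y] [LocallyPathConnectedSpace Y]
    (hY : RimFinite Y) {n : ℕ} {C : Fin n → Set Y} (hC : ∀ i, IsCircleSet (C i))
    (hdisj : Pairwise (Function.onFun Disjoint C)) {f : Y → Y} (hf : ContinuousOn f (⋃ i, C i)) :
    ∃ F : Y → Y, Continuous F ∧ EqOn F f (⋃ i, C i) := by
  classical
  have hCc : ∀ i, IsCompact (C i) := fun i => by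
    obtain ⟨h⟩ := hC i
    have : CompactSpace (C i) := h.symm.compactSpace
    exact isCompact_iff_compactSpace.2 this
  have hpair : ∀ i, ∃ V, IsOpen V ∧ C i ⊆ V ∧ ∀ j, j ≠ i → Disjoint (closure V) (C j) := by
    intro i
    have hcl : IsClosed (⋃ j ∈ {j | j ≠ i}, C j) :=
      (toFinite _).isClosed_biUnion fun j _ => (hCc j).isClosed
    obtain ⟨V, h1, h2, h3⟩ := normal_exists_closure_subset (hCc i).isClosed hcl.isOpen_compl
      (fun x hx hx' => by
        obtain ⟨j, hj, hxj⟩ := mem_iUnion₂.1 hx'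
        exact (hdisj hj).le_bot ⟨hxj, hx⟩)
    refine ⟨V, h1, h2, fun j hj => disjoint_left.2 fun x hx hxj => ?_⟩
    exact h3 hx (mem_iUnion₂.2 ⟨j, hj, hxj⟩)
  choose V hVo hCV hVd using hpair
  let V' : Fin n → Set Y := fun i => V i ∩ ⋂ j ∈ {j | j ≠ i}, (closure (V j))ᶜ
  have hV'o : ∀ i, IsOpen (V' i) := fun i => (hVo i).inter
    ((toFinite _).isOpen_biInter fun j _ => isClosed_closure.isOpen_compl)
  have hCV' : ∀ i, C i ⊆ V' i := fun i x hx => ⟨hCV i hx, mem_iInter₂.2 fun j hj h =>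
    (hVd j i (Ne.symm hj)).le_bot ⟨h, hx⟩⟩
  have hV'd : ∀ i j, ∀ x ∈ V' i, x ∈ V' j → i = j := by
    intro i j x hi hj
    by_contra hne
    exact mem_iInter₂.1 hi.2 j (Ne.symm hne) (subset_closure hj.1)
  have hloc : ∀ i, ∃ U, IsOpen U ∧ C i ⊆ U ∧ closure U ⊆ V' i ∧ (frontier U).Finite ∧
      ∃ F : Y → Y, ContinuousOn F (closure U) ∧ EqOn F f (C i) := by
    intro i
    obtain ⟨W, hW, hCW, hWV, F, hF, hFf⟩ := (hC i).exists_nhd_extension (hCc i) (hV'o i)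
      (hCV' i) (hf.mono (subset_iUnion C i))
    obtain ⟨U, h1, h2, h3, h4⟩ := hY.exists_between (hCc i) hW hCW
    exact ⟨U, h1, h2, h3.trans hWV, h4, F, hF.mono h3, hFf⟩
  choose U hUo hCU hUV hUfr F hF hFf using hloc
  -- The local extensions are prescribed on the neighbourhoods `U i`. As the boundaries are finite,
  -- their values there extend to a map `H` of the whole space, which is used off the `U i`.
  let Q : Set Y := ⋃ i, frontier (U i)
  have hQ : Q.Finite := finite_iUnion hUfr
  have := hQ.to_subtype
  let G : Y → Y := fun x => if h : ∃ i, x ∈ closure (U i) then F h.choose x else x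
  have hG : ∀ i, EqOn G (F i) (closure (U i)) := by
    intro i x hx
    have h : ∃ i, x ∈ closure (U i) := ⟨i, hx⟩
    have : h.choose = i := hV'd _ _ x (hUV _ h.choose_spec) (hUV i hx)
    simp only [G, dif_pos h, this]
  obtain ⟨H, hH, hHG⟩ := exists_extension_of_const_components (K := Q)
    hQ.isClosed.isClosedEmbedding_subtypeVal (f := fun x : Q => G x)
    continuous_of_discreteTopology (fun x y hxy => by
      rw [connectedComponent_eq_singleton, connectedComponent_eq_singleton] at hxy
      rw [singleton_injective hxy])
  let S : Set Y := ⋃ i, closure (U i)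
  have hGS : ContinuousOn G S := by
    refine continuousOn_iff_continuous_domRestrict.2 ?_
    refine LocallyFinite.continuous (f := fun i => (Subtype.val ⁻¹' closure (U i) : Set S))
      (locallyFinite_of_finite _) ?_ (fun i => isClosed_closure.preimage continuous_subtype_val)
      fun i => ?_
    · refine eq_univ_of_forall fun x => ?_
      obtain ⟨i, hi⟩ := mem_iUnion.1 x.2
      exact mem_iUnion.2 ⟨i, hi⟩
    · exact ((hF i).congr (hG i)).comp continuous_subtype_val.continuousOn fun x hx => hx
  let O : Set Y := ⋃ i, U i
  have hO : IsOpen O := isOpen_iUnion hUo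
  have hglue : ∀ x ∈ Oᶜ, x ∈ S → G x = H x := by
    intro x hx hxS
    obtain ⟨i, hi⟩ := mem_iUnion.1 hxS
    have : x ∈ Q := mem_iUnion.2 ⟨i, hi, by
      rw [(hUo i).interior_eq]; exact fun h => hx (mem_iUnion.2 ⟨i, h⟩)⟩
    exact (hHG ⟨x, this⟩).symm
  let R : Y → Y := fun x => if x ∈ S then G x else H x
  have hSc : IsClosed S := isClosed_iUnion_of_finite fun i => isClosed_closure
  refine ⟨R, ?_, ?_⟩
  · rw [← continuousOn_univ]
    have huniv : (univ : Set Y) = S ∪ Oᶜ := by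
      refine (eq_univ_of_forall fun x => ?_).symm
      by_cases hx : x ∈ O
      · obtain ⟨i, hi⟩ := mem_iUnion.1 hx
        exact Or.inl (mem_iUnion.2 ⟨i, subset_closure hi⟩)
      · exact Or.inr hx
    rw [huniv]
    refine ContinuousOn.union_of_isClosed ?_ ?_ hSc hO.isClosed_compl
    · exact hGS.congr fun x hx => if_pos hx
    · refine hH.continuousOn.congr fun x hx => ?_
      by_cases hxS : x ∈ S
      · simp only [R, if_pos hxS]; exact hglue x hx hxS
      · simp only [R, if_neg hxS]
  · intro x hx
    obtain ⟨i, hi⟩ := mem_iUnion.1 hx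
    have hxi : x ∈ closure (U i) := subset_closure (hCU i hi)
    have hxS : x ∈ S := mem_iUnion.2 ⟨i, hxi⟩
    simp only [R, if_pos hxS]
    rw [hG i hxi, hFf i hi]

end CircleExt

/-! ### Minimal sets and minimal maps -/

/-- A minimal set carries a minimal map, namely the restriction. -/
theorem MinimalSystemOn.exists_minMap {Y : Type*} [TopologicalSpace Y] {f : Y → Y} {M : Set Y}
    (hM : IsClosed M) (hf : Continuous f) (h : MinimalSystemOn f M) :
    ∃ g : M → M, MinMap g ∧ ∀ x, (g x : Y) = f x := by
  have hm : MapsTo f M M := fun x hx => h.2.1 ▸ mem_image_of_mem f hx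
  refine ⟨fun x => ⟨f x, hm x.2⟩, ⟨by fun_prop, fun N hN hne hmap => ?_⟩, fun _ => rfl⟩
  have h1 := h.2.2 (Subtype.val '' N) (by rintro _ ⟨x, -, rfl⟩; exact x.2) (hne.image _)
    (hM.isClosedEmbedding_subtypeVal.isClosedMap _ hN) (by
      rintro _ ⟨_, ⟨x, hx, rfl⟩, rfl⟩
      exact ⟨_, hmap hx, rfl⟩)
  refine eq_univ_of_forall fun x => ?_
  obtain ⟨y, hy, hyx⟩ : (x : Y) ∈ Subtype.val '' N := h1.symm ▸ x.2
  rwa [← Subtype.ext hyx]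

/-- A compact set is minimal for every map that restricts to a minimal map of it. -/
theorem MinMap.minimalSystemOn {Y : Type*} [TopologicalSpace Y] [T2Space Y] {f : Y → Y} {M : Set Y}
    (hM : IsCompact M) (hne : M.Nonempty) {g : M → M} (hg : MinMap g)
    (hfg : ∀ x : M, f x = g x) : MinimalSystemOn f M := by
  have : CompactSpace M := isCompact_iff_compactSpace.1 hM
  refine ⟨hne, ?_, fun N hNM hN hNc hmap => ?_⟩
  · ext y
    constructor
    · rintro ⟨x, hx, rfl⟩
      rw [hfg ⟨x, hx⟩]
      exact (g ⟨x, hx⟩).2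
    · intro hy
      obtain ⟨x, hx⟩ := hg.surjective ⟨y, hy⟩
      exact ⟨x, x.2, by rw [hfg, hx]⟩
  · have h := hg.eq_univ (Subtype.val ⁻¹' N) (hNc.preimage continuous_subtype_val)
      (by obtain ⟨x, hx⟩ := hN; exact ⟨⟨x, hNM hx⟩, hx⟩)
      (fun x hx => by
        show (g x : Y) ∈ N
        rw [← hfg]; exact hmap (mem_image_of_mem f hx))
    refine hNM.antisymm fun x hx => ?_
    have : (⟨x, hx⟩ : M) ∈ Subtype.val ⁻¹' N := by rw [h]; trivial
    exact this

theorem IsCircleSet.preimage_val {Y : Type*} [TopologicalSpace Y] {M C : Set Y} (hCM : C ⊆ M)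
    (hC : IsCircleSet C) : IsCircleSet (Subtype.val ⁻¹' C : Set M) := by
  obtain ⟨h⟩ := hC
  refine ⟨Homeomorph.trans ?_ h⟩
  exact
    { toFun := fun x => ⟨x.1, x.2⟩
      invFun := fun x => ⟨⟨x, hCM x.2⟩, x.2⟩
      left_inv := fun _ => rfl
      right_inv := fun _ => rfl
      continuous_toFun := by fun_prop
      continuous_invFun := by fun_prop }

theorem FinUnionDisjCircles.of_univ {Y : Type*} [TopologicalSpace Y] {M : Set Y}
    (h : FinUnionDisjCircles (univ : Set M)) : FinUnionDisjCircles M := by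
  obtain ⟨n, C, hn, hC, hd, hU⟩ := h
  refine ⟨n, fun i => Subtype.val '' C i, hn, fun i => (hC i).image IsEmbedding.subtypeVal,
    fun i j hij => (disjoint_image_iff Subtype.val_injective).2 (hd hij), ?_⟩
  rw [← image_iUnion, ← hU, image_univ, Subtype.range_val]

theorem FinUnionDisjCircles.univ_coe {Y : Type*} [TopologicalSpace Y] {M : Set Y}
    (h : FinUnionDisjCircles M) : FinUnionDisjCircles (univ : Set M) := by
  obtain ⟨n, C, hn, hC, hd, hU⟩ := h
  refine ⟨n, fun i => Subtype.val ⁻¹' C i, hn,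
    fun i => (hC i).preimage_val (hU ▸ subset_iUnion C i), fun i j hij => (hd hij).preimage _, ?_⟩
  rw [← preimage_iUnion, ← hU, Subtype.coe_preimage_self]

/-! ### A parametrization of the complement of `L` -/

/-- A homeomorphism of the open unit interval onto the line. -/
noncomputable def ioo01Homeo : Ioo (0 : ℝ) 1 ≃ₜ ℝ :=
  Homeomorph.trans
    { toFun := fun x => (⟨2 * x - 1, by constructor <;> linarith [x.2.1, x.2.2]⟩ : Ioo (-1 : ℝ) 1)
      invFun := fun y => ⟨(y + 1) / 2, by constructor <;> linarith [y.2.1, y.2.2]⟩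
      left_inv := fun x => Subtype.ext (by simp)
      right_inv := fun x => Subtype.ext (by simp; ring)
      continuous_toFun := by fun_prop
      continuous_invFun := by fun_prop }
    (orderIsoIooNegOneOne ℝ).symm.toHomeomorph

/-- A closed noncompact connected proper subset of the line is a closed half-line (in a form
sufficient for applications). -/
theorem eq_ray_of_closed {S : Set ℝ} (hS : IsClosed S) (hc : IsPreconnected S) (hnc : ¬ IsCompact S)
    (hu : S ≠ univ) :
    ((∃ a, Ici a ⊆ S) ∧ BddBelow S) ∨ ((∃ a, Iic a ⊆ S) ∧ BddAbove S) := by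
  have ho := hc.ordConnected
  have hne : S.Nonempty := by
    rw [nonempty_iff_ne_empty]; rintro rfl; exact hnc isCompact_empty
  obtain ⟨a, ha⟩ := hne
  have h1 : ¬ (BddBelow S ∧ BddAbove S) := fun ⟨⟨m, hm⟩, ⟨M, hM⟩⟩ =>
    hnc ((isCompact_Icc (a := m) (b := M)).of_isClosed_subset hS fun x hx => ⟨hm hx, hM hx⟩)
  have hA : ¬ BddAbove S → Ici a ⊆ S := fun h x hx => by
    obtain ⟨y, hy, hxy⟩ := not_bddAbove_iff.1 h x
    exact ho.out ha hy ⟨hx, hxy.le⟩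
  have hB : ¬ BddBelow S → Iic a ⊆ S := fun h x hx => by
    obtain ⟨y, hy, hxy⟩ := not_bddBelow_iff.1 h x
    exact ho.out hy ha ⟨hxy.le, hx⟩
  by_cases hb : BddBelow S
  · exact Or.inl ⟨⟨a, hA fun h => h1 ⟨hb, h⟩⟩, hb⟩
  · by_cases hb' : BddAbove S
    · exact Or.inr ⟨⟨a, hB hb⟩, hb'⟩
    · exact absurd (eq_univ_of_forall fun x => (le_total x a).elim (fun h => hB hb h)
        fun h => hA hb' h) hu

/-- `γ` parametrizes the complement of `L` as a half-line which starts at `γ 0` and accumulates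
exactly on `L`; for convenience it is extended to negative parameters as a constant. -/
structure RayParam {X : Type*} [TopologicalSpace X] (L : Set X) (γ : ℝ → X) : Prop where
  cont : Continuous γ
  neg : ∀ s ≤ 0, γ s = γ 0
  inj : InjOn γ (Ici 0)
  range_eq : range γ = Lᶜ
  eventually_mem : ∀ V, IsOpen V → L ⊆ V → ∀ᶠ s in atTop, γ s ∈ V
  dense : ∀ N, L ⊆ closure (γ '' Ici N)

section
variable {X : Type*} [TopologicalSpace X] [T2Space X]

/-- One end of the open interval `J`, in the coordinate `ψ`. -/
theorem end_of_ray {J K A : Set X} {ψ : ℝ → X} (hψ : IsEmbedding ψ) (hJ : range ψ = J)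
    (hKJ : Disjoint K J) (hA : A ⊆ J) (hray : IsRaySet A) (hc : IsCompact (K ∪ A))
    (hKA : A ≠ J) :
    ((∃ a, Ici a ⊆ ψ ⁻¹' A) ∧ BddBelow (ψ ⁻¹' A)) ∨
      ((∃ a, Iic a ⊆ ψ ⁻¹' A) ∧ BddAbove (ψ ⁻¹' A)) := by
  subst hJ
  have himg : ψ '' (ψ ⁻¹' A) = A := image_preimage_eq_of_subset hA
  obtain ⟨h⟩ := hray
  apply eq_ray_of_closed
  · have : ψ ⁻¹' A = ψ ⁻¹' (K ∪ A) := by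
      ext x
      exact ⟨fun h => Or.inr h, fun h => h.resolve_left fun hk =>
        hKJ.notMem_of_mem_left hk (mem_range_self x)⟩
    rw [this]
    exact hc.isClosed.preimage hψ.continuous
  · have hA' : IsPreconnected A := by
      have : PreconnectedSpace A := by
        have : PreconnectedSpace (Ici (0 : ℝ)) := isPreconnected_iff_preconnectedSpace.1 isPreconnected_Ici
        exact h.symm.surjective.denseRange.preconnectedSpace h.symm.continuous
      exact isPreconnected_iff_preconnectedSpace.2 this
    rw [← himg] at hA'
    exact hψ.isInducing.isPreconnected_image.1 hA'
  · intro hcomp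
    have hA' : IsCompact A := himg ▸ hcomp.image hψ.continuous
    have : CompactSpace A := isCompact_iff_compactSpace.1 hA'
    have : CompactSpace (Ici (0 : ℝ)) := h.compactSpace
    have := (isCompact_iff_compactSpace.2 this : IsCompact (Ici (0 : ℝ))).bddAbove
    exact not_bddAbove_Ici (0:ℝ) this
  · intro hu
    exact hKA (himg ▸ (by rw [hu, image_univ]))

/-- In the coordinate `ψ`, only a compact part of `A` lies outside a neighbourhood of `K`. -/
theorem bounded_preimage {J K A V : Set X} {ψ : ℝ → X} (hψ : IsEmbedding ψ) (hJ : range ψ = J)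
    (hA : A ⊆ J) (hc : IsCompact (K ∪ A)) (hV : IsOpen V) (hKV : K ⊆ V) :
    IsCompact (ψ ⁻¹' (A \ V)) := by
  have h1 : IsCompact (A \ V) := by
    have : A \ V = (K ∪ A) \ V := by
      ext x; simp only [Set.mem_sdiff, mem_union]
      exact ⟨fun h => ⟨Or.inr h.1, h.2⟩, fun h => ⟨h.1.resolve_left fun hk => h.2 (hKV hk), h.2⟩⟩
    rw [this]; exact hc.diff hV
  exact hψ.isInducing.isCompact_preimage' h1 (by rw [hJ]; exact sdiff_subset.trans hA)
end

/-- If the end `+∞` of the coordinate `ψ` on `J` approaches `L` and the end `-∞` approaches `r`, then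
the complement of `L` is parametrized by `γ 0 = r` and `γ s = ψ (log s)` for `s > 0`. -/
theorem RayParam.of_coordinate {X : Type*} [TopologicalSpace X] [T2Space X]
    {L J A B : Set X} {r : X}
    {ψ : ℝ → X} (hψ : IsOpenEmbedding ψ) (hJ : range ψ = J) (hU : L ∪ J ∪ {r} = univ)
    (hLJ : Disjoint L J) (hRJ : Disjoint {r} J) (hLR : Disjoint L {r})
    (hA : A ⊆ J) (hB : B ⊆ J) (hcA : IsCompact (L ∪ A)) (hcB : IsCompact ({r} ∪ B))
    (hLA : L ⊆ closure A) (hA1 : ∃ a, Ici a ⊆ ψ ⁻¹' A) (hA2 : BddBelow (ψ ⁻¹' A))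
    (hB1 : ∃ a, Iic a ⊆ ψ ⁻¹' B) : ∃ γ : ℝ → X, RayParam L γ := by
  have hrψ : ∀ t, ψ t ≠ r := fun t h =>
    hRJ.notMem_of_mem_left rfl (hJ ▸ h ▸ mem_range_self t)
  have hLψ : ∀ t, ψ t ∉ L := fun t h =>
    hLJ.notMem_of_mem_left h (hJ ▸ mem_range_self t)
  obtain ⟨a, ha⟩ := hA1
  obtain ⟨b, hb⟩ := hB1
  obtain ⟨c, hc⟩ := hA2
  have hbot : Tendsto ψ atBot (𝓝 r) := by
    refine (nhds_basis_opens r).tendsto_right_iff.2 fun V ⟨hrV, hV⟩ => ?_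
    obtain ⟨m, hm⟩ := (bounded_preimage hψ.isEmbedding hJ hB hcB hV
      (singleton_subset_iff.2 hrV)).bddBelow
    filter_upwards [Iic_mem_atBot b, Iio_mem_atBot m] with t h1 h2
    by_contra h
    exact absurd (hm ⟨hb h1, h⟩) (not_le.2 h2)
  let γ : ℝ → X := fun s => if s ≤ 0 then r else ψ (Real.log s)
  have hγ0 : ∀ s ≤ 0, γ s = r := fun s hs => if_pos hs
  have hγ1 : ∀ s, 0 < s → γ s = ψ (Real.log s) := fun s hs => if_neg (not_le.2 hs)
  have hγe : ∀ t, γ (Real.exp t) = ψ t := fun t => by rw [hγ1 _ (Real.exp_pos t), Real.log_exp]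
  refine ⟨γ, ?_, fun s hs => (hγ0 s hs).trans (hγ0 0 le_rfl).symm, ?_, ?_, ?_, ?_⟩
  · refine continuous_iff_continuousAt.2 fun s => ?_
    rcases lt_trichotomy s 0 with hs | rfl | hs
    · exact (continuousAt_const (y := r)).congr
        (by filter_upwards [Iio_mem_nhds hs] with t ht using (hγ0 t (le_of_lt ht)).symm)
    · refine continuousAt_iff_continuous_left_right.2 ⟨?_, ?_⟩
      · exact (continuousWithinAt_const (b := r)).congr (fun t ht => hγ0 t ht) (hγ0 0 le_rfl)
      · have h1 : ContinuousWithinAt γ (Ioi 0) 0 := by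
          rw [ContinuousWithinAt, hγ0 0 le_rfl]
          refine (hbot.comp Real.tendsto_log_nhdsGT_zero).congr' ?_
          filter_upwards [self_mem_nhdsWithin] with t ht using (hγ1 t ht).symm
        exact continuousWithinAt_Ioi_iff_Ici.1 h1
    · exact (hψ.continuous.continuousAt.comp (Real.continuousAt_log hs.ne')).congr
        (by filter_upwards [Ioi_mem_nhds hs] with t ht using (hγ1 t ht).symm)
  · intro s hs t ht hst
    rcases eq_or_lt_of_le (mem_Ici.1 hs) with h | h <;>
      rcases eq_or_lt_of_le (mem_Ici.1 ht) with h' | h'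
    · exact h.symm.trans h'
    · rw [hγ0 s h.ge, hγ1 t h'] at hst
      exact absurd hst.symm (hrψ _)
    · rw [hγ0 t h'.ge, hγ1 s h] at hst
      exact absurd hst (hrψ _)
    · rw [hγ1 s h, hγ1 t h'] at hst
      exact Real.log_injOn_pos h h' (hψ.injective hst)
  · ext x
    constructor
    · rintro ⟨s, rfl⟩
      rcases le_or_gt s 0 with hs | hs
      · rw [hγ0 s hs]; exact fun h => hLR.notMem_of_mem_left h rfl
      · rw [hγ1 s hs]; exact hLψ _
    · intro hx
      rcases (hU.symm ▸ mem_univ x : x ∈ L ∪ J ∪ {r}) with (h | h) | h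
      · exact absurd h hx
      · rw [← hJ] at h
        obtain ⟨t, rfl⟩ := h
        exact ⟨_, hγe t⟩
      · exact ⟨0, (hγ0 0 le_rfl).trans h.symm⟩
  · intro V hV hLV
    obtain ⟨m, hm⟩ := (bounded_preimage hψ.isEmbedding hJ hA hcA hV hLV).bddAbove
    filter_upwards [Ioi_mem_atTop (Real.exp (max a m))] with s hs
    have hs0 : 0 < s := (Real.exp_pos _).trans hs
    have hlog : max a m < Real.log s := (Real.lt_log_iff_exp_lt hs0).2 hs
    rw [hγ1 s hs0]
    by_contra h
    exact absurd (hm ⟨ha ((le_max_left a m).trans hlog.le), h⟩)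
      (not_le.2 ((le_max_right a m).trans_lt hlog))
  · intro N x hx
    set T := Real.log (max N 1)
    have h1 : A ⊆ ψ '' Icc c T ∪ γ '' Ici N := by
      intro y hy
      obtain ⟨t, rfl⟩ : y ∈ range ψ := hJ ▸ hA hy
      rcases le_or_gt t T with ht | ht
      · exact Or.inl ⟨t, ⟨hc hy, ht⟩, rfl⟩
      · refine Or.inr ⟨Real.exp t, ?_, hγe t⟩
        exact (le_max_left N 1).trans ((Real.log_lt_iff_lt_exp (by positivity)).1 ht).le
    have h2 := closure_mono h1 (hLA hx)
    rw [closure_union, (isCompact_Icc.image hψ.continuous).isClosed.closure_eq] at h2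
    refine h2.resolve_left ?_
    rintro ⟨t, -, rfl⟩
    exact hLψ t hx

/-- If `R = {r}` and `r ∉ L`, then the complement of `L` is a half-line accumulating on `L`. -/
theorem ClassC.exists_rayParam {X : Type*} [TopologicalSpace X] [T2Space X] {L J : Set X} {r : X}
    (hC : ClassC L J {r}) (hLR : Disjoint L {r}) : ∃ γ : ℝ → X, RayParam L γ := by
  obtain ⟨A, B, hAB, hrA, hrB, hcA, hLA, hcB, hRB⟩ := hC.rays
  obtain ⟨e0⟩ := hC.freeJ
  have hAJ : A ⊆ J := hAB ▸ subset_union_left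
  have hBJ : B ⊆ J := hAB ▸ subset_union_right
  have hLne := hC.connL.nonempty
  have hA : A ≠ J := by
    rintro rfl
    have h : L ∪ A = univ := by
      rw [← hcA.isClosed.closure_eq]
      exact (hC.denseJ.mono subset_union_right).closure_eq
    rcases (h.symm ▸ mem_univ r : r ∈ L ∪ A) with h | h
    · exact hLR.notMem_of_mem_left h rfl
    · exact hC.disjRJ.notMem_of_mem_left rfl h
  have hB : B ≠ J := by
    rintro rfl
    have h : {r} ∪ B = univ := by
      rw [← hcB.isClosed.closure_eq]
      exact (hC.denseJ.mono subset_union_right).closure_eq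
    obtain ⟨x, hx⟩ := hLne
    rcases (h.symm ▸ mem_univ x : x ∈ {r} ∪ B) with h | h
    · exact hLR.notMem_of_mem_left hx h
    · exact hC.disjLJ.notMem_of_mem_left hx h
  have hcover : ∀ ψ : ℝ → X, range ψ = J → ∀ t, t ∈ ψ ⁻¹' A ∨ t ∈ ψ ⁻¹' B := fun ψ hψ t =>
    (hAB.symm ▸ hψ ▸ mem_range_self t : ψ t ∈ A ∪ B)
  have key : ∀ e : J ≃ₜ ℝ, ∃ ψ : ℝ → X, IsOpenEmbedding ψ ∧ range ψ = J ∧ ∀ t, ψ t = e.symm t := by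
    intro e
    refine ⟨fun t => e.symm t, hC.openJ.isOpenEmbedding_subtypeVal.comp e.symm.isOpenEmbedding, ?_,
      fun _ => rfl⟩
    show range (Subtype.val ∘ e.symm) = J
    rw [range_comp, e.symm.surjective.range_eq, image_univ, Subtype.range_val]
  obtain ⟨ψ, hψ, hJ, -⟩ := key (e0.trans ioo01Homeo)
  obtain ⟨ψ', hψ', hJ', hneg⟩ : ∃ ψ' : ℝ → X, IsOpenEmbedding ψ' ∧ range ψ' = J ∧
      ∀ t, ψ' t = ψ (-t) :=
    ⟨fun t => ψ (-t), hψ.comp (Homeomorph.neg ℝ).isOpenEmbedding, by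
      show range (ψ ∘ Homeomorph.neg ℝ) = J
      rw [(Homeomorph.neg ℝ).surjective.range_comp, hJ], fun _ => rfl⟩
  have hfin := fun (φ : ℝ → X) (hφ : IsOpenEmbedding φ) (hφJ : range φ = J) =>
    RayParam.of_coordinate hφ hφJ hC.union_eq hC.disjLJ hC.disjRJ hLR hAJ hBJ hcA hcB
      (subset_union_left.trans hLA)
  have hendB := fun (φ : ℝ → X) (hφ : IsOpenEmbedding φ) (hφJ : range φ = J) =>
    end_of_ray hφ.isEmbedding hφJ hC.disjRJ hBJ hrB hcB hB
  have hstep : ∀ φ : ℝ → X, IsOpenEmbedding φ → range φ = J → (∃ a, Ici a ⊆ φ ⁻¹' A) →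
      BddBelow (φ ⁻¹' A) → ∃ γ : ℝ → X, RayParam L γ := by
    intro φ hφ hφJ h1 h2
    refine hfin φ hφ hφJ h1 h2 ?_
    rcases hendB φ hφ hφJ with h | h
    · exfalso
      obtain ⟨c, hc⟩ := h2
      obtain ⟨d, hd⟩ := h.2
      rcases hcover φ hφJ (min c d - 1) with h | h
      · have := hc h; linarith [min_le_left c d]
      · have := hd h; linarith [min_le_right c d]
    · exact h.1
  -- If `A` occupies the end `-∞` of `J`, the coordinate is reversed.
  rcases end_of_ray hψ.isEmbedding hJ hC.disjLJ hAJ hrA hcA hA with h | ⟨⟨a, ha⟩, ⟨c, hc⟩⟩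
  · exact hstep ψ hψ hJ h.1 h.2
  · refine hstep ψ' hψ' hJ' ⟨-a, fun t ht => ?_⟩ ⟨-c, fun t ht => ?_⟩
    · show ψ' t ∈ A
      rw [hneg]; exact ha (neg_le.1 (mem_Ici.1 ht))
    · have h1 : ψ (-t) ∈ A := hneg t ▸ ht
      exact neg_le.1 (hc h1)

/-! ### Minimal sets lie in `L` or in its complement -/

namespace RayParam
variable {X : Type*} [TopologicalSpace X] [T2Space X] {L : Set X} {γ : ℝ → X}

theorem notMem (h : RayParam L γ) (s : ℝ) : γ s ∉ L := by
  have : γ s ∈ Lᶜ := h.range_eq ▸ mem_range_self s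
  exact this

/-- The ray is closed up by `L`: together with `L`, the image of every closed set of parameters is
closed. -/
theorem isClosed_union_image (h : RayParam L γ) (hL : IsCompact L) {S : Set ℝ} (hS : IsClosed S)
    (hS0 : S ⊆ Ici 0) : IsClosed (L ∪ γ '' S) := by
  refine isOpen_compl_iff.1 (isOpen_iff_mem_nhds.2 fun x hx => ?_)
  have hxL : x ∉ L := fun h => hx (Or.inl h)
  obtain ⟨V, U, hV, hU, hLV, hxU, hd⟩ := hL.separation_of_notMem hxL
  obtain ⟨N, hN⟩ := eventually_atTop.1 (h.eventually_mem V hV hLV)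
  have hK : IsCompact (γ '' (S ∩ Icc 0 N)) :=
    (isCompact_Icc.inter_left hS).image h.cont
  filter_upwards [hU.mem_nhds hxU, hK.isClosed.isOpen_compl.mem_nhds
    (fun hx' => hx (Or.inr (image_mono inter_subset_left hx')))] with y hyU hyK
  rintro (hy | ⟨s, hs, rfl⟩)
  · exact hd.notMem_of_mem_left (hLV hy) hyU
  · rcases le_total s N with hsN | hsN
    · exact hyK ⟨s, ⟨hs, hS0 hs, hsN⟩, rfl⟩
    · exact hd.notMem_of_mem_left (hN s hsN) hyU

/-- The parametrization has a continuous inverse on the complement of `L`. -/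
theorem exists_inverse (h : RayParam L γ) (hL : IsCompact L) :
    ∃ σ : X → ℝ, ContinuousOn σ Lᶜ ∧ (∀ x ∉ L, γ (σ x) = x) ∧ (∀ x, 0 ≤ σ x) ∧
      ∀ s, 0 ≤ s → σ (γ s) = s := by
  have hex : ∀ x, ∃ s, 0 ≤ s ∧ (x ∉ L → γ s = x) := by
    intro x
    by_cases hx : x ∈ L
    · exact ⟨0, le_rfl, fun h => absurd hx h⟩
    · obtain ⟨s, rfl⟩ : x ∈ range γ := h.range_eq ▸ hx
      rcases le_total s 0 with hs | hs
      · exact ⟨0, le_rfl, fun _ => (h.neg s hs).symm⟩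
      · exact ⟨s, hs, fun _ => rfl⟩
  choose σ hσ0 hσ using hex
  have hinv : ∀ s, 0 ≤ s → σ (γ s) = s := fun s hs =>
    h.inj (hσ0 _) hs (hσ _ (h.notMem s))
  refine ⟨σ, ?_, hσ, hσ0, hinv⟩
  rw [continuousOn_iff_isClosed]
  intro S hS
  refine ⟨L ∪ γ '' (S ∩ Ici 0), h.isClosed_union_image hL (hS.inter isClosed_Ici)
    inter_subset_right, ?_⟩
  ext x
  constructor
  · rintro ⟨hx, hxL⟩
    exact ⟨Or.inr ⟨σ x, ⟨hx, hσ0 x⟩, hσ x hxL⟩, hxL⟩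
  · rintro ⟨hx | ⟨s, hs, rfl⟩, hxL⟩
    · exact absurd hx hxL
    · refine ⟨?_, hxL⟩
      show σ (γ s) ∈ S
      rw [hinv s hs.2]; exact hs.1

theorem compl_joined (h : RayParam L γ) {x y : X} (hx : x ∉ L) (hy : y ∉ L) : Joined x y := by
  obtain ⟨s, rfl⟩ : x ∈ range γ := h.range_eq ▸ hx
  obtain ⟨t, rfl⟩ : y ∈ range γ := h.range_eq ▸ hy
  exact (PathConnectedSpace.joined s t).map h.cont

/-- No path leads from the ray to `L`: while approaching `L` it would have to run through a whole
tail of the ray, which accumulates at every point of the nondegenerate set `L`. -/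
theorem not_joined (h : RayParam L γ) (hL : IsCompact L) (hLn : L.Nontrivial) {x y : X}
    (hx : x ∉ L) (hy : y ∈ L) : ¬ Joined x y := by
  rintro ⟨p⟩
  obtain ⟨σ, hσc, hσγ, hσ0, hσi⟩ := h.exists_inverse hL
  have hp : Continuous p.extend := p.continuous_extend
  obtain ⟨t, ht, htL, hfirst⟩ := exists_first (a := 0) (b := 1) (C := L) hp.continuousOn hL.isClosed
    ⟨1, ⟨zero_le_one, le_rfl⟩, by rw [p.extend_one]; exact hy⟩
  have ht0 : 0 < t := by
    refine lt_of_le_of_ne ht.1 ?_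
    rintro rfl
    rw [p.extend_zero] at htL
    exact hx htL
  -- `t` is the first time in `L`. Shortly before `t` the path stays away from a neighbourhood of some
  -- other point `z` of `L`, although it sweeps out a tail of the ray.
  obtain ⟨z, hz, hzt⟩ := hLn.exists_ne (p.extend t)
  obtain ⟨U, V, hU, hV, hptU, hzV, hd⟩ := t2_separation hzt.symm
  have hnear : ∀ᶠ s in 𝓝[<] t, p.extend s ∈ U :=
    (hp.tendsto t).mono_left nhdsWithin_le_nhds (hU.mem_nhds hptU)
  obtain ⟨a, ha, haU⟩ : ∃ a ∈ Ico 0 t, Ioo a t ⊆ {s | p.extend s ∈ U} :=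
    (mem_nhdsLT_iff_exists_mem_Ico_Ioo_subset ht0).1 hnear
  have hpL : ∀ s ∈ Ioo a t, p.extend s ∉ L := fun s hs =>
    hfirst s ⟨ha.1.trans hs.1.le, hs.2.le.trans ht.2⟩ hs.2
  have hQ : IsPreconnected ((fun s => σ (p.extend s)) '' Ioo a t) :=
    isPreconnected_Ioo.image _ (hσc.comp hp.continuousOn hpL)
  have hunb : ¬ BddAbove ((fun s => σ (p.extend s)) '' Ioo a t) := by
    rintro ⟨N, hN⟩
    have hK : IsClosed (γ '' Icc 0 N) := (isCompact_Icc.image h.cont).isClosed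
    have hmem : p.extend t ∈ γ '' Icc 0 N := by
      refine hK.mem_of_tendsto ((hp.tendsto t).mono_left (nhdsWithin_le_nhds (s := Iio t))) ?_
      filter_upwards [Ioo_mem_nhdsLT ha.2] with s hs
      exact ⟨σ (p.extend s), ⟨hσ0 _, hN ⟨s, hs, rfl⟩⟩, hσγ _ (hpL s hs)⟩
    obtain ⟨s, -, hs⟩ := hmem
    exact h.notMem s (hs ▸ htL)
  obtain ⟨m, hm⟩ : ((fun s => σ (p.extend s)) '' Ioo a t).Nonempty :=
    (nonempty_Ioo.2 ha.2).image _
  have htail : γ '' Ici m ⊆ U := by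
    rintro _ ⟨s, hs, rfl⟩
    obtain ⟨w, hw, hsw⟩ := not_bddAbove_iff.1 hunb s
    obtain ⟨v, hv, rfl⟩ := hQ.ordConnected.out hm hw ⟨hs, hsw.le⟩
    show γ (σ (p.extend v)) ∈ U
    rw [hσγ _ (hpL v hv)]
    exact haU hv
  have hzU : z ∈ closure U := closure_mono htail (h.dense m hz)
  obtain ⟨w, hwV, hwU⟩ := mem_closure_iff.1 hzU V hV hzV
  exact hd.notMem_of_mem_left hwU hwV

/-- A minimal set lies in `L` or in its complement: a continuous map carries each of these two
path components into one of them. -/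
theorem subset_or_subset_compl (h : RayParam L γ) (hL : IsCompact L) (hLn : L.Nontrivial)
    (hLp : IsPathConnected L) {f : X → X} (hf : Continuous f) {M : Set X}
    (hM : IsClosed M) (hmin : MinimalSystemOn f M) : M ⊆ L ∨ M ⊆ Lᶜ := by
  have hjL : ∀ x ∈ L, ∀ y ∈ L, Joined x y := fun x hx y hy => (hLp.joinedIn x hx y hy).joined
  by_cases h1 : ∃ x ∉ L, f x ∈ L
  · obtain ⟨x, hx, hfx⟩ := h1
    have h2 : ∀ y ∉ L, f y ∈ L := fun y hy => by
      by_contra hfy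
      exact h.not_joined hL hLn hfy hfx ((h.compl_joined hy hx).map hf)
    have h3 : ∀ y, f y ∈ L := by
      intro y
      by_cases hy : y ∈ L
      · have hcl : IsClosed (f ⁻¹' L) := hL.isClosed.preimage hf
        refine closure_minimal ?_ hcl (h.dense 0 hy)
        rintro _ ⟨s, -, rfl⟩
        exact h2 _ (h.notMem s)
      · exact h2 y hy
    left
    rw [← hmin.2.1]
    rintro _ ⟨y, -, rfl⟩
    exact h3 y
  push Not at h1
  by_cases h2 : ∃ x ∈ L, f x ∉ L
  · obtain ⟨x, hx, hfx⟩ := h2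
    right
    rw [← hmin.2.1]
    rintro _ ⟨y, -, rfl⟩
    by_cases hy : y ∈ L
    · exact fun hfy => h.not_joined hL hLn hfx hfy ((hjL x hx y hy).map hf)
    · exact h1 y hy
  push Not at h2
  rcases (M ∩ L).eq_empty_or_nonempty with he | hne
  · exact Or.inr fun x hx hxL => by
      have : x ∈ M ∩ L := ⟨hx, hxL⟩
      rw [he] at this; exact this
  · left
    rw [← hmin.2.2 (M ∩ L) inter_subset_left hne (hM.inter hL.isClosed) ?_]
    · exact inter_subset_right
    · rintro _ ⟨y, hy, rfl⟩
      exact ⟨hmin.2.1 ▸ mem_image_of_mem f hy.1, h2 y hy.2⟩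

end RayParam

/-! ### Retraction onto `L` -/

/-- A discrete grid on the positive half-line so fine that `γ` oscillates less and less between
consecutive grid points. -/
theorem exists_grid {X : Type*} [MetricSpace X] {γ : ℝ → X} (hγ : Continuous γ) :
    ∃ S : ℕ → Set ℝ, (∀ n, (S n).Finite) ∧ (∀ n : ℕ, S n ⊆ Icc (n : ℝ) (n + 1)) ∧
      (∀ n : ℕ, (n : ℝ) ∈ S n) ∧
      ∀ ε > 0, ∃ T, ∀ p q, T ≤ p → (∀ n, ∀ s ∈ S n, s ≤ p ∨ q ≤ s) →
        ∀ t ∈ Icc p q, dist (γ p) (γ t) < ε := by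
  have hM : ∀ n : ℕ, ∃ M : ℕ, 0 < M ∧ ∀ x ∈ Icc (n : ℝ) (n + 1), ∀ y ∈ Icc (n : ℝ) (n + 1),
      |x - y| ≤ 1 / M → dist (γ x) (γ y) < 1 / (n + 1) := by
    intro n
    have huc := (isCompact_Icc (a := (n : ℝ)) (b := n + 1)).uniformContinuousOn_of_continuous
      hγ.continuousOn
    obtain ⟨δ, hδ, h⟩ := Metric.uniformContinuousOn_iff.1 huc (1 / (n + 1)) (by positivity)
    obtain ⟨m, hm⟩ := exists_nat_one_div_lt hδ
    refine ⟨m + 1, m.succ_pos, fun x hx y hy hxy => h x hx y hy ?_⟩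
    rw [Real.dist_eq]
    push_cast at hxy
    exact hxy.trans_lt hm
  choose M hM0 hM using hM
  refine ⟨fun n => (fun k : ℕ => (n : ℝ) + k / M n) '' Iic (M n),
    fun n => (finite_Iic _).image _, ?_, fun n => ⟨0, by simp, by simp⟩, ?_⟩
  · rintro n _ ⟨k, hk, rfl⟩
    have h0 : (0 : ℝ) < M n := by exact_mod_cast hM0 n
    have h1 : (k : ℝ) ≤ M n := by exact_mod_cast hk
    have h2 : (k : ℝ) / M n ≤ 1 := (div_le_one h0).2 h1
    have h3 : (0 : ℝ) ≤ k / M n := by positivity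
    constructor <;> dsimp only <;> linarith
  · intro ε hε
    refine ⟨1 / ε, fun p q hp hgap t ht => ?_⟩
    have hp0 : 0 < p := (one_div_pos.2 hε).trans_le hp
    set n := ⌊p⌋₊
    have hn1 : (n : ℝ) ≤ p := Nat.floor_le hp0.le
    have hn2 : p < n + 1 := Nat.lt_floor_add_one p
    have h0 : (0 : ℝ) < M n := by exact_mod_cast hM0 n
    set k := ⌊(p - n) * M n⌋₊
    have hk1 : (k : ℝ) ≤ (p - n) * M n :=
      Nat.floor_le (mul_nonneg (sub_nonneg.2 hn1) h0.le)
    have hk2 : (p - n) * M n < k + 1 := Nat.lt_floor_add_one _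
    have hkM : k + 1 ≤ M n := by
      have : (k : ℝ) < M n := hk1.trans_lt (by nlinarith)
      exact_mod_cast this
    have hkM' : ((k + 1 : ℕ) : ℝ) ≤ M n := by exact_mod_cast hkM
    have hq := hgap n _ ⟨k + 1, hkM, rfl⟩
    have hlt : p < (n : ℝ) + ((k + 1 : ℕ) : ℝ) / M n := by
      have : p - n < ((k + 1 : ℕ) : ℝ) / M n := by
        rw [lt_div_iff₀ h0]; push_cast; exact hk2
      linarith
    have hq' := hq.resolve_left (not_le.2 hlt)
    have hle1 : ((k + 1 : ℕ) : ℝ) / M n ≤ 1 := (div_le_one h0).2 hkM'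
    have hle2 : ((k + 1 : ℕ) : ℝ) / M n ≤ p - n + 1 / M n := by
      have : (k : ℝ) / M n ≤ p - n := (div_le_iff₀ h0).2 hk1
      push_cast
      rw [add_div]; linarith
    have hd := hM n p ⟨hn1, hn2.le⟩ t ⟨hn1.trans ht.1, by linarith [ht.2]⟩
      (by rw [abs_sub_comm, abs_of_nonneg (by linarith [ht.1])]; linarith [ht.2])
    refine hd.trans ?_
    rw [div_lt_iff₀ (by positivity)]
    have : 1 ≤ p * ε := (div_le_iff₀ hε).1 hp
    nlinarith

/-- A ray spiralling towards a Peano continuum retracts onto it. -/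
theorem RayParam.exists_retraction {X : Type*} [MetricSpace X] {L : Set X} {γ : ℝ → X}
    (h : RayParam L γ) (hL : IsCompact L) [PathConnectedSpace L] [LocallyPathConnectedSpace L] :
    ∃ ρ : X → L, Continuous ρ ∧ ∀ x : L, ρ x = x := by
  have : CompactSpace L := isCompact_iff_compactSpace.1 hL
  obtain ⟨P, hP⟩ := exists_small_paths L
  have hLne : L.Nonempty := nonempty_coe_sort.1 (PathConnectedSpace.nonempty (X := L))
  have hπ : ∀ x : X, ∃ y : L, Metric.infDist x L = dist x y := fun x => by
    obtain ⟨y, hy, hd⟩ := hL.exists_infDist_eq_dist hLne x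
    exact ⟨⟨y, hy⟩, hd⟩
  choose π hπ using hπ
  obtain ⟨σ, hσc, hσγ, hσ0, hσi⟩ := h.exists_inverse hL
  obtain ⟨S, hSf, hSI, hSn, hosc⟩ := exists_grid h.cont
  have hlf : LocallyFinite S := by
    intro x
    refine ⟨Iio (⌈x⌉₊ + 1 : ℝ), Iio_mem_nhds ((Nat.le_ceil x).trans_lt (lt_add_one _)),
      (finite_Iic ⌈x⌉₊).subset ?_⟩
    rintro n ⟨y, hy, hyx⟩
    have h1 : (n : ℝ) < ⌈x⌉₊ + 1 := (hSI n hy).1.trans_lt hyx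
    have h2 : n < ⌈x⌉₊ + 1 := by exact_mod_cast h1
    exact Nat.lt_succ_iff.1 h2
  have hDc : IsClosed (⋃ n, S n) := hlf.isClosed_iUnion fun n => (hSf n).isClosed
  set C : Set ℝ := Iic 0 ∪ ⋃ n, S n with hCdef
  have hSC : ∀ n, S n ⊆ C := fun n s hs => Or.inr (mem_iUnion.2 ⟨n, hs⟩)
  have hr : ContinuousOn (fun t => π (γ t)) C := by
    refine ContinuousOn.union_of_isClosed ?_ ?_ isClosed_Iic hDc
    · exact (continuousOn_const (c := π (γ 0))).congr fun t ht => by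
        show π (γ t) = π (γ 0)
        rw [h.neg t ht]
    · exact hlf.continuousOn_iUnion (fun n => (hSf n).isClosed) fun n => (hSf n).continuousOn _
  -- At grid points `F` takes the value of the nearest point map `π`; in between it runs along small
  -- paths in `L`. Hence `F t` becomes arbitrarily close to `γ t` as `t` grows (`hclose`).
  obtain ⟨F, hF, -, hgap⟩ := exists_interp P hP (isClosed_Iic.union hDc)
    (fun t => ⟨min t 0, Or.inl (min_le_right t 0), min_le_left t 0⟩)
    (fun t => ⟨⌈t⌉₊, hSC _ (hSn _), Nat.le_ceil t⟩) hr
  have hclose : ∀ ε > 0, ∃ T, ∀ t > T, dist (F t : X) (γ t) < ε := by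
    intro ε hε
    obtain ⟨δ, hδ, hPδ⟩ := hP (ε / 3) (by positivity)
    set η := min δ ε / 3
    have hm : 0 < min δ ε := lt_min hδ hε
    have hη : 0 < η := by positivity
    obtain ⟨T₁, hT₁⟩ := hosc η hη
    obtain ⟨T₂, hT₂⟩ := eventually_atTop.1 (h.eventually_mem _ Metric.isOpen_thickening
      (Metric.self_subset_thickening hη L))
    have hnear : ∀ s ≥ T₂, dist (γ s) (π (γ s)) < η := fun s hs => by
      rw [← hπ]
      exact (Metric.mem_thickening_iff_infDist_lt hLne).1 (hT₂ s hs)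
    refine ⟨⌈max T₁ T₂⌉₊, fun t ht => ?_⟩
    obtain ⟨p, hp, q, hq, hpt, htq, hg, s, hs⟩ := hgap t
    have hpT : max T₁ T₂ ≤ p := (Nat.le_ceil _).trans
      ((hg _ (hSC _ (hSn ⌈max T₁ T₂⌉₊))).resolve_right (not_le.2 (lt_of_lt_of_le ht htq)))
    have hpq := hT₁ p q ((le_max_left _ _).trans hpT) (fun n s hs => hg s (hSC n hs))
    have h1 : dist (γ p) (γ t) < η := hpq t ⟨hpt, htq⟩
    have h2 : dist (γ p) (γ q) < η := hpq q ⟨hpt.trans htq, le_rfl⟩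
    have h3 := hnear p ((le_max_right _ _).trans hpT)
    have h4 := hnear q (((le_max_right _ _).trans hpT).trans (hpt.trans htq))
    have hηδ : 3 * η ≤ δ := by
      have : 3 * η = min δ ε := by simp only [η]; ring
      rw [this]; exact min_le_left _ _
    have hηε : 3 * η ≤ ε := by
      have : 3 * η = min δ ε := by simp only [η]; ring
      rw [this]; exact min_le_right _ _
    have h5 : dist (π (γ p) : X) (π (γ q)) < δ := by
      have e1 := dist_triangle4 (π (γ p) : X) (γ p) (γ q) (π (γ q))
      rw [dist_comm (π (γ p) : X) (γ p)] at e1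
      linarith
    have h6 : dist (F t : X) (π (γ p)) < ε / 3 := by
      rw [hs]; exact hPδ _ _ h5 s
    have e2 := dist_triangle4 (F t : X) (π (γ p)) (γ p) (γ t)
    rw [dist_comm (π (γ p) : X) (γ p)] at e2
    linarith
  classical
  -- Off `L` the retraction follows `F` instead of `γ`.
  let ρ : X → L := fun x => if hx : x ∈ L then ⟨x, hx⟩ else F (σ x)
  have hρ1 : ∀ x (hx : x ∈ L), ρ x = ⟨x, hx⟩ := fun x hx => dif_pos hx
  have hρ2 : ∀ x, x ∉ L → ρ x = F (σ x) := fun x hx => dif_neg hx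
  refine ⟨ρ, continuous_iff_continuousAt.2 fun x => ?_, fun x => hρ1 x x.2⟩
  by_cases hx : x ∈ L
  · rw [Metric.continuousAt_iff']
    intro ε hε
    obtain ⟨T, hT⟩ := hclose (ε / 2) (half_pos hε)
    have hK : IsClosed (γ '' Icc 0 T) := (isCompact_Icc.image h.cont).isClosed
    have hxK : x ∉ γ '' Icc 0 T := by
      rintro ⟨s, -, rfl⟩
      exact h.notMem s hx
    filter_upwards [hK.isOpen_compl.mem_nhds hxK, Metric.ball_mem_nhds x (half_pos hε)]
      with y hyK hyx
    rw [hρ1 x hx, Subtype.dist_eq]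
    rw [Metric.mem_ball] at hyx
    by_cases hy : y ∈ L
    · rw [hρ1 y hy]
      show dist y x < ε
      linarith
    · rw [hρ2 y hy]
      have hTσ : T < σ y := by
        by_contra hle
        exact hyK ⟨σ y, ⟨hσ0 y, not_lt.1 hle⟩, hσγ y hy⟩
      have e1 := hT _ hTσ
      rw [hσγ y hy] at e1
      have e2 := dist_triangle (F (σ y) : X) y x
      show dist (F (σ y) : X) x < ε
      linarith
  · have hcont : ContinuousAt (fun y => F (σ y)) x :=
      hF.continuousAt.comp (hσc.continuousAt (hL.isClosed.isOpen_compl.mem_nhds hx))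
    exact hcont.congr (by
      filter_upwards [hL.isClosed.isOpen_compl.mem_nhds hx] with y hy using (hρ2 y hy).symm)

/-! ### Minimal subsets of the line -/

/-- The real line contains no circle: a continuous real function on the circle identifies some pair
of antipodal points. -/
theorem not_isCircleSet_real (C : Set ℝ) : ¬ IsCircleSet C := by
  rintro ⟨h⟩
  let f : Circle → ℝ := fun z => h.symm z
  have hf : Continuous f := continuous_subtype_val.comp (h.symm.continuous.comp continuous_id)
  have hinj : Function.Injective f := Subtype.val_injective.comp (h.symm.injective.comp fun a b hab => hab)
  let u : ℝ → ℝ := fun t => f (Circle.exp t) - f (Circle.exp (t + Real.pi))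
  have hu : Continuous u := (hf.comp Circle.exp.continuous).sub
    (hf.comp (Circle.exp.continuous.comp (continuous_id.add continuous_const)))
  have hpi : u Real.pi = - u 0 := by
    have h2 : Circle.exp (Real.pi + Real.pi) = Circle.exp 0 := by
      rw [← two_mul, Circle.exp_two_pi, Circle.exp_zero]
    simp only [u, h2, zero_add]; ring
  obtain ⟨t, ht⟩ : ∃ t, u t = 0 := by
    rcases le_total (u 0) 0 with h0 | h0
    · exact mem_range_of_exists_le_of_exists_ge hu ⟨0, h0⟩ ⟨Real.pi, by rw [hpi]; linarith⟩
    · exact mem_range_of_exists_le_of_exists_ge hu ⟨Real.pi, by rw [hpi]; linarith⟩ ⟨0, h0⟩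
  have h1 : Circle.exp t = Circle.exp (t + Real.pi) := hinj (sub_eq_zero.1 ht)
  rw [Circle.exp_add] at h1
  have h2 : ((Circle.exp t : Circle) : ℂ) = -(Circle.exp t : ℂ) := by
    conv_lhs => rw [h1]
    rw [Circle.coe_mul, Circle.coe_exp Real.pi, Complex.exp_pi_mul_I, mul_neg_one]
  exact Circle.coe_ne_zero (Circle.exp t) (self_eq_neg.1 h2)

theorem finCirc_real : FinCirc ℝ := by
  have : {C : Set ℝ | IsCircleSet C} = ∅ := eq_empty_of_forall_notMem not_isCircleSet_real
  unfold FinCirc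
  rw [this]; exact finite_empty

theorem rimFinite_real : RimFinite ℝ := by
  intro x V hV hx
  obtain ⟨ε, hε, h⟩ := Metric.nhds_basis_closedBall.mem_iff.1 (hV.mem_nhds hx)
  refine ⟨Metric.ball x ε, Metric.isOpen_ball, Metric.mem_ball_self hε,
    Metric.closure_ball_subset_closedBall.trans h, ?_⟩
  rw [frontier_ball x hε.ne', Real.sphere_eq_pair x hε.le]
  exact toFinite _

/-- An infinite minimal space that embeds into the line is totally disconnected. -/
theorem MinMap.totallyDisconnected_of_real {Z : Type*} [MetricSpace Z] [CompactSpace Z] [Infinite Z]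
    {g : Z → Z} (hg : MinMap g) {e : Z → ℝ} (he : IsEmbedding e) : TotallyDisconnectedSpace Z := by
  rcases hg.dichotomy (RimFinite.of_embedding he rimFinite_real)
    (FinCirc.of_embedding he finCirc_real) with hD | hU
  · refine totallyDisconnectedSpace_iff_connectedComponent_subsingleton.2 fun x a ha b hb => ?_
    by_contra hab
    wlog hlt : e a < e b generalizing a b
    · exact this b hb a ha (Ne.symm hab)
        (lt_of_le_of_ne (not_lt.1 hlt) fun h => hab (he.injective h).symm)
    have hK : IsPreconnected (e '' connectedComponent x) :=
      isPreconnected_connectedComponent.image _ he.continuous.continuousOn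
    have hsub : Icc (e a) (e b) ⊆ e '' connectedComponent x :=
      hK.ordConnected.out (mem_image_of_mem e ha) (mem_image_of_mem e hb)
    obtain ⟨m, hm⟩ := exists_between hlt
    obtain ⟨c, hc, rfl⟩ := hsub ⟨hm.1.le, hm.2.le⟩
    obtain ⟨z, hz, hzs⟩ := hD.inter_open_nonempty (e ⁻¹' Ioo (e a) (e b))
      (isOpen_Ioo.preimage he.continuous) ⟨c, hm⟩
    obtain ⟨z', hz', hzz⟩ := hsub ⟨hz.1.le, hz.2.le⟩
    have hzx : z ∈ connectedComponent x := he.injective hzz ▸ hz'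
    have h1 : connectedComponent x = {z} := (connectedComponent_eq hzx).trans hzs
    rw [h1] at ha hb
    exact hab (ha.trans hb.symm)
  · obtain ⟨n, C, hn, hC, -⟩ := hU
    exact absurd ((hC ⟨0, hn⟩).image he) (not_isCircleSet_real _)

/-! ### Proof of the characterization -/

/-- A minimal space that admits a continuous injection into the line is finite or a Cantor set. -/
theorem finite_or_cantor_of_minMap {X : Type*} [MetricSpace X] {M : Set X} (hM : IsCompact M)
    (hne : M.Nonempty) {g : M → M} (hg : MinMap g) {σ : X → ℝ} (hσ : ContinuousOn σ M)
    (hinj : InjOn σ M) : (M.Finite ∧ M.Nonempty) ∨ IsCantorSet M := by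
  have : CompactSpace M := isCompact_iff_compactSpace.1 hM
  rcases finite_or_infinite M with hf | hi
  · exact Or.inl ⟨toFinite M, hne⟩
  · right
    have he : IsEmbedding fun x : M => σ x :=
      ((continuousOn_iff_continuous_domRestrict.1 hσ).isClosedEmbedding
        fun x y hxy => Subtype.ext (hinj x.2 y.2 hxy)).isEmbedding
    have := hg.totallyDisconnected_of_real he
    exact ⟨hne, hM, totallyDisconnectedSpace_subtype_iff.1 this, hg.noIsolated⟩

theorem IsLocalDendrite.finCirc {X : Type*} [TopologicalSpace X] {L : Set X}
    (hL : IsLocalDendrite L) : FinCirc L := by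
  refine Finite.of_finite_image (f := fun C => Subtype.val '' C) (hL.2.2.2.subset ?_)
    (image_injective.2 Subtype.val_injective).injOn
  rintro _ ⟨C, hC, rfl⟩
  exact ⟨by rintro _ ⟨x, -, rfl⟩; exact x.2, IsCircleSet.image IsEmbedding.subtypeVal hC⟩

/-- The minimal subsets of a local dendrite are finite sets, cantoroids or finite unions of disjoint
circles. -/
theorem finite_or_cantoroid_or_circles_of_minMap {X : Type*} [MetricSpace X] {L M : Set X}
    (hL : IsLocalDendrite L) (hM : IsCompact M) (hne : M.Nonempty) (hML : M ⊆ L) {g : M → M}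
    (hg : MinMap g) : (M.Finite ∧ M.Nonempty) ∨ IsCantoroid M ∨ FinUnionDisjCircles M := by
  have hFC := hL.finCirc
  obtain ⟨hLc, -, hLl, -⟩ := hL
  have : CompactSpace M := isCompact_iff_compactSpace.1 hM
  have : CompactSpace L := isCompact_iff_compactSpace.1 hLc
  have : LocallyPathConnectedSpace L := locallyPathConnectedSpace_of_compact L
  rcases finite_or_infinite M with hf | hi
  · exact Or.inl ⟨toFinite M, hne⟩
  · right
    have he : IsEmbedding (inclusion hML) := IsEmbedding.inclusion hML
    rcases hg.dichotomy (RimFinite.of_embedding he hFC.rimFinite) (FinCirc.of_embedding he hFC)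
      with hD | hU
    · exact Or.inl ⟨hne, hM, hg.noIsolated, hD⟩
    · exact Or.inr hU.of_univ

/-- Finite sets and cantoroids carry minimal maps that are constant on components. -/
theorem exists_minMap_of_finite_or_cantoroid {X : Type*} [MetricSpace X] {M : Set X}
    (h : (M.Finite ∧ M.Nonempty) ∨ IsCantoroid M) :
    IsCompact M ∧ M.Nonempty ∧ ∃ g : M → M, MinMap g ∧
      ∀ x y, connectedComponent x = connectedComponent y → g x = g y := by
  rcases h with ⟨hf, hne⟩ | ⟨hne, hM, hiso, hD⟩
  · have : Finite M := hf
    have : Nonempty M := hne.to_subtype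
    obtain ⟨g, hg⟩ := exists_minMap_of_finite (Z := M)
    refine ⟨hf.isCompact, hne, g, hg, fun x y hxy => ?_⟩
    rw [connectedComponent_eq_singleton, connectedComponent_eq_singleton] at hxy
    rw [singleton_injective hxy]
  · have : Nonempty M := hne.to_subtype
    have : CompactSpace M := isCompact_iff_compactSpace.1 hM
    exact ⟨hM, hne, exists_minMap_of_cantoroid hiso hD⟩

theorem IsCantorSet.isCantoroid {X : Type*} [TopologicalSpace X] {M : Set X} (h : IsCantorSet M) :
    IsCantoroid M := by
  obtain ⟨hne, hM, ht, hiso⟩ := h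
  have : TotallyDisconnectedSpace M := totallyDisconnectedSpace_subtype_iff.2 ht
  refine ⟨hne, hM, hiso, ?_⟩
  have h1 : {x : M | connectedComponent x = {x}} = univ :=
    eq_univ_of_forall fun x => connectedComponent_eq_singleton x
  rw [h1]; exact dense_univ

theorem mem_mSpace_of_minMap {X : Type*} [TopologicalSpace X] [T2Space X] {M : Set X}
    (hM : IsCompact M) (hne : M.Nonempty) {g : M → M} (hg : MinMap g) {F : X → X}
    (hF : Continuous F) (hFg : ∀ x : M, F x = g x) : M ∈ MSpace X :=
  ⟨hM, F, hF, hg.minimalSystemOn hM hne hFg⟩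

/-- Realization of minimal sets off `L`: the minimal map, read in the parameter of the ray, extends
to a real function by the Tietze theorem. -/
theorem mem_mSpace_of_subset_compl {X : Type*} [MetricSpace X] [CompactSpace X] {L M : Set X}
    {γ : ℝ → X} (h : RayParam L γ) (hL : IsCompact L) (hML : M ⊆ Lᶜ)
    (hM : (M.Finite ∧ M.Nonempty) ∨ IsCantorSet M) : M ∈ MSpace X := by
  obtain ⟨hMc, hne, g, hg, -⟩ := exists_minMap_of_finite_or_cantoroid
    (hM.imp_right IsCantorSet.isCantoroid)
  obtain ⟨σ, hσc, hσγ, -, -⟩ := h.exists_inverse hL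
  have hcont : Continuous fun x : M => σ (g x) :=
    (continuousOn_iff_continuous_domRestrict.1 (hσc.mono hML)).comp hg.cont
  obtain ⟨G, hG⟩ := ContinuousMap.exists_extension hMc.isClosed.isClosedEmbedding_subtypeVal
    (⟨_, hcont⟩ : C(M, ℝ))
  refine mem_mSpace_of_minMap hMc hne hg (F := fun x => γ (G x)) (h.cont.comp G.continuous)
    fun x => ?_
  have h1 : G x = σ (g x) := congrArg (fun h : C(M, ℝ) => h x) hG
  rw [h1]
  exact hσγ _ (hML (g x).2)

/-- Realization of minimal sets in `L`: the minimal map is extended to a map with values in `L`. In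
the case of circles the extension is a self-map of `L`, composed with a retraction onto `L`. -/
theorem mem_mSpace_of_subset {X : Type*} [MetricSpace X] [CompactSpace X] {L M : Set X}
    {ρ : X → L} (hρ : Continuous ρ) (hρL : ∀ x : L, ρ x = x) (hL : IsLocalDendrite L)
    (hML : M ⊆ L)
    (hM : (M.Finite ∧ M.Nonempty) ∨ IsCantoroid M ∨ FinUnionDisjCircles M) : M ∈ MSpace X := by
  have hFC := hL.finCirc
  obtain ⟨hLc, hLconn, hLl, -⟩ := hL
  have : CompactSpace L := isCompact_iff_compactSpace.1 hLc
  have : ConnectedSpace L := isConnected_iff_connectedSpace.1 hLconn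
  have : LocallyPathConnectedSpace L := locallyPathConnectedSpace_of_compact L
  have : PathConnectedSpace L := PathConnectedSpace.of_locallyPathConnectedSpace
  rw [← or_assoc] at hM
  rcases hM with hM | hM
  · obtain ⟨hMc, hne, g, hg, hgc⟩ := exists_minMap_of_finite_or_cantoroid hM
    have : CompactSpace M := isCompact_iff_compactSpace.1 hMc
    obtain ⟨F, hF, hFg⟩ := exists_extension_of_const_components (Y := L)
      hMc.isClosed.isClosedEmbedding_subtypeVal (f := fun x => inclusion hML (g x))
      ((continuous_inclusion hML).comp hg.cont)
      (fun x y hxy => by rw [hgc x y hxy])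
    exact mem_mSpace_of_minMap hMc hne hg (F := fun x => (F x : X))
      (continuous_subtype_val.comp hF) fun x => by rw [hFg]
  · obtain ⟨g, hg⟩ := hM.univ_coe.exists_minMap
    obtain ⟨n, C, hn, hC, hd, hU⟩ := hM
    have hCc : ∀ i, IsCompact (C i) := fun i => by
      obtain ⟨e⟩ := hC i
      have : CompactSpace (C i) := e.symm.compactSpace
      exact isCompact_iff_compactSpace.2 this
    have hMc : IsCompact M := hU ▸ isCompact_iUnion hCc
    have hne : M.Nonempty := by
      obtain ⟨e⟩ := hC ⟨0, hn⟩
      let p : C ⟨0, hn⟩ := e.symm ⟨1, by simp⟩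
      have hp : (p : X) ∈ ⋃ i, C i := mem_iUnion.2 ⟨⟨0, hn⟩, p.2⟩
      exact ⟨p, hU ▸ hp⟩
    have hCL : ∀ i, C i ⊆ L := fun i => (hU ▸ subset_iUnion C i : C i ⊆ M).trans hML
    have hUL : (⋃ i, (Subtype.val ⁻¹' C i : Set L)) = Subtype.val ⁻¹' M := by
      rw [← preimage_iUnion, hU]
    classical
    let f : L → L := fun y => if hy : (y : X) ∈ M then inclusion hML (g ⟨y, hy⟩) else y
    have hf1 : ∀ (y : L) (hy : (y : X) ∈ M), f y = inclusion hML (g ⟨y, hy⟩) := fun y hy => dif_pos hy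
    have hf : ContinuousOn f (⋃ i, (Subtype.val ⁻¹' C i : Set L)) := by
      rw [hUL, continuousOn_iff_continuous_domRestrict]
      have h1 : (Subtype.val ⁻¹' M : Set L).domRestrict f =
          fun y : (Subtype.val ⁻¹' M : Set L) => inclusion hML (g ⟨y.1.1, y.2⟩) := by
        ext y : 1
        exact hf1 _ y.2
      rw [h1]
      exact (continuous_inclusion hML).comp (hg.cont.comp (by fun_prop))
    obtain ⟨F, hF, hFf⟩ := exists_extension_of_circles hFC.rimFinite
      (fun i => (hC i).preimage_val (hCL i)) (fun i j hij => (hd hij).preimage _) hf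
    refine mem_mSpace_of_minMap hMc hne hg (F := fun x => (F (ρ x) : X))
      (continuous_subtype_val.comp (hF.comp hρ)) fun x => ?_
    have h1 : ρ x = ⟨x, hML x.2⟩ := hρL ⟨x, hML x.2⟩
    have h2 : F ⟨x, hML x.2⟩ = f ⟨x, hML x.2⟩ := hFf (by rw [hUL]; exact x.2)
    rw [h1, h2, hf1 _ x.2]

/-- If `X = L ∪ J ∪ R ∈ 𝒞`, `R` a singleton, `L` a nondegenerate local
dendrite, `L ∩ R = ∅`, then `M ∈ 𝓜(X)` iff exactly one of the following holds:
(1) `M ⊆ L` and `M` is a nonempty finite set, a cantoroid, or a union of finitely many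
pairwise disjoint circles; (2) `M ⊆ J ∪ R` and `M` is a nonempty finite set or a Cantor
set. -/
theorem stmt7 {X : Type*} [TopologicalSpace X] [CompactSpace X] [ConnectedSpace X]
    [TopologicalSpace.MetrizableSpace X] {L J R : Set X} (hC : ClassC L J R)
    (hR : ∃ x, R = {x}) (hL : L.Nontrivial) (hLR : Disjoint L R)
    (hLd : IsLocalDendrite L) :
    ∀ M : Set X, M ∈ MSpace X ↔
      ((M ⊆ L ∧ ((M.Finite ∧ M.Nonempty) ∨ IsCantoroid M ∨ FinUnionDisjCircles M)) ∧
        ¬ (M ⊆ J ∪ R ∧ ((M.Finite ∧ M.Nonempty) ∨ IsCantorSet M))) ∨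
      ((M ⊆ J ∪ R ∧ ((M.Finite ∧ M.Nonempty) ∨ IsCantorSet M)) ∧
        ¬ (M ⊆ L ∧ ((M.Finite ∧ M.Nonempty) ∨ IsCantoroid M ∨ FinUnionDisjCircles M))) := by
  let _ : MetricSpace X := TopologicalSpace.metrizableSpaceMetric X
  intro M
  obtain ⟨r, rfl⟩ := hR
  obtain ⟨γ, hγ⟩ := hC.exists_rayParam hLR
  have hcompl : J ∪ {r} = Lᶜ := by
    ext x
    constructor
    · rintro (hx | hx) hxL
      · exact hC.disjLJ.notMem_of_mem_left hxL hx
      · exact hLR.notMem_of_mem_left hxL hx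
    · intro hx
      rcases (hC.union_eq.symm ▸ mem_univ x : x ∈ L ∪ J ∪ {r}) with (h | h) | h
      · exact absurd h hx
      · exact Or.inl h
      · exact Or.inr h
  rw [hcompl]
  have hLc := hLd.1
  have : CompactSpace L := isCompact_iff_compactSpace.1 hLc
  have : ConnectedSpace L := isConnected_iff_connectedSpace.1 hLd.2.1
  have : LocallyConnectedSpace L := hLd.2.2.1
  have : LocallyPathConnectedSpace L := locallyPathConnectedSpace_of_compact L
  have : PathConnectedSpace L := PathConnectedSpace.of_locallyPathConnectedSpace
  have hexcl : M.Nonempty → M ⊆ L → M ⊆ Lᶜ → False := fun ⟨x, hx⟩ h1 h2 => h2 hx (h1 hx)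
  constructor
  · rintro ⟨hMc, f, hf, hmin⟩
    have hne := hmin.1
    obtain ⟨g, hg, -⟩ := hmin.exists_minMap hMc.isClosed hf
    rcases hγ.subset_or_subset_compl hLc hL (isPathConnected_iff_pathConnectedSpace.2 this) hf
      hMc.isClosed hmin with h | h
    · exact Or.inl ⟨⟨h, finite_or_cantoroid_or_circles_of_minMap hLd hMc hne h hg⟩,
        fun h' => hexcl hne h h'.1⟩
    · obtain ⟨σ, hσc, hσγ, -, -⟩ := hγ.exists_inverse hLc
      refine Or.inr ⟨⟨h, finite_or_cantor_of_minMap hMc hne hg (hσc.mono h) ?_⟩,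
        fun h' => hexcl hne h'.1 h⟩
      intro x hx y hy hxy
      rw [← hσγ x (h hx), ← hσγ y (h hy), hxy]
  · rintro (⟨⟨h, hM⟩, -⟩ | ⟨⟨h, hM⟩, -⟩)
    · obtain ⟨ρ, hρ, hρL⟩ := hγ.exists_retraction hLc
      exact mem_mSpace_of_subset hρ hρL hLd h hM
    · exact mem_mSpace_of_subset_compl hγ hLc h hM
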